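/- Let k ≥ 3 and n ≥ 3 be odd integers and set d = (1 − 2k^n)^n (a negative integer). Then for every D in the set {d, d + 1, 4d + 1} ∪ {2d + 4^m : m ≥ 0 an integer with 1 ≤ 4^m ≤ 2|d|}, the integer D is negative and n divides the class number of the imaginary quadratic field ℚ(√D). -/

import Mathlib

open IntermediateField NumberField

/-- The quadratic field `ℚ(√D)`, realized inside `ℂ` by adjoining the principal
square root of `D`. -/
noncomputable def quadField (D : ℤ) : IntermediateField ℚ ℂ :=
  ℚ⟮(D : ℂ) ^ ((1 : ℂ) / 2)⟯

/-- The class number of the quadratic field `ℚ(√D)`. -/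
noncomputable def quadClassNumber (D : ℤ) : ℕ :=
  Nat.card (ClassGroup (𝓞 (quadField D)))

/-!
Suppose `n` does not divide the class number of `ℚ(√D)`. In each family there is an element of small
trace and of norm `Y ^ n` or `2 * Y ^ n`; the ideal it generates is essentially an `n`-th power, so
for some prime `p ∣ n` the element is, up to units, a `p`-th power. Comparing traces, a companion
Lehmer number `(a ^ p + b ^ p) / (a + b)` with `a * b` a power of `Y` is a unit or very small.
Size estimates and congruences exclude this except when `D = 2 * d + 4 ^ m` with `m ≥ 1`; there they
leave the case where `p % 8 = 7`, the quotient is exactly `1`, and `a * b ≥ 13 ^ p`.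

In that case put `T = 2 ^ (2 * m + 1) = (a + b) ^ 2` and `u = a * b`. The quotient is the product of
`T - u * (2 - ζ ^ i - ζ ^ (-i))` for `1 ≤ i ≤ (p - 1) / 2`, so these are units of the `p`-th
cyclotomic field. Divided by the cyclotomic units `(2 - ζ ^ i - ζ ^ (-i)) / (2 - ζ - ζ⁻¹)` they
become congruent to each other modulo `T`, and they admit no relation with exponents of sum zero,
because at most one of them can be small in a given embedding. About `log₂ p` of the units
`ζ ^ (2 ^ i) + ζ ^ (-2 ^ i)` admit no relation modulo `T` with exponents less than `T / 2`.
These are more units than the rank of the unit group, so by the pigeonhole principle in logarithmic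
space some product of them with bounded exponents has all its conjugates but one close to `±1`
and is therefore `±1`; reducing it modulo `T` contradicts the two independence statements.
-/

/-! ### The Lehmer quotients -/

/-- The quotient `(a ^ (2 * k + 1) + b ^ (2 * k + 1)) / (a + b)`, a companion Lehmer number,
written as a polynomial in `T = (a + b) ^ 2` and `u = a * b`. -/
def lehmerQuot {R : Type*} [CommRing R] (T u : R) : ℕ → R
  | 0 => 1
  | 1 => T - 3 * u
  | (k + 2) => (T - 2 * u) * lehmerQuot T u (k + 1) - u ^ 2 * lehmerQuot T u k

section LehmerQuot

open Finset

variable {R S : Type*} [CommRing R] [CommRing S]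

theorem lehmerQuot_zero (T u : R) : lehmerQuot T u 0 = 1 := rfl

theorem lehmerQuot_one (T u : R) : lehmerQuot T u 1 = T - 3 * u := rfl

theorem lehmerQuot_add_two (T u : R) (k : ℕ) :
    lehmerQuot T u (k + 2) =
      (T - 2 * u) * lehmerQuot T u (k + 1) - u ^ 2 * lehmerQuot T u k := rfl

theorem add_mul_lehmerQuot (a b : R) (k : ℕ) :
    (a + b) * lehmerQuot ((a + b) ^ 2) (a * b) k = a ^ (2 * k + 1) + b ^ (2 * k + 1) := by
  induction k using Nat.twoStepInduction with
  | zero => simp [lehmerQuot_zero]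
  | one => rw [lehmerQuot_one]; ring
  | more k ih ih' =>
    rw [lehmerQuot_add_two]
    linear_combination ((a + b) ^ 2 - 2 * (a * b)) * ih' - (a * b) ^ 2 * ih

theorem lehmerQuot_mul_mul (c T u : R) (k : ℕ) :
    lehmerQuot (c * T) (c * u) k = c ^ k * lehmerQuot T u k := by
  induction k using Nat.twoStepInduction with
  | zero => simp [lehmerQuot_zero]
  | one => simp only [lehmerQuot_one]; ring
  | more k ih ih' => rw [lehmerQuot_add_two, lehmerQuot_add_two, ih, ih']; ring

theorem map_lehmerQuot (f : R →+* S) (T u : R) (k : ℕ) :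
    f (lehmerQuot T u k) = lehmerQuot (f T) (f u) k := by
  induction k using Nat.twoStepInduction with
  | zero => simp [lehmerQuot_zero]
  | one => simp [lehmerQuot_one, map_ofNat f 3]
  | more k ih ih' => simp [lehmerQuot_add_two, ih, ih', map_ofNat f 2]

theorem intCast_lehmerQuot (T u : ℤ) (k : ℕ) :
    ((lehmerQuot T u k : ℤ) : R) = lehmerQuot (T : R) (u : R) k :=
  map_lehmerQuot (Int.castRingHom R) T u k

theorem lehmerQuot_zero_left (u : R) (k : ℕ) :
    lehmerQuot 0 u k = (-u) ^ k * (2 * k + 1) := by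
  induction k using Nat.twoStepInduction with
  | zero => simp [lehmerQuot_zero]
  | one => simp only [lehmerQuot_one]; push_cast; ring
  | more k ih ih' => rw [lehmerQuot_add_two, ih, ih']; push_cast; ring

theorem lehmerQuot_two_one (k : ℕ) : lehmerQuot (2 : R) 1 k = (-1) ^ ((k + 1) / 2) := by
  induction k using Nat.twoStepInduction with
  | zero => simp [lehmerQuot_zero]
  | one => rw [lehmerQuot_one]; norm_num
  | more k ih _ =>
    rw [lehmerQuot_add_two, ih, show (k + 2 + 1) / 2 = (k + 1) / 2 + 1 by omega]
    ring

theorem exists_add_sq_eq_and_mul_eq {F : Type*} [Field F] [IsAlgClosed F] (T u : F) :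
    ∃ a b : F, (a + b) ^ 2 = T ∧ a * b = u := by
  obtain ⟨s, hs⟩ := IsAlgClosed.exists_pow_nat_eq T (n := 2) (by norm_num)
  obtain ⟨a, ha⟩ := IsAlgClosed.exists_root
    (Polynomial.X ^ 2 - Polynomial.C s * Polynomial.X + Polynomial.C u) (by
      have : (Polynomial.X ^ 2 - Polynomial.C s * Polynomial.X + Polynomial.C u).degree = 2 := by
        compute_degree!
      rw [this]; norm_num)
  refine ⟨a, s - a, by rw [← hs]; ring, ?_⟩
  simp only [Polynomial.IsRoot, Polynomial.eval_add, Polynomial.eval_sub, Polynomial.eval_pow,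
    Polynomial.eval_mul, Polynomial.eval_X, Polynomial.eval_C] at ha
  linear_combination -ha

-- Frobenius: `a ^ p + b ^ p = (a + b) ^ p = T ^ h * (a + b)`.
theorem lehmerQuot_eq_pow_of_prime {p h : ℕ} [Fact p.Prime] (hp : p = 2 * h + 1) {T : ZMod p}
    (hT : T ≠ 0) (u : ZMod p) : lehmerQuot T u h = T ^ h := by
  let ι := algebraMap (ZMod p) (AlgebraicClosure (ZMod p))
  have : CharP (AlgebraicClosure (ZMod p)) p := charP_of_injective_algebraMap ι.injective p
  obtain ⟨a, b, hadd, hmul⟩ := exists_add_sq_eq_and_mul_eq (ι T) (ι u)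
  have hab : a + b ≠ 0 := by
    rintro h0
    refine hT (ι.injective ?_)
    rw [map_zero, ← hadd, h0, zero_pow two_ne_zero]
  apply ι.injective
  rw [map_lehmerQuot, map_pow, ← hadd, ← hmul]
  refine mul_left_cancel₀ hab ?_
  rw [add_mul_lehmerQuot, ← hp, ← add_pow_char a b p, ← pow_mul, ← pow_succ']
  exact congrArg _ hp

theorem two_ne_zero_of_eq_two_mul_add_one {p h : ℕ} [Fact p.Prime] (hp : p = 2 * h + 1) :
    (2 : ZMod p) ≠ 0 :=
  Ring.two_ne_zero (by rw [ZMod.ringChar_zmod_n]; omega)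

theorem lehmerQuot_eq_of_isUnit {p h : ℕ} [Fact p.Prime] (hp : p = 2 * h + 1) (m : ℕ) {u : ℤ}
    (hW : IsUnit (lehmerQuot ((2 : ℤ) ^ (2 * m + 1)) u h)) :
    lehmerQuot ((2 : ℤ) ^ (2 * m + 1)) u h = lehmerQuot 2 1 h := by
  have hp2 := (Fact.out : p.Prime).two_le
  have h2 := two_ne_zero_of_eq_two_mul_add_one hp
  have hpow : ((2 : ZMod p) ^ (2 * m + 1)) ^ h = 2 ^ h := by
    rw [← pow_mul, show (2 * m + 1) * h = 2 * h * m + h by ring, pow_add, pow_mul,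
      show 2 * h = p - 1 by omega, ZMod.pow_card_sub_one_eq_one h2, one_pow, one_mul]
  have hdvd : (p : ℤ) ∣ lehmerQuot ((2 : ℤ) ^ (2 * m + 1)) u h - lehmerQuot 2 1 h := by
    rw [← ZMod.intCast_zmod_eq_zero_iff_dvd, Int.cast_sub, intCast_lehmerQuot, intCast_lehmerQuot]
    push_cast
    rw [lehmerQuot_eq_pow_of_prime hp (pow_ne_zero _ h2), lehmerQuot_eq_pow_of_prime hp h2, hpow,
      sub_self]
  have hsmall : |lehmerQuot ((2 : ℤ) ^ (2 * m + 1)) u h - lehmerQuot 2 1 h| < p := by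
    rw [lehmerQuot_two_one] at hdvd ⊢
    rcases Int.isUnit_iff.1 hW with hq | hq <;>
      rcases neg_one_pow_eq_or ℤ ((h + 1) / 2) with hs | hs <;> rw [hq, hs] <;> norm_num <;> omega
  exact sub_eq_zero.1 (Int.eq_zero_of_abs_lt_dvd hdvd hsmall)

end LehmerQuot

/-! ### Product formula and size of the Lehmer quotients -/

section ProductFormula

open Finset

theorem prod_Icc_one_two_mul {M : Type*} [CommMonoid M] (h : ℕ) (f : ℕ → M) :
    ∏ i ∈ Icc 1 (2 * h), f i = ∏ i ∈ Icc 1 h, (f i * f (2 * h + 1 - i)) := by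
  rw [← Ico_add_one_right_eq_Icc, ← Ico_add_one_right_eq_Icc, prod_mul_distrib,
    prod_Ico_reflect f 1 (by omega : h + 1 ≤ 2 * h + 1 + 1),
    show 2 * h + 1 + 1 - (h + 1) = h + 1 by omega, Nat.add_sub_cancel,
    prod_Ico_consecutive f (by omega) (by omega)]

theorem prod_nthRootsFinset_eq_prod_range {R M : Type*} [CommRing R] [IsDomain R] [CommMonoid M]
    {ζ : R} {n : ℕ} (hζ : IsPrimitiveRoot ζ n) (hn : 0 < n) (f : R → M) :
    ∏ x ∈ Polynomial.nthRootsFinset n (1 : R), f x = ∏ i ∈ range n, f (ζ ^ i) := by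
  symm
  refine prod_bij (fun i _ => ζ ^ i) ?_ ?_ ?_ fun _ _ => rfl
  · intro i _
    rw [Polynomial.mem_nthRootsFinset hn, pow_right_comm, hζ.pow_eq_one, one_pow]
  · intro i hi j hj hij
    exact hζ.pow_inj (mem_range.1 hi) (mem_range.1 hj) hij
  · intro x hx
    have : NeZero n := ⟨hn.ne'⟩
    obtain ⟨i, hi, rfl⟩ := hζ.eq_pow_of_pow_eq_one ((Polynomial.mem_nthRootsFinset hn _).1 hx)
    exact ⟨i, mem_range.2 hi, rfl⟩

theorem lehmerQuot_eq_prod_of_isAlgClosed {F : Type*} [Field F] [IsAlgClosed F] {h : ℕ} {ζ ζ' : F}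
    (hζ : IsPrimitiveRoot ζ (2 * h + 1)) (hζ' : ζ * ζ' = 1) {T : F} (hT : T ≠ 0) (u : F) :
    lehmerQuot T u h = ∏ i ∈ Icc 1 h, (T - u * (2 - ζ ^ i - ζ' ^ i)) := by
  obtain ⟨a, b, rfl, rfl⟩ := exists_add_sq_eq_and_mul_eq T u
  have hab : a + b ≠ 0 := fun h0 => hT (by rw [h0, zero_pow two_ne_zero])
  refine mul_left_cancel₀ hab ?_
  rw [add_mul_lehmerQuot, hζ.pow_add_pow_eq_prod_add_mul a b ⟨h, rfl⟩,
    prod_nthRootsFinset_eq_prod_range hζ (by omega) (a + · * b),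
    prod_range_eq_mul_Ico _ (by omega), Ico_add_one_right_eq_Icc, prod_Icc_one_two_mul,
    pow_zero, one_mul]
  congr 1
  refine prod_congr rfl fun i hi => ?_
  rw [mem_Icc] at hi
  have hinv : ζ ^ i * ζ' ^ i = 1 := by rw [← mul_pow, hζ', one_pow]
  have hconj : ζ ^ (2 * h + 1 - i) = ζ' ^ i := by
    refine mul_left_cancel₀ (pow_ne_zero i (left_ne_zero_of_mul_eq_one hζ')) ?_
    rw [hinv, ← pow_add, Nat.add_sub_cancel' (by omega), hζ.pow_eq_one]
  rw [hconj]
  linear_combination b ^ 2 * hinv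

theorem lehmerQuot_eq_prod {R : Type*} [CommRing R] [IsDomain R] {h : ℕ} {ζ ζ' : R}
    (hζ : IsPrimitiveRoot ζ (2 * h + 1)) (hζ' : ζ * ζ' = 1) {T : R} (hT : T ≠ 0) (u : R) :
    lehmerQuot T u h = ∏ i ∈ Icc 1 h, (T - u * (2 - ζ ^ i - ζ' ^ i)) := by
  let ι := (algebraMap (FractionRing R) (AlgebraicClosure (FractionRing R))).comp
    (algebraMap R (FractionRing R))
  have hι : Function.Injective ι :=
    (algebraMap (FractionRing R) _).injective.comp (IsFractionRing.injective R (FractionRing R))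
  apply hι
  rw [map_lehmerQuot, lehmerQuot_eq_prod_of_isAlgClosed (hζ.map_of_injective hι)
    (ζ' := ι ζ') (by rw [← map_mul, hζ', map_one]) ((map_ne_zero_iff ι hι).2 hT) (ι u)]
  simp only [map_prod, map_sub, map_mul, map_pow, map_ofNat]

theorem two_sub_exp_sub_exp_neg (x : ℝ) :
    2 - Complex.exp (2 * x * Complex.I) - Complex.exp (-(2 * x) * Complex.I) =
      ((4 * Real.sin x ^ 2 : ℝ) : ℂ) := by
  have hcos := Complex.two_cos (2 * x)
  rw [Complex.cos_two_mul] at hcos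
  push_cast
  linear_combination hcos - 4 * Complex.sin_sq_add_cos_sq x

theorem lehmerQuot_eq_prod_sin (h : ℕ) {T : ℝ} (hT : T ≠ 0) (u : ℝ) :
    lehmerQuot T u h =
      ∏ i ∈ Icc 1 h, (T - u * (4 * Real.sin (Real.pi * i / (2 * h + 1 : ℕ)) ^ 2)) := by
  have hinv : Complex.exp (2 * Real.pi * Complex.I / (2 * h + 1 : ℕ)) *
      Complex.exp (-(2 * Real.pi * Complex.I / (2 * h + 1 : ℕ))) = 1 := by
    rw [← Complex.exp_add, add_neg_cancel, Complex.exp_zero]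
  apply Complex.ofReal_injective
  rw [← Complex.ofRealHom_eq_coe, map_lehmerQuot, Complex.ofRealHom_eq_coe,
    Complex.ofRealHom_eq_coe, lehmerQuot_eq_prod (Complex.isPrimitiveRoot_exp _ (by omega)) hinv
      (by exact_mod_cast hT), Complex.ofReal_prod]
  refine prod_congr rfl fun i _ => ?_
  rw [Complex.ofReal_sub, Complex.ofReal_mul, ← two_sub_exp_sub_exp_neg, ← Complex.exp_nat_mul,
    ← Complex.exp_nat_mul]
  push_cast
  ring_nf

theorem exists_abs_le_of_abs_prod_le {ι : Type*} {s : Finset ι} (hs : s.Nonempty) {f : ι → ℝ}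
    {c : ℝ} (hc : 1 ≤ c) (hf : |∏ i ∈ s, f i| ≤ c) : ∃ i ∈ s, |f i| ≤ c := by
  by_contra! hlt
  rw [abs_prod] at hf
  have hprod := prod_lt_prod_of_nonempty (fun _ _ => zero_lt_one.trans_le hc) hlt hs
  rw [prod_const] at hprod
  exact absurd (hprod.trans_le hf) (not_lt.2 (le_self_pow₀ hc hs.card_pos.ne'))

theorem sixteen_div_sq_le_four_mul_sin_sq {n i : ℕ} (hi : 0 < i) (hin : 2 * i ≤ n) :
    16 / (n : ℝ) ^ 2 ≤ 4 * Real.sin (Real.pi * i / n) ^ 2 := by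
  have hn : (0 : ℝ) < n := by exact_mod_cast (by omega : 0 < n)
  have hin' : 2 * (i : ℝ) ≤ n := by exact_mod_cast hin
  have hi' : (1 : ℝ) ≤ i := by exact_mod_cast hi
  have hpi := Real.pi_pos
  have hsin : 2 / (n : ℝ) ≤ Real.sin (Real.pi * i / n) := calc
    2 / (n : ℝ) ≤ 2 * i / n := by gcongr; linarith
    _ = 2 / Real.pi * (Real.pi * i / n) := by field_simp
    _ ≤ Real.sin (Real.pi * i / n) := Real.mul_le_sin (by positivity) (by
        rw [div_le_div_iff₀ hn two_pos]; nlinarith)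
  calc 16 / (n : ℝ) ^ 2 = 4 * (2 / (n : ℝ)) ^ 2 := by field_simp; norm_num
    _ ≤ 4 * Real.sin (Real.pi * i / n) ^ 2 := by gcongr

theorem sixteen_mul_le_of_abs_lehmerQuot_le {h : ℕ} (hh : 1 ≤ h) {T u c : ℤ} (hT : T ≠ 0)
    (hu : 0 ≤ u) (hc : 1 ≤ c) (hW : |lehmerQuot T u h| ≤ c) :
    16 * u ≤ (2 * h + 1) ^ 2 * (T + c) := by
  have hW' : |lehmerQuot (T : ℝ) u h| ≤ c := by
    rw [← intCast_lehmerQuot]; exact_mod_cast hW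
  rw [lehmerQuot_eq_prod_sin h (by exact_mod_cast hT)] at hW'
  obtain ⟨i, hi, hfactor⟩ :=
    exists_abs_le_of_abs_prod_le ⟨1, by simp [hh]⟩ (by exact_mod_cast hc) hW'
  rw [mem_Icc] at hi
  have hsin := sixteen_div_sq_le_four_mul_sin_sq (n := 2 * h + 1) (i := i) (by omega) (by omega)
  rw [div_le_iff₀ (by positivity)] at hsin
  have hlow := (abs_le.1 hfactor).1
  have hu' : (0 : ℝ) ≤ u := by exact_mod_cast hu
  generalize Real.sin (Real.pi * i / (2 * h + 1 : ℕ)) = s at hsin hlow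
  push_cast at hsin
  have : (16 * u : ℝ) ≤ (2 * h + 1) ^ 2 * (T + c) := calc
    (16 * u : ℝ) ≤ u * (4 * s ^ 2 * (2 * h + 1) ^ 2) := by nlinarith
    _ = (2 * h + 1) ^ 2 * (u * (4 * s ^ 2)) := by ring
    _ ≤ (2 * h + 1) ^ 2 * (T + c) := by gcongr; linarith
  exact_mod_cast this

end ProductFormula

/-! ### Lehmer quotients equal to `±1`: congruences -/

section TwoAdic

theorem exists_one_add_four_mul_pow {R : Type*} [CommRing R] (v Y : R) (m : ℕ) :
    ∃ η : R, (1 + 4 * v * Y) ^ m = 1 + 4 * v * (m * Y + 2 * v * η) := by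
  induction m with
  | zero => exact ⟨0, by simp⟩
  | succ m ih =>
    obtain ⟨η, hη⟩ := ih
    refine ⟨η + 2 * Y * (m * Y + 2 * v * η), ?_⟩
    rw [pow_succ, hη]; push_cast; ring

theorem exists_one_add_four_mul_pow_two_pow_mul {R : Type*} [CommRing R] (v Y : R) (e m : ℕ) :
    ∃ η : R, (1 + 4 * v * Y) ^ (2 ^ e * m) = 1 + 4 * 2 ^ e * v * (m * Y + 2 * v * η) := by
  induction e with
  | zero => simpa using exists_one_add_four_mul_pow v Y m
  | succ e ih =>
    obtain ⟨η, hη⟩ := ih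
    refine ⟨η + 2 ^ e * (m * Y + 2 * v * η) ^ 2, ?_⟩
    rw [show 2 ^ (e + 1) * m = 2 ^ e * m * 2 by ring, pow_mul, hη]; ring

theorem map_one_add_four_mul_pow_ne {R : Type*} [CommRing R] (φ : R →+ ℤ) {v c : ℤ} {Y : R}
    (hv : v ≠ 0) (hc : Odd c) (hY : φ Y = v * c) {j : ℕ} (hj : j ≠ 0) :
    φ ((1 + 4 * v * Y) ^ j) ≠ φ 1 := by
  obtain ⟨e, m, hm, rfl⟩ := Nat.exists_eq_two_pow_mul_odd hj
  obtain ⟨η, hη⟩ := exists_one_add_four_mul_pow_two_pow_mul (v : R) Y e m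
  have hexpand : (1 + 4 * v * Y) ^ (2 ^ e * m) =
      1 + ((4 * 2 ^ e * v * m : ℤ) • Y + (4 * 2 ^ e * v * (2 * v) : ℤ) • η) := by
    rw [hη, zsmul_eq_mul, zsmul_eq_mul]; push_cast; ring
  have hodd : Odd (m * c + 2 * φ η) :=
    (((Int.odd_coe_nat m).2 hm).mul hc).add_even (even_two_mul _)
  have hne : 4 * 2 ^ e * v ^ 2 * (m * c + 2 * φ η) ≠ 0 :=
    mul_ne_zero (by positivity) fun h0 => by simp [h0] at hodd
  rw [hexpand, map_add, map_add, map_zsmul, map_zsmul, hY, smul_eq_mul, smul_eq_mul]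
  intro heq
  exact hne (by linear_combination heq)

/-- The additive functional `x + y√d ↦ x + f * y` on `ℤ√d`. It reads off a Lehmer quotient from a
power of a quadratic integer. -/
def zsqrtdFunctional (d f : ℤ) : ℤ√d →+ ℤ where
  toFun z := z.re + f * z.im
  map_zero' := by simp
  map_add' x y := by rw [Zsqrtd.re_add, Zsqrtd.im_add]; ring

theorem zsqrtdFunctional_apply {d f : ℤ} (z : ℤ√d) :
    zsqrtdFunctional d f z = z.re + f * z.im := rfl

theorem lehmerQuot_eq_zsqrtdFunctional {T u d c e f : ℤ} (htrace : 2 * c = T - 2 * u)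
    (hnorm : c ^ 2 - d * e ^ 2 = u ^ 2) (hone : c + f * e = T - 3 * u) (k : ℕ) :
    lehmerQuot T u k = zsqrtdFunctional d f (⟨c, e⟩ ^ k) := by
  simp only [zsqrtdFunctional_apply]
  induction k using Nat.twoStepInduction with
  | zero => simp [lehmerQuot_zero]
  | one => simp [lehmerQuot_one, hone]
  | more k ih ih' =>
    rw [lehmerQuot_add_two, ih', ih, pow_succ _ (k + 1), pow_succ _ k]
    generalize (⟨c, e⟩ : ℤ√d) ^ k = x
    simp only [Zsqrtd.re_mul, Zsqrtd.im_mul]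
    rw [← htrace, ← hnorm]
    ring

theorem map_neg_one_pow_mul {R : Type*} [Ring R] (φ : R →+ ℤ) (q : ℕ) (x : R) :
    φ ((-1) ^ q * x) = (-1) ^ q * φ x := by
  simpa using map_zsmul φ ((-1) ^ q) x

section TwoLeft

variable (v : ℤ)

theorem lehmerQuot_two_left_eq (k : ℕ) :
    lehmerQuot 2 (2 * v + 1) k =
      zsqrtdFunctional (-(4 * v + 1)) (-(4 * v + 1)) (⟨-2 * v, 1⟩ ^ k) :=
  lehmerQuot_eq_zsqrtdFunctional (by ring) (by ring) (by ring) k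

theorem neg_two_mul_add_sqrt_sq :
    (⟨-2 * v, 1⟩ : ℤ√(-(4 * v + 1))) ^ 2 = -(1 + 4 * (v : ℤ√(-(4 * v + 1))) * ⟨1 - v, 1⟩) := by
  have hcast : (4 : ℤ√(-(4 * v + 1))) = ((4 : ℤ) : ℤ√(-(4 * v + 1))) := by norm_cast
  rw [hcast]
  ext <;> simp [pow_two] <;> ring

variable {v}

theorem lehmerQuot_two_left_even_ne (hv : v ≠ 0) {q : ℕ} (hq : q ≠ 0) :
    lehmerQuot 2 (2 * v + 1) (2 * q) ≠ (-1) ^ q := by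
  rw [lehmerQuot_two_left_eq, pow_mul, neg_two_mul_add_sqrt_sq, neg_pow, map_neg_one_pow_mul]
  have hne := map_one_add_four_mul_pow_ne (zsqrtdFunctional (-(4 * v + 1)) (-(4 * v + 1)))
    (Y := ⟨1 - v, 1⟩) hv (c := -5) (by decide) (by rw [zsqrtdFunctional_apply]; ring) hq
  intro heq
  refine hne ((mul_right_inj' (pow_ne_zero q (by decide : (-1 : ℤ) ≠ 0))).1 ?_)
  simpa [zsqrtdFunctional_apply] using heq

theorem lehmerQuot_two_left_odd_ne (hv : v ≠ 0) (q : ℕ) :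
    lehmerQuot 2 (2 * v + 1) (2 * q + 1) ≠ (-1) ^ (q + 1) := by
  obtain ⟨η, hη⟩ := exists_one_add_four_mul_pow (v : ℤ√(-(4 * v + 1))) ⟨1 - v, 1⟩ q
  set z : ℤ√(-(4 * v + 1)) := ⟨-2 * v, 1⟩ with hz
  set G := (q : ℤ√(-(4 * v + 1))) * ⟨1 - v, 1⟩ + 2 * v * η
  have hpow : z ^ (2 * q + 1) = (-1) ^ q * (z + (4 * v : ℤ) • (G * z)) := by
    rw [pow_succ, pow_mul, neg_two_mul_add_sqrt_sq, neg_pow, hη, zsmul_eq_mul]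
    push_cast; ring
  rw [lehmerQuot_two_left_eq, hpow, map_neg_one_pow_mul, map_add, map_zsmul,
    zsqrtdFunctional_apply z, hz, smul_eq_mul, pow_succ]
  generalize zsqrtdFunctional _ _ _ = g
  intro heq
  have hzero := (mul_right_inj' (pow_ne_zero q (by decide : (-1 : ℤ) ≠ 0))).1 heq
  exact mul_ne_zero hv (by omega : 2 * g - 3 ≠ 0) (by linarith)

theorem lehmerQuot_two_ne {t : ℤ} (ht : Odd t) (ht1 : t ≠ 1) {k : ℕ} (hk : k ≠ 0) :
    lehmerQuot 2 t k ≠ lehmerQuot 2 1 k := by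
  obtain ⟨v, rfl⟩ := ht
  have hv : v ≠ 0 := by omega
  rw [lehmerQuot_two_one]
  obtain ⟨q, rfl | rfl⟩ := Nat.even_or_odd' k
  · rw [show (2 * q + 1) / 2 = q by omega]
    exact lehmerQuot_two_left_even_ne hv (by omega)
  · rw [show (2 * q + 1 + 1) / 2 = q + 1 by omega]
    exact lehmerQuot_two_left_odd_ne hv q

end TwoLeft

theorem not_isUnit_lehmerQuot_two {p h : ℕ} [Fact p.Prime] (hp : p = 2 * h + 1) {t : ℤ}
    (ht : Odd t) (ht1 : t ≠ 1) : ¬ IsUnit (lehmerQuot 2 t h) := by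
  have hh : h ≠ 0 := by have := (Fact.out : p.Prime).two_le; omega
  intro hunit
  exact lehmerQuot_two_ne ht ht1 hh (by simpa using lehmerQuot_eq_of_isUnit hp 0 hunit)

theorem lehmerQuot_four_mul_even_ne_one {S u : ℤ} (hS : Even S) (hu : u % 4 = 1) {j : ℕ}
    (hj : j ≠ 0) : lehmerQuot (4 * S) u (2 * j) ≠ 1 := by
  obtain ⟨w, rfl⟩ : ∃ w, u = 4 * w + 1 := ⟨u / 4, by omega⟩
  set d := S * (S - (4 * w + 1)) with hd
  set f := S - (4 * w + 1) with hf
  have hsq : (⟨2 * S - (4 * w + 1), 2⟩ : ℤ√d) ^ 2 = 1 + 4 * ((1 : ℤ) : ℤ√d) *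
      ⟨2 * (S ^ 2 - S * (4 * w + 1) + 2 * w ^ 2 + w), 2 * S - (4 * w + 1)⟩ := by
    rw [show (4 : ℤ√d) = ((4 : ℤ) : ℤ√d) by norm_cast]
    ext <;> simp [pow_two, hd] <;> ring
  have hodd : Odd (2 * (S ^ 2 - S * (4 * w + 1) + 2 * w ^ 2 + w) + f * (2 * S - (4 * w + 1))) := by
    have hfodd : Odd f := hS.sub_odd ⟨2 * w, by ring⟩
    exact (even_two_mul _).add_odd (hfodd.mul ((even_two_mul S).sub_odd ⟨2 * w, by ring⟩))
  have hne := map_one_add_four_mul_pow_ne (zsqrtdFunctional d f) one_ne_zero hodd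
    (Y := ⟨2 * (S ^ 2 - S * (4 * w + 1) + 2 * w ^ 2 + w), 2 * S - (4 * w + 1)⟩)
    (by rw [one_mul, zsqrtdFunctional_apply]) hj
  rw [← hsq, ← pow_mul] at hne
  rw [lehmerQuot_eq_zsqrtdFunctional (d := d) (c := 2 * S - (4 * w + 1)) (e := 2) (f := f)
    (by ring) (by rw [hd]; ring) (by rw [hf]; ring)]
  simpa [zsqrtdFunctional_apply] using hne

theorem lehmerQuot_two_left_zmod_three {u : ZMod 3} (hu : u ≠ 1) (k : ℕ) :
    lehmerQuot 2 u k = 2 ^ k := by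
  induction k using Nat.twoStepInduction with
  | zero => rfl
  | one =>
    rw [lehmerQuot_one]
    revert u; decide
  | more k ih ih' =>
    rw [lehmerQuot_add_two, ih, ih', pow_succ _ (k + 1), pow_succ _ k]
    generalize (2 : ZMod 3) ^ k = x
    clear ih ih'
    revert u x; decide

end TwoAdic

section Congruences

variable {h : ℕ} {T u : ℤ}

theorem eight_dvd_lehmerQuot_sub (hT : 8 ∣ T) :
    8 ∣ lehmerQuot T u h - (-u) ^ h * (2 * h + 1) := by
  rw [← Nat.cast_ofNat, ← ZMod.intCast_zmod_eq_zero_iff_dvd, Int.cast_sub, intCast_lehmerQuot,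
    (ZMod.intCast_zmod_eq_zero_iff_dvd T 8).2 hT, lehmerQuot_zero_left]
  push_cast
  ring

theorem lehmerQuot_emod_four (hT : 8 ∣ T) (hu : u % 4 = 1) : lehmerQuot T u h % 4 = 1 := by
  have h8 := eight_dvd_lehmerQuot_sub (u := u) (h := h) hT
  have hpow : (-u) ^ h ≡ (-1) ^ h [ZMOD 4] := Int.ModEq.pow h (Int.ModEq.neg hu)
  have hprod := hpow.mul_right (2 * h + 1)
  rw [Int.ModEq] at hprod
  rcases Nat.even_or_odd' h with ⟨q, rfl | rfl⟩
  · rw [(even_two_mul q).neg_one_pow] at hprod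
    push_cast at *
    omega
  · rw [(odd_two_mul_add_one q).neg_one_pow] at hprod
    push_cast at *
    omega

theorem emod_eight_of_lehmerQuot_eq_one (hT : 8 ∣ T) (hu : Odd u) (hh : h % 4 = 3)
    (hW : lehmerQuot T u h = 1) : u % 8 = 1 := by
  have h8 := eight_dvd_lehmerQuot_sub (u := u) (h := h) hT
  have husq : (-u) ^ 2 ≡ 1 [ZMOD 8] := by
    rw [neg_sq]; exact (Int.modEq_iff_dvd.2 (Int.eight_dvd_sq_sub_one_of_odd hu)).symm
  obtain ⟨j, rfl⟩ : ∃ j, h = 2 * (2 * j + 1) + 1 := ⟨h / 4, by omega⟩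
  have hpow : (-u) ^ (2 * (2 * j + 1) + 1) ≡ -u [ZMOD 8] := by
    rw [pow_succ, pow_mul]
    simpa using (husq.pow (2 * j + 1)).mul_right (-u)
  have hprod := hpow.mul_right (2 * (2 * (2 * j + 1) + 1 : ℕ) + 1)
  rw [hW] at h8
  rw [Int.ModEq, show -u * (2 * ((2 * (2 * j + 1) + 1 : ℕ) : ℤ) + 1) = u + 8 * (-u * (j + 1)) by
    push_cast; ring] at hprod
  omega

theorem emod_three_of_lehmerQuot_eq_one (hT : T % 3 = 2) (hh : Odd h)
    (hW : lehmerQuot T u h = 1) : u % 3 = 1 := by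
  by_contra hu
  have hu' : (u : ZMod 3) ≠ 1 := fun h0 =>
    hu ((ZMod.intCast_eq_intCast_iff' u 1 3).1 (by simpa using h0))
  have hT' : (T : ZMod 3) = 2 := by
    simpa using (ZMod.intCast_eq_intCast_iff' T 2 3).2 hT
  have h3 := congrArg (Int.cast : ℤ → ZMod 3) hW
  rw [intCast_lehmerQuot, hT', lehmerQuot_two_left_zmod_three hu',
    show (2 : ZMod 3) = -1 by decide, hh.neg_one_pow] at h3
  revert h3; decide

theorem congruences_of_isUnit_lehmerQuot {p m : ℕ} [Fact p.Prime] (hp : p = 2 * h + 1)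
    (hm : m ≠ 0) (hu : u % 4 = 1) (hW : IsUnit (lehmerQuot ((2 : ℤ) ^ (2 * m + 1)) u h)) :
    lehmerQuot ((2 : ℤ) ^ (2 * m + 1)) u h = 1 ∧ p % 8 = 7 ∧ u % 8 = 1 ∧ u % 3 = 1 := by
  have hp2 := (Fact.out : p.Prime).two_le
  obtain ⟨r, rfl⟩ := Nat.exists_eq_succ_of_ne_zero hm
  have hT : (2 : ℤ) ^ (2 * (r + 1) + 1) = 4 * (2 * 4 ^ r) := by
    rw [pow_succ, pow_mul, pow_succ]; norm_num; ring
  have hT8 : 8 ∣ (2 : ℤ) ^ (2 * (r + 1) + 1) := ⟨4 ^ r, by rw [hT]; ring⟩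
  have hT3 : (2 : ℤ) ^ (2 * (r + 1) + 1) % 3 = 2 := by
    have h4 : (4 : ℤ) ^ r ≡ 1 ^ r [ZMOD 3] := Int.ModEq.pow r (by decide)
    rw [one_pow, Int.ModEq] at h4
    omega
  have hone : lehmerQuot ((2 : ℤ) ^ (2 * (r + 1) + 1)) u h = 1 := by
    have := lehmerQuot_emod_four (h := h) hT8 hu
    rcases Int.isUnit_iff.1 hW with hq | hq
    · exact hq
    · rw [hq] at this; omega
  have hsign : (-1 : ℤ) ^ ((h + 1) / 2) = 1 := by
    rw [← lehmerQuot_two_one, ← lehmerQuot_eq_of_isUnit hp (r + 1) hW, hone]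
  have hh : Odd h := by
    by_contra heven
    obtain ⟨j, rfl⟩ := Nat.not_odd_iff_even.1 heven |>.two_dvd
    exact lehmerQuot_four_mul_even_ne_one (even_two_mul _) hu (by omega) (hT ▸ hone)
  have hh4 : h % 4 = 3 := by
    have := (neg_one_pow_eq_one_iff_even (by decide)).1 hsign
    grind
  exact ⟨hone, by omega, emod_eight_of_lehmerQuot_eq_one hT8 (by grind) hh4 hone,
    emod_three_of_lehmerQuot_eq_one hT3 hh hone⟩

end Congruences

/-! ### Integers of the `p`-th cyclotomic field -/

section Embeddings

open Finset Polynomial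

variable {p : ℕ} {K : Type*} [Field K] [NumberField K] {z : K}

theorem exists_algHom_apply_eq_pow [IsCyclotomicExtension {p} ℚ K] (hz : IsPrimitiveRoot z p)
    {ω : ℂ} (hω : IsPrimitiveRoot ω p) (hp : 0 < p) {a : ℕ} (ha : a.Coprime p) :
    ∃ σ : K →ₐ[ℚ] ℂ, σ z = ω ^ a := by
  have : NeZero p := ⟨hp.ne'⟩
  have hirr : Irreducible (cyclotomic p ℚ) := cyclotomic.irreducible_rat hp
  refine ⟨(hz.embeddingsEquivPrimitiveRoots ℂ hirr).symm
    ⟨ω ^ a, (mem_primitiveRoots hp).2 (hω.pow_of_coprime a ha)⟩, ?_⟩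
  rw [← hz.embeddingsEquivPrimitiveRoots_apply_coe ℂ hirr, Equiv.apply_symm_apply]

theorem algHom_ext_of_isPrimitiveRoot [IsCyclotomicExtension {p} ℚ K] (hp : 0 < p)
    (hz : IsPrimitiveRoot z p) {σ τ : K →ₐ[ℚ] ℂ} (h : σ z = τ z) : σ = τ := by
  have : NeZero p := ⟨hp.ne'⟩
  refine (hz.powerBasis ℚ).algHom_ext ?_
  rwa [hz.powerBasis_gen ℚ]

section

variable {ω : ℂ} {σ : ℕ → K →ₐ[ℚ] ℂ}

theorem prod_algHom_eq_prod_Icc [IsCyclotomicExtension {p} ℚ K] (hp : 1 < p)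
    (hz : IsPrimitiveRoot z p) (hω : IsPrimitiveRoot ω p)
    (hσ : ∀ a ∈ Icc 1 (p - 1), σ a z = ω ^ a) {M : Type*} [CommMonoid M]
    (f : (K →ₐ[ℚ] ℂ) → M) :
    ∏ τ, f τ = ∏ a ∈ Icc 1 (p - 1), f (σ a) := by
  have : NeZero p := ⟨by omega⟩
  symm
  refine prod_bij (fun a _ => σ a) (fun _ _ => mem_univ _) ?_ ?_ fun _ _ => rfl
  · intro a ha b hb hab
    have heq : ω ^ a = ω ^ b := by rw [← hσ a ha, ← hσ b hb, hab]
    rw [mem_Icc] at ha hb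
    exact hω.pow_inj (by omega) (by omega) heq
  · intro τ _
    have hτ : τ z ^ p = 1 := by rw [← map_pow, hz.pow_eq_one, map_one]
    obtain ⟨a, hap, ha⟩ := hω.eq_pow_of_pow_eq_one hτ
    have ha0 : a ≠ 0 := by
      rintro rfl
      refine hz.ne_one hp (τ.toRingHom.injective ?_)
      simpa using ha.symm
    have hmem : a ∈ Icc 1 (p - 1) := mem_Icc.2 (by omega)
    exact ⟨a, hmem, algHom_ext_of_isPrimitiveRoot (by omega) hz (by rw [hσ a hmem, ha])⟩

theorem norm_algHom_sub [IsCyclotomicExtension {p} ℚ K] (hz : IsPrimitiveRoot z p)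
    (hω : IsPrimitiveRoot ω p) (hσ : ∀ a ∈ Icc 1 (p - 1), σ a z = ω ^ a) {a : ℕ}
    (ha : a ∈ Icc 1 (p - 1)) (x : K) : ‖σ (p - a) x‖ = ‖σ a x‖ := by
  rw [mem_Icc] at ha
  have hconj : ω ^ (p - a) = starRingEnd ℂ (ω ^ a) := by
    have hnorm : ‖ω ^ a‖ = 1 := by rw [norm_pow, hω.norm'_eq_one (by omega), one_pow]
    rw [← Complex.inv_eq_conj hnorm]
    refine eq_inv_of_mul_eq_one_left ?_
    rw [← pow_add, Nat.sub_add_cancel (by omega), hω.pow_eq_one]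
  have hcomp : σ (p - a) =
      ((Complex.conjAe.restrictScalars ℚ : ℂ ≃ₐ[ℚ] ℂ) : ℂ →ₐ[ℚ] ℂ).comp (σ a) := by
    refine algHom_ext_of_isPrimitiveRoot (by omega) hz ?_
    rw [hσ (p - a) (mem_Icc.2 (by omega)), hconj, ← hσ a (mem_Icc.2 ha)]
    rfl
  rw [hcomp]
  exact RCLike.norm_conj _

theorem one_le_prod_norm_algHom (y : 𝓞 K) (hy : y ≠ 0) : 1 ≤ ∏ τ : K →ₐ[ℚ] ℂ, ‖τ y‖ := by
  rw [← norm_prod, ← Algebra.norm_eq_prod_embeddings ℚ ℂ (y : K), ← Algebra.coe_norm_int,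
    eq_ratCast, Rat.cast_intCast, Complex.norm_intCast]
  exact_mod_cast Int.one_le_abs (Algebra.norm_ne_zero_iff.2 hy)

theorem one_le_prod_Icc_norm [IsCyclotomicExtension {p} ℚ K] (hp : 1 < p) {h : ℕ}
    (hph : p = 2 * h + 1) (hz : IsPrimitiveRoot z p) (hω : IsPrimitiveRoot ω p)
    (hσ : ∀ a ∈ Icc 1 (p - 1), σ a z = ω ^ a) {y : 𝓞 K} (hy : y ≠ 0) :
    1 ≤ ∏ a ∈ Icc 1 h, ‖σ a y‖ := by
  have hpair : ∏ τ : K →ₐ[ℚ] ℂ, ‖τ y‖ = (∏ a ∈ Icc 1 h, ‖σ a y‖) ^ 2 := by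
    rw [prod_algHom_eq_prod_Icc hp hz hω hσ, show p - 1 = 2 * h by omega, prod_Icc_one_two_mul,
      ← prod_pow, ← hph]
    refine prod_congr rfl fun a ha => ?_
    rw [norm_algHom_sub hz hω hσ (by rw [mem_Icc] at ha ⊢; omega), sq]
  have hsq := one_le_prod_norm_algHom y hy
  rw [hpair] at hsq
  exact (one_le_sq_iff₀ (prod_nonneg fun _ _ => norm_nonneg _)).1 hsq

end

end Embeddings

section CyclotomicModel

open Finset

/-- A model `R` of the ring of integers of the `p`-th cyclotomic field, `p = 2 * h + 1` prime,
recording only what is used about it: a primitive `p`-th root of unity `ζ` that generates `R`,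
representatives `σ 1, …, σ h` of the pairs of conjugate complex embeddings (`σ a` is arbitrary for
other `a`), integrality of norms, and the fact that the only relation modulo `2` between
`1, ζ, …, ζ ^ (p - 1)` is that their sum vanishes. -/
structure CyclotomicModel (p h : ℕ) (R : Type*) [CommRing R] where
  prime : p.Prime
  eq_two_mul_add_one : p = 2 * h + 1
  ζ : R
  isPrimitiveRoot : IsPrimitiveRoot ζ p
  σ : ℕ → R →+* ℂ
  σ_ζ : ∀ a ∈ Icc 1 h, σ a ζ = Complex.exp (2 * Real.pi * Complex.I / p) ^ a
  one_le_prod_norm : ∀ y : R, y ≠ 0 → 1 ≤ ∏ a ∈ Icc 1 h, ‖σ a y‖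
  two_dvd_sub_of_two_dvd_sum : ∀ F : ℕ → ℤ, (2 : R) ∣ ∑ j ∈ range p, (F j : R) * ζ ^ j →
    ∀ j < p, 2 ∣ F j - F (p - 1)
  exists_eq_aeval : ∀ x : R, ∃ f : Polynomial ℤ, x = Polynomial.aeval ζ f

theorem two_dvd_sub_of_two_dvd_sum_mul_pow {R : Type*} [CommRing R] [IsDomain R] {p : ℕ}
    (hp : 1 < p) {ζ : R} (hζ : IsPrimitiveRoot ζ p) (pb : PowerBasis ℤ R) (hgen : pb.gen = ζ)
    (hdim : pb.dim = p - 1) (F : ℕ → ℤ) (hF : (2 : R) ∣ ∑ j ∈ range p, (F j : R) * ζ ^ j)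
    {j : ℕ} (hj : j < p) : 2 ∣ F j - F (p - 1) := by
  obtain ⟨y, hy⟩ := hF
  obtain ⟨q, rfl⟩ : ∃ q, p = q + 1 := ⟨p - 1, by omega⟩
  rw [Nat.add_sub_cancel] at hdim ⊢
  obtain rfl | hjq := (Nat.le_of_lt_succ hj).eq_or_lt
  · simp
  have hsum : ∑ i ∈ range q, (F i - F q) • ζ ^ i = (2 : ℤ) • y := by
    have hrelation := hζ.geom_sum_eq_zero hp
    have hall : ∑ i ∈ range (q + 1), (F i - F q) • ζ ^ i = (2 : ℤ) • y := by
      simp only [zsmul_eq_mul, Int.cast_sub, sub_mul, sum_sub_distrib, ← mul_sum, hrelation, hy]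
      simp
    simpa [sum_range_succ] using hall
  have hbasis : ∑ i : Fin pb.dim, (F i - F q) • pb.basis i = (2 : ℤ) • y := by
    rw [← hsum, ← hdim, sum_range]
    exact sum_congr rfl fun i _ => by rw [pb.coe_basis, hgen]
  have hcoeff := congrArg (fun x => pb.basis.repr x ⟨j, by omega⟩) hbasis
  beta_reduce at hcoeff
  rw [Module.Basis.repr_sum_self, map_zsmul] at hcoeff
  exact ⟨_, by simpa using hcoeff⟩

theorem nonempty_cyclotomicModel_ringOfIntegers {p h : ℕ} (hp : p.Prime) (hph : p = 2 * h + 1)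
    (K : Type*) [Field K] [NumberField K] [IsCyclotomicExtension {p} ℚ K] :
    Nonempty (CyclotomicModel p h (𝓞 K)) := by
  have : NeZero p := ⟨hp.ne_zero⟩
  have hz := IsCyclotomicExtension.zeta_spec p ℚ K
  have hω := Complex.isPrimitiveRoot_exp p hp.ne_zero
  have hcop : ∀ a ∈ Icc 1 (p - 1), a.Coprime p := fun a ha => by
    rw [mem_Icc] at ha
    exact (Nat.coprime_of_lt_prime (by omega) (by omega) hp).symm
  have : Nonempty (K →ₐ[ℚ] ℂ) :=
    ⟨(exists_algHom_apply_eq_pow hz hω hp.pos (Nat.coprime_one_left p)).choose⟩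
  choose! σ hσ using fun a ha => exists_algHom_apply_eq_pow hz hω hp.pos (hcop a ha)
  exact ⟨{
    prime := hp
    eq_two_mul_add_one := hph
    ζ := hz.toInteger
    isPrimitiveRoot := hz.toInteger_isPrimitiveRoot
    σ := fun a => (σ a).toRingHom.comp (algebraMap (𝓞 K) K)
    σ_ζ := fun a ha => hσ a (by rw [mem_Icc] at ha ⊢; omega)
    one_le_prod_norm := fun y hy => one_le_prod_Icc_norm hp.one_lt hph hz hω hσ hy
    two_dvd_sub_of_two_dvd_sum := fun F hF j hj =>
      two_dvd_sub_of_two_dvd_sum_mul_pow hp.one_lt hz.toInteger_isPrimitiveRoot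
        hz.integralPowerBasis (by simp) (by simp [Nat.totient_prime hp]) F hF hj
    exists_eq_aeval := fun x => by
      obtain ⟨f, hf⟩ := hz.integralPowerBasis.exists_eq_aeval' x
      exact ⟨f, by rw [hf]; simp⟩ }⟩

end CyclotomicModel

section RealEstimates

open Finset

theorem abs_sub_inv_eq_two_mul_sinh {z : ℝ} (hz : z ≠ 0) :
    |z - z⁻¹| = 2 * Real.sinh (abs (Real.log |z|)) := by
  rw [← Real.abs_sinh, Real.sinh_log (abs_pos.2 hz)]
  rcases abs_choice z with h | h <;> rw [h]
  · rw [abs_div, abs_two]; ring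
  · rw [inv_neg, abs_div, abs_two, ← abs_neg (z - z⁻¹)]; ring_nf

theorem exp_two_thirds_lt_two : Real.exp (2 / 3) < 2 := by
  have hcube : Real.exp (2 / 3) ^ 3 = Real.exp 1 ^ 2 := by
    rw [← Real.exp_nat_mul, ← Real.exp_nat_mul]; norm_num
  refine lt_of_pow_lt_pow_left₀ 3 zero_le_two ?_
  rw [hcube]
  nlinarith [Real.exp_one_lt_d9, Real.exp_pos 1]

theorem prod_two_mul_sinh_mul_exp_sum_lt_one {ι : Type*} {s : Finset ι} (hs : s.Nonempty)
    {t : ι → ℝ} (ht : ∀ i ∈ s, 0 ≤ t i ∧ t i < 1 / 3) :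
    (∏ i ∈ s, 2 * Real.sinh (t i)) * Real.exp (∑ i ∈ s, t i) < 1 := by
  classical
  have hfactor : ∀ i ∈ s, 2 * Real.sinh (t i) * Real.exp (t i) ∈ Set.Ico (0 : ℝ) 1 := by
    intro i hi
    have hexp : 2 * Real.sinh (t i) * Real.exp (t i) = Real.exp (t i + t i) - 1 := by
      rw [Real.sinh_eq, ← mul_div_assoc, mul_div_cancel_left₀ _ two_ne_zero, sub_mul,
        ← Real.exp_add, ← Real.exp_add, neg_add_cancel, Real.exp_zero]
    have hle : Real.exp (t i + t i) ≤ Real.exp (2 / 3) :=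
      Real.exp_le_exp.2 (by linarith [(ht i hi).2])
    rw [hexp]
    constructor
    · linarith [Real.add_one_le_exp (t i + t i), (ht i hi).1]
    · linarith [exp_two_thirds_lt_two]
  obtain ⟨i, hi⟩ := hs
  rw [Real.exp_sum, ← prod_mul_distrib, ← mul_prod_erase s _ hi]
  refine mul_lt_one_of_nonneg_of_lt_one_left (hfactor i hi).1 (hfactor i hi).2 ?_
  exact prod_le_one (fun j hj => (hfactor j (mem_of_mem_erase hj)).1)
    fun j hj => (hfactor j (mem_of_mem_erase hj)).2.le

end RealEstimates

namespace CyclotomicModel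

open Finset

theorem one_le_half {p h : ℕ} {R : Type*} [CommRing R] (E : CyclotomicModel p h R) : 1 ≤ h := by
  have := E.prime.two_le
  have := E.eq_two_mul_add_one
  omega

variable {p h : ℕ} {R : Type*} [CommRing R] (E : CyclotomicModel p h R)

theorem σ_unit_ne_zero (a : ℕ) (x : Rˣ) : E.σ a x ≠ 0 := (x.isUnit.map (E.σ a)).ne_zero

/-- The `a`-th coordinate of the logarithmic embedding of the unit group. -/
noncomputable def logNorm (a : ℕ) (x : Rˣ) : ℝ := Real.log ‖E.σ a x‖

theorem logNorm_eq_log_units_map (a : ℕ) (x : Rˣ) :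
    E.logNorm a x = Real.log ‖((Units.map (E.σ a : R →* ℂ) x : ℂˣ) : ℂ)‖ := rfl

theorem logNorm_mul (a : ℕ) (x y : Rˣ) :
    E.logNorm a (x * y) = E.logNorm a x + E.logNorm a y := by
  simp [logNorm, Real.log_mul, E.σ_unit_ne_zero]

theorem logNorm_zpow (a : ℕ) (x : Rˣ) (n : ℤ) : E.logNorm a (x ^ n) = n * E.logNorm a x := by
  rw [logNorm_eq_log_units_map, map_zpow, Units.val_zpow_eq_zpow_val, norm_zpow, Real.log_zpow,
    ← logNorm_eq_log_units_map]

theorem logNorm_inv (a : ℕ) (x : Rˣ) : E.logNorm a x⁻¹ = -E.logNorm a x := by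
  simpa using E.logNorm_zpow a x (-1)

theorem logNorm_prod {ι : Type*} (a : ℕ) (s : Finset ι) (f : ι → Rˣ) :
    E.logNorm a (∏ i ∈ s, f i) = ∑ i ∈ s, E.logNorm a (f i) := by
  simp only [logNorm, Units.coe_prod, map_prod, norm_prod]
  exact Real.log_prod fun i _ => norm_ne_zero_iff.2 (E.σ_unit_ne_zero a (f i))

theorem prod_norm_unit_le_one [Nontrivial R] (x : Rˣ) : ∏ a ∈ Icc 1 h, ‖E.σ a x‖ ≤ 1 := by
  have hinv := E.one_le_prod_norm _ x⁻¹.ne_zero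
  have hmul : (∏ a ∈ Icc 1 h, ‖E.σ a x‖) * ∏ a ∈ Icc 1 h, ‖E.σ a (x⁻¹ : Rˣ)‖ = 1 := by
    rw [← prod_mul_distrib]
    refine prod_eq_one fun a _ => ?_
    rw [← norm_mul, ← map_mul, Units.mul_inv, map_one, norm_one]
  have hnonneg : 0 ≤ ∏ a ∈ Icc 1 h, ‖E.σ a x‖ := prod_nonneg fun _ _ => norm_nonneg _
  nlinarith

theorem sum_logNorm [Nontrivial R] (x : Rˣ) : ∑ a ∈ Icc 1 h, E.logNorm a x = 0 := by
  unfold logNorm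
  rw [← Real.log_prod fun a _ => norm_ne_zero_iff.2 (E.σ_unit_ne_zero a x),
    le_antisymm (E.prod_norm_unit_le_one x) (E.one_le_prod_norm x x.ne_zero), Real.log_one]

/-- The units all of whose conjugates `σ a x` are real. -/
def realUnits : Subgroup Rˣ where
  carrier := {x | ∀ a ∈ Icc 1 h, ∃ z : ℝ, E.σ a x = z}
  mul_mem' hx hy a ha := by
    obtain ⟨z, hz⟩ := hx a ha
    obtain ⟨w, hw⟩ := hy a ha
    exact ⟨z * w, by rw [Units.val_mul, map_mul, hz, hw, Complex.ofReal_mul]⟩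
  one_mem' a _ := ⟨1, by simp⟩
  inv_mem' {x} hx a ha := by
    obtain ⟨z, hz⟩ := hx a ha
    refine ⟨z⁻¹, ?_⟩
    rw [Complex.ofReal_inv, ← hz]
    exact eq_inv_of_mul_eq_one_left (by rw [← map_mul, Units.inv_mul, map_one])

theorem norm_σ_sub_inv {x : Rˣ} (hx : x ∈ E.realUnits) {a : ℕ} (ha : a ∈ Icc 1 h) :
    ‖E.σ a ((x : R) - (x⁻¹ : Rˣ))‖ = 2 * Real.sinh |E.logNorm a x| := by
  obtain ⟨z, hz⟩ := hx a ha
  have hz0 : z ≠ 0 := by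
    rintro rfl
    exact E.σ_unit_ne_zero a x (by simpa using hz)
  have hinv : E.σ a (x⁻¹ : Rˣ) = ((z⁻¹ : ℝ) : ℂ) := by
    rw [Complex.ofReal_inv, ← hz]
    exact eq_inv_of_mul_eq_one_left (by rw [← map_mul, Units.inv_mul, map_one])
  rw [logNorm, map_sub, hinv, hz, ← Complex.ofReal_sub, Complex.norm_real, Complex.norm_real,
    Real.norm_eq_abs, Real.norm_eq_abs, abs_sub_inv_eq_two_mul_sinh hz0]

-- If `x ≠ x⁻¹`, the nonzero integer `x - x⁻¹` would have norm less than `1`.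
theorem sub_inv_eq_zero_of_abs_logNorm_lt [Nontrivial R] (hh : 2 ≤ h) {x : Rˣ}
    (hx : x ∈ E.realUnits) (hlog : ∀ a, 1 ≤ a → a < h → |E.logNorm a x| < 1 / 3) :
    (x : R) - (x⁻¹ : Rˣ) = 0 := by
  by_contra hne
  have hnorm := E.one_le_prod_norm _ hne
  have hsum := E.sum_logNorm x
  rw [prod_congr rfl fun a ha => E.norm_σ_sub_inv hx ha] at hnorm
  clear hne hx
  obtain ⟨g, rfl⟩ : ∃ g, h = g + 1 := ⟨h - 1, by omega⟩
  rw [sum_Icc_succ_top (by omega)] at hsum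
  rw [prod_Icc_succ_top (by omega)] at hnorm
  have hlast : |E.logNorm (g + 1) x| ≤ ∑ a ∈ Icc 1 g, |E.logNorm a x| := by
    rw [eq_neg_of_add_eq_zero_right hsum, abs_neg]
    exact abs_sum_le_sum_abs _ _
  have hsinh : 2 * Real.sinh |E.logNorm (g + 1) x| ≤ Real.exp (∑ a ∈ Icc 1 g, |E.logNorm a x|) := by
    refine le_trans ?_ (Real.exp_le_exp.2 hlast)
    rw [Real.sinh_eq]
    linarith [Real.exp_pos (-|E.logNorm (g + 1) x|)]
  have hsmall := prod_two_mul_sinh_mul_exp_sum_lt_one (s := Icc 1 g) ⟨1, mem_Icc.2 (by omega)⟩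
    (t := fun a => |E.logNorm a x|) fun a ha => by
      rw [mem_Icc] at ha
      exact ⟨abs_nonneg _, hlog a ha.1 (by omega)⟩
  have hnonneg : 0 ≤ ∏ a ∈ Icc 1 g, 2 * Real.sinh |E.logNorm a x| :=
    prod_nonneg fun a _ => mul_nonneg zero_le_two (Real.sinh_nonneg_iff.2 (abs_nonneg _))
  linarith [mul_le_mul_of_nonneg_left hsinh hnonneg]

theorem eq_one_or_neg_one_of_abs_logNorm_lt [IsDomain R] (hh : 2 ≤ h) {x : Rˣ}
    (hx : x ∈ E.realUnits) (hlog : ∀ a, 1 ≤ a → a < h → |E.logNorm a x| < 1 / 3) :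
    x = 1 ∨ x = -1 := by
  have hinv : x = x⁻¹ :=
    Units.ext (sub_eq_zero.1 (E.sub_inv_eq_zero_of_abs_logNorm_lt hh hx hlog))
  have hsq : (x : R) * x = 1 := by nth_rewrite 2 [hinv]; exact x.mul_inv
  exact (mul_self_eq_one_iff.1 hsq).imp Units.ext Units.ext

end CyclotomicModel

/-! ### Multiplicative independence modulo powers of `2` -/

section DivisibilityByTwo

variable {R : Type*} [CommRing R]

theorem two_dvd_sub_one_pow_two_pow_sub (a : R) (k : ℕ) :
    (2 : R) ∣ (a - 1) ^ 2 ^ k - (a ^ 2 ^ k - 1) := by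
  induction k with
  | zero => simp
  | succ k ih =>
    obtain ⟨g, hg⟩ := ih
    refine ⟨2 * g ^ 2 + 2 * g * (a ^ 2 ^ k - 1) + (1 - a ^ 2 ^ k), ?_⟩
    rw [pow_succ 2 k, pow_mul, pow_mul, sub_eq_iff_eq_add'.1 hg]
    ring

theorem exists_one_add_four_mul_pow_two_pow (y : R) (k : ℕ) :
    ∃ g, (1 + 4 * y) ^ 2 ^ k = 1 + 2 ^ (k + 2) * (y + 2 * g) := by
  induction k with
  | zero => exact ⟨0, by ring⟩
  | succ k ih =>
    obtain ⟨g, hg⟩ := ih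
    refine ⟨g + 2 ^ k * (y + 2 * g) ^ 2, ?_⟩
    rw [pow_succ 2 k, pow_mul, hg]
    ring

theorem two_dvd_sum_sq_sub {ι : Type*} (s : Finset ι) (f : ι → R) :
    (2 : R) ∣ (∑ i ∈ s, f i) ^ 2 - ∑ i ∈ s, f i ^ 2 := by
  classical
  induction s using Finset.induction_on with
  | empty => simp
  | insert i s hi ih =>
    rw [Finset.sum_insert hi, Finset.sum_insert hi]
    obtain ⟨g, hg⟩ := ih
    exact ⟨g + f i * ∑ i ∈ s, f i, by linear_combination hg⟩

theorem exists_prod_one_sub_two_mul_eq {ι : Type*} (s : Finset ι) (f : ι → R) :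
    ∃ g, ∏ i ∈ s, (1 - 2 * f i) = 1 - 2 * ∑ i ∈ s, f i + 4 * g := by
  classical
  induction s using Finset.induction_on with
  | empty => exact ⟨0, by simp⟩
  | insert i s hi ih =>
    rw [Finset.prod_insert hi, Finset.sum_insert hi]
    obtain ⟨g, hg⟩ := ih
    exact ⟨g + f i * (∑ i ∈ s, f i) - 2 * f i * g, by rw [hg]; ring⟩

theorem prod_zpow_eq_sq_mul_prod_odd {G ι : Type*} [CommGroup G] (s : Finset ι) (g : ι → G)
    (b : ι → ℤ) : ∏ i ∈ s, g i ^ b i =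
      (∏ i ∈ s, g i ^ (b i / 2)) ^ 2 * ∏ i ∈ s with ¬ 2 ∣ b i, g i := by
  rw [Finset.prod_filter, ← Finset.prod_pow, ← Finset.prod_mul_distrib]
  refine Finset.prod_congr rfl fun i _ => ?_
  rw [← zpow_natCast, ← zpow_mul]
  split_ifs with hb
  · rw [mul_one]
    congr 1
    push_cast
    omega
  · rw [← zpow_add_one]
    congr 1
    push_cast
    omega

theorem sum_range_pow_two_mul_add_pow (z : R) (m : ℕ) :
    ∑ t ∈ Finset.range m, (z ^ (2 * t) + z ^ (2 * t + 1)) =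
      ∑ k ∈ Finset.range (2 * m), z ^ k := by
  induction m with
  | zero => simp
  | succ m ih =>
    rw [Finset.sum_range_succ, ih, mul_add_one, Finset.sum_range_succ _ (2 * m + 1),
      Finset.sum_range_succ _ (2 * m)]
    ring

end DivisibilityByTwo

theorem two_pow_mul_modEq_two_pow_iff {p d l₀ l k c : ℕ} (hp : p.Coprime 2)
    (hd : 2 ^ (d + 1) < p) (hl₀ : l₀ ≤ l) (hl : l < d) (hk : k < 2) (hc : p < 4 * c) (hcp : c < p) :
    2 ^ (l + 3 + k) * c ≡ 2 ^ (d + 3 + l₀) [MOD p] ↔ l = l₀ ∧ c = 2 ^ d ∧ k = 0 := by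
  constructor
  · intro hmod
    have hcancel : c ≡ 2 ^ (d + l₀ - l - k) [MOD p] := by
      refine Nat.ModEq.cancel_left_of_coprime (hp.pow_right (l + 3 + k)) ?_
      rwa [← pow_add, show l + 3 + k + (d + l₀ - l - k) = d + 3 + l₀ by omega]
    have hle : 2 ^ (d + l₀ - l - k) ≤ 2 ^ d := Nat.pow_le_pow_right two_pos (by omega)
    have hc_eq : c = 2 ^ (d + l₀ - l - k) := hcancel.eq_of_lt_of_lt hcp (by omega)
    have hexp : d + l₀ - l - k = d := by
      by_contra hne
      have : 2 ^ (d + l₀ - l - k) * 2 ≤ 2 ^ d := by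
        rw [← pow_succ]
        exact Nat.pow_le_pow_right two_pos (by omega)
      omega
    exact ⟨by omega, by rw [hc_eq, hexp], by omega⟩
  · rintro ⟨rfl, rfl, rfl⟩
    rw [← pow_add, add_zero, show l + 3 + d = d + 3 + l by omega]

namespace CyclotomicModel

open Finset

variable {p h : ℕ} {R : Type*} [CommRing R] (E : CyclotomicModel p h R)

theorem coprime_two (E : CyclotomicModel p h R) : p.Coprime 2 :=
  Nat.coprime_two_right.2 ⟨h, E.eq_two_mul_add_one⟩

theorem ζ_pow_mul_ζ_pow (i : ℕ) : E.ζ ^ i * E.ζ ^ ((p - 1) * i) = 1 := by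
  rw [← pow_add, add_comm, ← Nat.succ_mul, Nat.succ_eq_add_one, Nat.sub_add_cancel E.prime.one_le,
    pow_mul, E.isPrimitiveRoot.pow_eq_one, one_pow]

/-- The algebraic integer `ζ ^ i + ζ ^ (-i) = 2 cos (2 π i / p)`. -/
def twoCos (i : ℕ) : R := E.ζ ^ i + E.ζ ^ ((p - 1) * i)

/-- The inverse of `twoCos i` when `p % 4 = 3` and `p` does not divide `i`, written as a sum of
powers of `ζ`. -/
def twoCosInv (i : ℕ) : R := ∑ c ∈ Ico (p / 4 + 1) (3 * (p / 4) + 3), E.ζ ^ (4 * i * c)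

theorem twoCos_two_mul (i : ℕ) : E.twoCos (2 * i) = E.twoCos i ^ 2 - 2 := by
  have hinv := E.ζ_pow_mul_ζ_pow i
  rw [twoCos, twoCos, mul_left_comm, mul_comm 2 i, pow_mul, mul_comm 2, pow_mul]
  linear_combination -2 * hinv

theorem twoCos_mul_twoCosInv [IsDomain R] (hp : p % 4 = 3) {i : ℕ} (hi : i.Coprime p) :
    E.twoCos i * E.twoCosInv i = 1 := by
  obtain ⟨q, hq⟩ : ∃ q, p = 4 * q + 3 := ⟨p / 4, by omega⟩
  have hζi : (E.ζ ^ i) ^ p = 1 := by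
    rw [pow_right_comm, E.isPrimitiveRoot.pow_eq_one, one_pow]
  have hprim : IsPrimitiveRoot ((E.ζ ^ i) ^ 2) p :=
    (E.isPrimitiveRoot.pow_of_coprime i hi).pow_of_coprime 2 E.coprime_two.symm
  rw [twoCosInv, show p / 4 = q by omega, sum_Ico_eq_sum_range, mul_sum]
  have hterm : ∀ t, E.twoCos i * E.ζ ^ (4 * i * (q + 1 + t)) =
      ((E.ζ ^ i) ^ 2) ^ (2 * t) + ((E.ζ ^ i) ^ 2) ^ (2 * t + 1) := by
    intro t
    have hfirst : E.ζ ^ i * E.ζ ^ (4 * i * (q + 1 + t)) =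
        (E.ζ ^ i) ^ p * ((E.ζ ^ i) ^ 2) ^ (2 * t + 1) := by
      simp only [← pow_mul, ← pow_add]
      congr 1
      rw [hq]
      ring
    have hsecond : E.ζ ^ ((p - 1) * i) * E.ζ ^ (4 * i * (q + 1 + t)) =
        ((E.ζ ^ i) ^ p) ^ 2 * ((E.ζ ^ i) ^ 2) ^ (2 * t) := by
      simp only [← pow_mul, ← pow_add]
      congr 1
      rw [hq, show 4 * q + 3 - 1 = 4 * q + 2 by omega]
      ring
    rw [twoCos, add_mul, hfirst, hsecond, hζi]
    ring
  rw [sum_congr rfl fun t _ => hterm t, sum_range_pow_two_mul_add_pow,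
    show 2 * (3 * q + 3 - (q + 1)) = p + 1 by omega, sum_range_succ,
    hprim.geom_sum_eq_zero E.prime.one_lt, hprim.pow_eq_one, zero_add]

/-- The unit `2 cos (2 π 2 ^ l / p)`. -/
def twoCosUnit [IsDomain R] (hp : p % 4 = 3) (l : ℕ) : Rˣ :=
  Units.mkOfMulEqOne (E.twoCos (2 ^ l)) (E.twoCosInv (2 ^ l))
    (E.twoCos_mul_twoCosInv hp (E.coprime_two.symm.pow_left l))

theorem coe_twoCosUnit [IsDomain R] (hp : p % 4 = 3) (l : ℕ) :
    (E.twoCosUnit hp l : R) = E.twoCos (2 ^ l) := rfl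

theorem twoCosUnit_succ [IsDomain R] (hp : p % 4 = 3) (l : ℕ) :
    (E.twoCosUnit hp (l + 1) : R) =
      (E.twoCosUnit hp l : R) ^ 2 * (1 - 2 * E.twoCosInv (2 ^ l) ^ 2) := by
  have hinv := E.twoCos_mul_twoCosInv hp (E.coprime_two.symm.pow_left l)
  rw [coe_twoCosUnit, coe_twoCosUnit, pow_succ', twoCos_two_mul]
  linear_combination (2 * E.twoCos (2 ^ l) * E.twoCosInv (2 ^ l) + 2) * hinv

theorem not_two_dvd_one (E : CyclotomicModel p h R) : ¬ (2 : R) ∣ 1 := by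
  have hp := E.prime.two_le
  intro hdvd
  have hsum : ∑ j ∈ range p, (((if j = 0 then 1 else 0 : ℤ)) : R) * E.ζ ^ j = 1 := by
    rw [sum_eq_single_of_mem 0 (mem_range.2 (by omega)) fun j _ hj => by simp [hj]]
    simp
  have := E.two_dvd_sub_of_two_dvd_sum (fun j => if j = 0 then 1 else 0) (hsum ▸ hdvd) 0 (by omega)
  rw [if_pos rfl, if_neg (by omega)] at this
  norm_num at this

-- Modulo `2` the map `x ↦ x ^ 2 ^ (p - 1)` is a ring endomorphism fixing the generator `ζ`.
theorem two_dvd_pow_two_pow_sub (E : CyclotomicModel p h R) (x : R) :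
    (2 : R) ∣ x ^ 2 ^ (p - 1) - x := by
  let I : Ideal R := Ideal.span {2}
  have hI : Nontrivial (R ⧸ I) := by
    rw [Ideal.Quotient.nontrivial_iff, Ne, Ideal.span_singleton_eq_top]
    exact fun hunit => E.not_two_dvd_one hunit.dvd
  have hchar : CharP (R ⧸ I) 2 := by
    refine CharTwo.of_one_ne_zero_of_two_eq_zero one_ne_zero ?_
    rw [← map_ofNat (Ideal.Quotient.mk I), Ideal.Quotient.eq_zero_iff_mem]
    exact Ideal.mem_span_singleton_self _
  have : Fact (Nat.Prime 2) := ⟨Nat.prime_two⟩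
  have hmap : ∀ (φ : R →+* R ⧸ I) (f : Polynomial ℤ), φ (Polynomial.aeval E.ζ f) =
      Polynomial.eval₂ (Int.castRingHom _) (φ E.ζ) f := by
    intro φ f
    rw [Polynomial.aeval_def, Polynomial.hom_eval₂]
    congr 1
    exact RingHom.ext_int _ _
  have hζ : E.ζ ^ 2 ^ (p - 1) = E.ζ := by
    have hmod : 2 ^ (p - 1) ≡ 1 [MOD p] :=
      Nat.totient_prime E.prime ▸ Nat.ModEq.pow_totient E.coprime_two.symm
    rw [pow_eq_pow_mod _ E.isPrimitiveRoot.pow_eq_one, hmod,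
      ← pow_eq_pow_mod _ E.isPrimitiveRoot.pow_eq_one, pow_one]
  have hfix : iterateFrobenius (R ⧸ I) 2 (p - 1) (Ideal.Quotient.mk I x) =
      Ideal.Quotient.mk I x := by
    obtain ⟨f, rfl⟩ := E.exists_eq_aeval x
    have hcomp := hmap ((iterateFrobenius (R ⧸ I) 2 (p - 1)).comp (Ideal.Quotient.mk I)) f
    rw [RingHom.comp_apply] at hcomp
    rw [hcomp, hmap, RingHom.comp_apply, iterateFrobenius_def, ← map_pow, hζ]
  rw [iterateFrobenius_def, ← map_pow] at hfix
  exact Ideal.mem_span_singleton.1 (Ideal.Quotient.eq.1 hfix)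

theorem two_dvd_of_two_dvd_pow (E : CyclotomicModel p h R) {x : R} {s : ℕ}
    (hx : (2 : R) ∣ x ^ s) : (2 : R) ∣ x := by
  have hfrob : ∀ k : ℕ, (2 : R) ∣ x ^ (2 ^ (p - 1)) ^ k - x := by
    intro k
    induction k with
    | zero => simp
    | succ k ih =>
      have := E.two_dvd_pow_two_pow_sub (x ^ (2 ^ (p - 1)) ^ k)
      rw [← pow_mul, ← pow_succ] at this
      simpa using dvd_add this ih
  have hp := E.prime.two_le
  have hs : s ≤ (2 ^ (p - 1)) ^ s := (Nat.lt_pow_self (Nat.one_lt_two_pow (by omega))).le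
  simpa using dvd_sub (hx.trans (pow_dvd_pow x hs)) (hfrob s)

theorem two_dvd_sub_one_of_pow_two_pow (E : CyclotomicModel p h R) {e : R} {s : ℕ}
    (he : (2 : R) ∣ e ^ 2 ^ s - 1) : (2 : R) ∣ e - 1 := by
  refine E.two_dvd_of_two_dvd_pow (s := 2 ^ s) ?_
  simpa using dvd_add (two_dvd_sub_one_pow_two_pow_sub e s) he

theorem exists_eq_one_add_two_mul_of_four_dvd {e : R}
    (he : (4 : R) ∣ e - 1 ∨ (4 : R) ∣ e + 1) :
    ∃ z, e = 1 + 2 * z ∧ (2 : R) ∣ z + z ^ 2 := by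
  rcases he with ⟨v, hv⟩ | ⟨v, hv⟩
  · exact ⟨2 * v, by linear_combination hv, v + 2 * v ^ 2, by ring⟩
  · exact ⟨2 * v - 1, by linear_combination hv, 2 * v ^ 2 - v, by ring⟩

theorem two_dvd_card_filter_sub_card_filter {ι : Type*} (s : Finset ι) (g : ι → ℕ)
    (hs : (2 : R) ∣ ∑ x ∈ s, E.ζ ^ g x) {i j : ℕ} (hi : i < p) (hj : j < p) :
    (2 : ℤ) ∣ (#{x ∈ s | g x % p = i} : ℤ) - #{x ∈ s | g x % p = j} := by
  have hsum : ∑ x ∈ s, E.ζ ^ g x =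
      ∑ j ∈ range p, ((#{x ∈ s | g x % p = j} : ℤ) : R) * E.ζ ^ j := by
    rw [← sum_fiberwise_of_maps_to (t := range p) (g := fun x => g x % p)
      fun x _ => mem_range.2 (Nat.mod_lt _ E.prime.pos)]
    refine sum_congr rfl fun j _ => ?_
    rw [sum_congr rfl (g := fun _ => E.ζ ^ j) fun x hx => by
      rw [pow_eq_pow_mod _ E.isPrimitiveRoot.pow_eq_one, (mem_filter.1 hx).2], sum_const,
      nsmul_eq_mul, Int.cast_natCast]
  rw [hsum] at hs
  have hparity := E.two_dvd_sub_of_two_dvd_sum (fun j => #{x ∈ s | g x % p = j}) hs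
  simpa using dvd_sub (hparity i hi) (hparity j hj)

variable [IsDomain R] [CharZero R]

theorem exists_eq_one_add_two_mul_of_pow_two_pow (E : CyclotomicModel p h R) {e : R} {s : ℕ}
    (he : (2 : R) ^ (s + 2) ∣ e ^ 2 ^ s - 1 ∨ (2 : R) ^ (s + 2) ∣ e ^ 2 ^ s + 1) :
    ∃ z, e = 1 + 2 * z ∧ (2 : R) ∣ z + z ^ 2 := by
  obtain _ | t := s
  · refine exists_eq_one_add_two_mul_of_four_dvd ?_
    norm_num at he
    exact he
  have htwo : (2 : R) ∣ e ^ 2 ^ (t + 1) - 1 := by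
    have hdvd : (2 : R) ∣ 2 ^ (t + 1 + 2) := dvd_pow_self _ (by omega)
    rcases he with he | he
    · exact hdvd.trans he
    · convert dvd_sub (hdvd.trans he) (dvd_refl (2 : R)) using 1
      ring
  obtain ⟨z, hz⟩ := E.two_dvd_sub_one_of_pow_two_pow htwo
  rw [sub_eq_iff_eq_add'] at hz
  obtain ⟨g, hg⟩ := exists_one_add_four_mul_pow_two_pow (z + z ^ 2) t
  have hexpand : e ^ 2 ^ (t + 1) = 1 + 2 ^ (t + 2) * (z + z ^ 2 + 2 * g) := by
    rw [← hg, pow_succ', pow_mul, hz]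
    ring
  refine ⟨z, hz, ?_⟩
  rcases he with ⟨v, hv⟩ | ⟨v, hv⟩ <;> rw [hexpand] at hv
  · refine ⟨v - g, mul_left_cancel₀ (pow_ne_zero (t + 2) (two_ne_zero (α := R))) ?_⟩
    linear_combination hv
  · refine absurd ⟨2 ^ (t + 1) * v - 2 ^ t * (z + z ^ 2 + 2 * g),
      mul_left_cancel₀ (two_ne_zero (α := R)) ?_⟩ E.not_two_dvd_one
    linear_combination hv

end CyclotomicModel

namespace CyclotomicModel

open Finset

variable {p h : ℕ} {R : Type*} [CommRing R] (E : CyclotomicModel p h R)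

-- Modulo `p`, the exponent `2 ^ (d + 3 + min J)` occurs exactly once and `0` does not occur.
theorem not_two_dvd_sum_ζ_pow (hp : p % 4 = 3) {d : ℕ} (hd : 2 ^ (d + 1) < p)
    (hd' : p < 2 ^ (d + 2)) {J : Finset (Fin d)} (hJ : J.Nonempty) :
    ¬ (2 : R) ∣ ∑ x ∈ J ×ˢ Ico (p / 4 + 1) (3 * (p / 4) + 3) ×ˢ range 2,
      E.ζ ^ (2 ^ ((x.1 : ℕ) + 3 + x.2.2) * x.2.1) := by
  intro hdvd
  have hpd : 2 ^ (d + 2) = 4 * 2 ^ d := by ring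
  set S := J ×ˢ Ico (p / 4 + 1) (3 * (p / 4) + 3) ×ˢ range 2
  have hone : {x ∈ S | 2 ^ ((x.1 : ℕ) + 3 + x.2.2) * x.2.1 % p =
      2 ^ (d + 3 + (J.min' hJ : ℕ)) % p} = {(J.min' hJ, 2 ^ d, 0)} := by
    ext ⟨l, c, k⟩
    simp only [S, mem_filter, mem_product, mem_Ico, mem_range, mem_singleton, Prod.mk.injEq]
    constructor
    · rintro ⟨⟨hl, hc, hk⟩, hmod⟩
      rw [← Fin.val_inj]
      exact (two_pow_mul_modEq_two_pow_iff E.coprime_two hd (J.min'_le l hl) l.2 hk (by omega)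
        (by omega)).1 hmod
    · rintro ⟨rfl, rfl, rfl⟩
      exact ⟨⟨J.min'_mem hJ, by omega, two_pos⟩, (two_pow_mul_modEq_two_pow_iff E.coprime_two hd
        le_rfl (J.min' hJ).2 two_pos (by omega) (by omega)).2 ⟨rfl, rfl, rfl⟩⟩
  have hnone : {x ∈ S | 2 ^ ((x.1 : ℕ) + 3 + x.2.2) * x.2.1 % p = 0} = ∅ := by
    refine filter_eq_empty_iff.2 ?_
    rintro ⟨l, c, k⟩ hx hmod
    simp only [S, mem_product, mem_Ico] at hx
    have hdvd : p ∣ c :=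
      (E.coprime_two.pow_right _).dvd_of_dvd_mul_left (Nat.dvd_of_mod_eq_zero hmod)
    exact absurd (Nat.le_of_dvd (by omega) hdvd) (by omega)
  have hparity := E.two_dvd_card_filter_sub_card_filter _ _ hdvd
    (Nat.mod_lt (2 ^ (d + 3 + (J.min' hJ : ℕ))) E.prime.pos) E.prime.pos
  rw [hone, hnone] at hparity
  norm_num at hparity

theorem two_dvd_sum_ζ_pow_sub (l : ℕ) :
    (2 : R) ∣ ∑ x ∈ Ico (p / 4 + 1) (3 * (p / 4) + 3) ×ˢ range 2, E.ζ ^ (2 ^ (l + 3 + x.2) * x.1) -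
      (E.twoCosInv (2 ^ (l + 1)) + E.twoCosInv (2 ^ (l + 1)) ^ 2) := by
  obtain ⟨k, hk⟩ := two_dvd_sum_sq_sub (Ico (p / 4 + 1) (3 * (p / 4) + 3))
    fun c => E.ζ ^ (4 * 2 ^ (l + 1) * c)
  rw [← twoCosInv] at hk
  have hexp : ∀ c, 2 ^ (l + 3) * c = 4 * 2 ^ (l + 1) * c := fun c => by ring
  have hexp' : ∀ c, 2 ^ (l + 3 + 1) * c = 4 * 2 ^ (l + 1) * c * 2 := fun c => by ring
  simp only [sum_product, sum_range_succ, sum_range_zero, zero_add, add_zero, sum_add_distrib,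
    hexp, hexp', pow_mul _ _ 2]
  rw [← twoCosInv]
  exact ⟨-k, by linear_combination -hk⟩

theorem not_two_dvd_sum_twoCosInv (hp : p % 4 = 3) {d : ℕ} (hd : 2 ^ (d + 1) < p)
    (hd' : p < 2 ^ (d + 2)) {J : Finset (Fin d)} (hJ : J.Nonempty) :
    ¬ (2 : R) ∣ ∑ l ∈ J, E.twoCosInv (2 ^ ((l : ℕ) + 1)) +
      ∑ l ∈ J, E.twoCosInv (2 ^ ((l : ℕ) + 1)) ^ 2 := by
  intro hdvd
  refine E.not_two_dvd_sum_ζ_pow hp hd hd' hJ ?_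
  have hterms := dvd_sum (s := J) fun l _ => E.two_dvd_sum_ζ_pow_sub (l : ℕ)
  rw [sum_sub_distrib, sum_add_distrib] at hterms
  rw [sum_product]
  simpa using dvd_add hterms hdvd

variable [IsDomain R] [CharZero R]

theorem exists_eq_neg_add_two_mul_of_sq_mul_eq (E : CyclotomicModel p h R) {ε s g z : R}
    (hε : ε ^ 2 * (1 - 2 * s + 4 * g) = 1 + 2 * z) : ∃ g', z = -s + 2 * g' := by
  obtain ⟨y, hy⟩ : (2 : R) ∣ ε - 1 := by
    refine E.two_dvd_of_two_dvd_pow (s := 2) ⟨z + ε ^ 2 * s - 2 * ε ^ 2 * g - ε + 1, ?_⟩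
    linear_combination hε
  rw [sub_eq_iff_eq_add'] at hy
  refine ⟨(y + y ^ 2) * (1 - 2 * s + 4 * g) + g, mul_left_cancel₀ (two_ne_zero (α := R)) ?_⟩
  rw [hy] at hε
  linear_combination -hε

theorem two_dvd_of_prod_twoCosUnit_zpow_eq (hp : p % 4 = 3) {d : ℕ} (hd : 2 ^ (d + 1) < p)
    (hd' : p < 2 ^ (d + 2)) {b : Fin d → ℤ} {z : R}
    (hz : ((∏ l : Fin d, E.twoCosUnit hp (l + 2) ^ b l : Rˣ) : R) = 1 + 2 * z)
    (hz2 : (2 : R) ∣ z + z ^ 2) (l : Fin d) : 2 ∣ b l := by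
  by_contra hl
  set J : Finset (Fin d) := {l | ¬ 2 ∣ b l}
  set N : Fin d → R := fun l => E.twoCosInv (2 ^ ((l : ℕ) + 1))
  have hJ : J.Nonempty := ⟨l, mem_filter.2 ⟨mem_univ l, hl⟩⟩
  obtain ⟨g, hg⟩ := exists_prod_one_sub_two_mul_eq J fun l => N l ^ 2
  set ε : Rˣ :=
    (∏ l : Fin d, E.twoCosUnit hp (l + 2) ^ (b l / 2)) * ∏ l ∈ J, E.twoCosUnit hp (l + 1)
  have hsquare : ((∏ l : Fin d, E.twoCosUnit hp (l + 2) ^ b l : Rˣ) : R) =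
      (ε : R) ^ 2 * ∏ l ∈ J, (1 - 2 * N l ^ 2) := by
    have hsucc : ((∏ l ∈ J, E.twoCosUnit hp (l + 2) : Rˣ) : R) =
        ((∏ l ∈ J, E.twoCosUnit hp (l + 1) : Rˣ) : R) ^ 2 * ∏ l ∈ J, (1 - 2 * N l ^ 2) := by
      simp only [Units.coe_prod, ← prod_pow, ← prod_mul_distrib]
      exact prod_congr rfl fun l _ => E.twoCosUnit_succ hp (l + 1)
    rw [prod_zpow_eq_sq_mul_prod_odd, Units.val_mul, Units.val_pow_eq_pow_val, hsucc,
      Units.val_mul]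
    ring
  rw [hsquare, hg] at hz
  obtain ⟨g', rfl⟩ := E.exists_eq_neg_add_two_mul_of_sq_mul_eq hz
  refine E.not_two_dvd_sum_twoCosInv hp hd hd' hJ (E.two_dvd_of_two_dvd_pow (s := 2) ?_)
  obtain ⟨k, hk⟩ := two_dvd_sum_sq_sub J N
  obtain ⟨k', hk'⟩ := hz2
  set A := ∑ l ∈ J, N l
  set B := ∑ l ∈ J, N l ^ 2
  exact ⟨k + k' + B + A * B - g' - 2 * g' ^ 2 + 2 * B * g', by linear_combination hk + hk'⟩

theorem two_pow_dvd_of_prod_twoCosUnit_zpow (hp : p % 4 = 3) {d : ℕ} (hd : 2 ^ (d + 1) < p)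
    (hd' : p < 2 ^ (d + 2)) {c : Fin d → ℤ} {s : ℕ}
    (hc : (2 : R) ^ (s + 1) ∣ (∏ l : Fin d, E.twoCosUnit hp (l + 2) ^ c l : Rˣ) - 1 ∨
      (2 : R) ^ (s + 1) ∣ (∏ l : Fin d, E.twoCosUnit hp (l + 2) ^ c l : Rˣ) + 1) (l : Fin d) :
    (2 : ℤ) ^ s ∣ c l := by
  induction s generalizing l with
  | zero => simp
  | succ s ih =>
    have hdvd : (2 : R) ^ (s + 1) ∣ 2 ^ (s + 1 + 1) := pow_dvd_pow _ (Nat.le_succ _)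
    choose b hb using ih (hc.imp hdvd.trans hdvd.trans)
    have hpow : ((∏ l : Fin d, E.twoCosUnit hp (l + 2) ^ c l : Rˣ) : R) =
        (∏ l : Fin d, E.twoCosUnit hp (l + 2) ^ b l : Rˣ) ^ 2 ^ s := by
      rw [← Units.val_pow_eq_pow_val, ← prod_pow]
      congr 1
      refine prod_congr rfl fun l _ => ?_
      rw [← zpow_natCast, ← zpow_mul, hb l, mul_comm, Nat.cast_pow, Nat.cast_ofNat]
    rw [hpow] at hc
    obtain ⟨z, hz, hz2⟩ := E.exists_eq_one_add_two_mul_of_pow_two_pow hc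
    rw [hb l, pow_succ]
    exact mul_dvd_mul_left _ (E.two_dvd_of_prod_twoCosUnit_zpow_eq hp hd hd' hz hz2 l)

theorem eq_zero_of_prod_twoCosUnit_zpow (hp : p % 4 = 3) {d : ℕ} (hd : 2 ^ (d + 1) < p)
    (hd' : p < 2 ^ (d + 2)) {s : ℕ} {c : Fin d → ℤ} (hc : ∀ l, |c l| < 2 ^ s)
    (hprod : (2 : R) ^ (s + 1) ∣ (∏ l : Fin d, E.twoCosUnit hp (l + 2) ^ c l : Rˣ) - 1 ∨
      (2 : R) ^ (s + 1) ∣ (∏ l : Fin d, E.twoCosUnit hp (l + 2) ^ c l : Rˣ) + 1) : c = 0 :=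
  funext fun l => Int.eq_zero_of_abs_lt_dvd
    (E.two_pow_dvd_of_prod_twoCosUnit_zpow hp hd hd' hprod l) (hc l)

end CyclotomicModel

/-! ### The conjugates of `T - u * (2 - ζ ^ i - ζ ^ (-i))` -/

section FourSinSq

/-- The real number `4 sin² (π m / n) = 2 - 2 cos (2 π m / n)`; these are the conjugates of
`2 - ζ ^ i - ζ ^ (-i)` for a primitive `n`-th root of unity `ζ`. -/
noncomputable def fourSinSq (n : ℕ) (m : ℤ) : ℝ := 4 * Real.sin (Real.pi * m / n) ^ 2

theorem fourSinSq_nonneg (n : ℕ) (m : ℤ) : 0 ≤ fourSinSq n m := by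
  unfold fourSinSq; positivity

theorem fourSinSq_le_four (n : ℕ) (m : ℤ) : fourSinSq n m ≤ 4 := by
  unfold fourSinSq; linarith [Real.sin_sq_le_one (Real.pi * m / n)]

theorem fourSinSq_neg (n : ℕ) (m : ℤ) : fourSinSq n (-m) = fourSinSq n m := by
  rw [fourSinSq, Int.cast_neg, mul_neg, neg_div, Real.sin_neg, neg_sq, ← fourSinSq]

theorem fourSinSq_add_mul {n : ℕ} (hn : 0 < n) (m k : ℤ) :
    fourSinSq n (m + n * k) = fourSinSq n m := by
  have harg : Real.pi * ((m + n * k : ℤ) : ℝ) / n = Real.pi * m / n + k * Real.pi := by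
    push_cast
    field_simp
  rw [fourSinSq, harg, Real.sin_add_int_mul_pi, mul_pow, ← zpow_natCast, ← zpow_mul, mul_comm k,
    Nat.cast_ofNat, zpow_mul, even_two.neg_one_zpow, one_zpow, one_mul, ← fourSinSq]

theorem sixteen_div_sq_le_fourSinSq {n : ℕ} (hn : 0 < n) {m : ℤ} (hm : ¬ (n : ℤ) ∣ m) :
    16 / (n : ℝ) ^ 2 ≤ fourSinSq n m := by
  have hlt := Int.bmod_le (x := m) hn
  have hge := Int.le_bmod (x := m) hn
  have hne : m.bmod n ≠ 0 := fun h0 => hm (Int.dvd_of_bmod_eq_zero h0)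
  rw [← Int.bmod_add_bdiv m n, fourSinSq_add_mul hn]
  obtain ⟨i, hi⟩ := Int.eq_nat_or_neg (m.bmod n)
  have hpos : fourSinSq n (m.bmod n) = fourSinSq n i := by
    rcases hi with hi | hi
    · rw [hi]
    · rw [hi, fourSinSq_neg]
  rw [hpos]
  exact sixteen_div_sq_le_four_mul_sin_sq (by omega) (by omega)

theorem sq_fourSinSq_sub (n : ℕ) (m k : ℤ) :
    (fourSinSq n m - fourSinSq n k) ^ 2 = fourSinSq n (m + k) * fourSinSq n (m - k) := by
  simp only [fourSinSq, Int.cast_add, Int.cast_sub, mul_add, mul_sub, add_div, sub_div,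
    Real.sin_add, Real.sin_sub]
  generalize Real.pi * m / n = x
  generalize Real.pi * k / n = y
  linear_combination 16 * (Real.sin x ^ 2 * Real.cos y ^ 2 -
    Real.cos x ^ 2 * Real.sin y ^ 2 + Real.sin x ^ 2 - Real.sin y ^ 2) *
    (Real.sin y ^ 2 * Real.sin_sq_add_cos_sq x - Real.sin x ^ 2 * Real.sin_sq_add_cos_sq y)

theorem sixteen_div_sq_le_abs_fourSinSq_sub {n : ℕ} (hn : 0 < n) {m k : ℤ}
    (hadd : ¬ (n : ℤ) ∣ m + k) (hsub : ¬ (n : ℤ) ∣ m - k) :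
    16 / (n : ℝ) ^ 2 ≤ |fourSinSq n m - fourSinSq n k| := by
  refine abs_le_of_sq_le_sq (b := |_|) ?_ (abs_nonneg _) |>.trans' (le_abs_self _)
  rw [sq_abs, sq_fourSinSq_sub, sq]
  exact mul_le_mul (sixteen_div_sq_le_fourSinSq hn hadd) (sixteen_div_sq_le_fourSinSq hn hsub)
    (by positivity) (fourSinSq_nonneg _ _)

end FourSinSq

-- Weighting `x i` by `c j - c i ≥ 0` and `y i` by `c i` would give `Λ * ∑ c j ≤ K * ∑ c j`.
theorem eq_zero_of_sum_mul_sub_eq_zero {ι : Type*} [Fintype ι] {x y c : ι → ℝ} {j : ι} {K Λ : ℝ}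
    (hKΛ : K < Λ) (hy : ∀ i, |y i| ≤ K) (hx : ∀ i ≠ j, Λ ≤ x i) (hx0 : ∑ i, x i = 0)
    (hc0 : ∑ i, c i = 0) (hmax : ∀ i, |c i| ≤ |c j|) (hrel : ∑ i, c i * (x i - y i) = 0) :
    c j = 0 := by
  wlog hpos : 0 ≤ c j generalizing c
  · refine neg_eq_zero.1 (this (c := -c) ?_ ?_ ?_ ?_) <;> simp [hc0, hmax, hrel, (not_le.1 hpos).le]
  simp only [abs_of_nonneg hpos] at hmax
  have hupper : ∑ i, (c j - c i) * Λ ≤ ∑ i, (c j - c i) * x i := by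
    refine Finset.sum_le_sum fun i _ => ?_
    obtain rfl | hij := eq_or_ne i j
    · simp
    · exact mul_le_mul_of_nonneg_left (hx i hij) (sub_nonneg.2 ((le_abs_self _).trans (hmax i)))
  have hlower : ∑ i, -(c i * y i) ≤ ∑ _i : ι, c j * K := by
    refine Finset.sum_le_sum fun i _ => (neg_le_abs _).trans ?_
    rw [abs_mul]
    exact mul_le_mul (hmax i) (hy i) (abs_nonneg _) hpos
  have hswap : ∑ i, (c j - c i) * x i = ∑ i, -(c i * y i) := by
    simp only [mul_sub, sub_mul, Finset.sum_sub_distrib, Finset.sum_neg_distrib,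
      ← Finset.mul_sum, hx0] at hrel ⊢
    linarith
  rw [← Finset.sum_mul, Finset.sum_sub_distrib, hc0, sub_zero, Finset.sum_const, nsmul_eq_mul]
    at hupper
  rw [Finset.sum_const, nsmul_eq_mul] at hlower
  have hcard : (0 : ℝ) < (Finset.univ : Finset ι).card := by
    exact_mod_cast Finset.card_pos.2 ⟨j, Finset.mem_univ j⟩
  by_contra hne
  have hcj : 0 < (Finset.univ : Finset ι).card * c j := mul_pos hcard (hpos.lt_of_ne' hne)
  linarith [mul_lt_mul_of_pos_left hKΛ hcj]

namespace CyclotomicModel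

open Finset

variable {p h : ℕ} {R : Type*} [CommRing R] (E : CyclotomicModel p h R)

theorem three_le_prime (E : CyclotomicModel p h R) : (3 : ℝ) ≤ p := by
  have hp := E.eq_two_mul_add_one
  have hh := E.one_le_half
  exact_mod_cast (by omega : 3 ≤ p)

theorem not_dvd_mul (E : CyclotomicModel p h R) {a : ℕ} (ha : a ∈ Icc 1 h) {m : ℤ} (hm : m ≠ 0)
    (hmp : |m| < p) : ¬ (p : ℤ) ∣ a * m := by
  have hp := E.eq_two_mul_add_one
  rw [mem_Icc] at ha
  rw [(Nat.prime_iff_prime_int.1 E.prime).dvd_mul, not_or]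
  exact ⟨fun hdvd => absurd (Int.le_of_dvd (by omega) hdvd) (by omega),
    fun hdvd => hm (Int.eq_zero_of_abs_lt_dvd hdvd hmp)⟩

theorem sixteen_div_sq_le_fourSinSq_mul (E : CyclotomicModel p h R) {a : ℕ} (ha : a ∈ Icc 1 h)
    {i : ℕ} (hi : i ∈ Icc 1 h) : 16 / (p : ℝ) ^ 2 ≤ fourSinSq p (a * i) := by
  have hp := E.eq_two_mul_add_one
  rw [mem_Icc] at hi
  exact sixteen_div_sq_le_fourSinSq E.prime.pos
    (E.not_dvd_mul ha (by omega) (abs_lt.2 (by omega)))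

theorem σ_two_sub_twoCos {a : ℕ} (ha : a ∈ Icc 1 h) (i : ℕ) :
    E.σ a (2 - E.twoCos i) = (fourSinSq p (a * i) : ℂ) := by
  have hpow : E.σ a (E.ζ ^ i) =
      Complex.exp (2 * (Real.pi * ((a * i : ℤ) : ℝ) / p : ℝ) * Complex.I) := by
    rw [map_pow, E.σ_ζ a ha, ← pow_mul, ← Complex.exp_nat_mul]
    push_cast
    ring_nf
  have hinv : E.σ a (E.ζ ^ ((p - 1) * i)) =
      Complex.exp (-(2 * (Real.pi * ((a * i : ℤ) : ℝ) / p : ℝ)) * Complex.I) := by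
    rw [neg_mul, Complex.exp_neg, ← hpow]
    refine eq_inv_of_mul_eq_one_right ?_
    rw [← map_mul, E.ζ_pow_mul_ζ_pow, map_one]
  rw [twoCos, ← sub_sub, map_sub, map_sub, hpow, hinv, map_ofNat, two_sub_exp_sub_exp_neg]
  rfl

theorem exists_unit_mul_two_sub_twoCos_one [IsDomain R] {i : ℕ} (hi : i.Coprime p) :
    ∃ x : Rˣ, (x : R) * (2 - E.twoCos 1) = 2 - E.twoCos i := by
  have hη : IsPrimitiveRoot (E.ζ ^ (p - 1)) p :=
    E.isPrimitiveRoot.pow_of_coprime _ ((Nat.coprime_self_sub_left E.prime.one_le).2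
      (Nat.coprime_one_left p))
  have hunit := (E.isPrimitiveRoot.geom_sum_isUnit E.prime.two_le hi).mul
    (hη.geom_sum_isUnit E.prime.two_le hi)
  refine ⟨hunit.unit, ?_⟩
  have hgeom := geom_sum_mul E.ζ i
  have hgeom' := geom_sum_mul (E.ζ ^ (p - 1)) i
  have hinv := E.ζ_pow_mul_ζ_pow 1
  have hinvi := E.ζ_pow_mul_ζ_pow i
  rw [pow_mul] at hinvi
  rw [mul_one, pow_one] at hinv
  rw [IsUnit.unit_spec, twoCos, twoCos, mul_one, pow_one, pow_mul]
  linear_combination (E.ζ ^ (p - 1) - 1) * (∑ j ∈ range i, (E.ζ ^ (p - 1)) ^ j) * hgeom +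
    (E.ζ ^ i - 1) * hgeom' - (∑ j ∈ range i, E.ζ ^ j) * (∑ j ∈ range i, (E.ζ ^ (p - 1)) ^ j) * hinv
    + hinvi

theorem lehmerQuot_eq_prod_twoCos [IsDomain R] {T : R} (hT : T ≠ 0) (u : R) :
    lehmerQuot T u h = ∏ i : Icc 1 h, (T - u * (2 - E.twoCos i)) := by
  have hinv := E.ζ_pow_mul_ζ_pow 1
  rw [mul_one, pow_one] at hinv
  rw [lehmerQuot_eq_prod (E.eq_two_mul_add_one ▸ E.isPrimitiveRoot) hinv hT,
    ← prod_coe_sort (Icc 1 h)]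
  simp only [twoCos, pow_mul, sub_sub]

/-- The units produced by a factorization `∏ i, (T - u * (2 - twoCos i)) = 1`: its factors,
together with the cyclotomic units `(2 - twoCos i) / (2 - twoCos 1)`. -/
structure FactorUnits (E : CyclotomicModel p h R) (T u : ℤ) where
  factor : Icc 1 h → Rˣ
  ratio : Icc 1 h → Rˣ
  coe_factor : ∀ i, (factor i : R) = T - u * (2 - E.twoCos i)
  ratio_mul : ∀ i, (ratio i : R) * (2 - E.twoCos 1) = 2 - E.twoCos i
  prod_factor : ∏ i, factor i = 1

theorem nonempty_factorUnits [IsDomain R] [CharZero R] {T u : ℤ} (hT : T ≠ 0)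
    (hW : lehmerQuot T u h = 1) : Nonempty (E.FactorUnits T u) := by
  have hprod : ∏ i : Icc 1 h, ((T : R) - u * (2 - E.twoCos i)) = 1 := by
    rw [← E.lehmerQuot_eq_prod_twoCos (Int.cast_ne_zero.2 hT), ← intCast_lehmerQuot, hW,
      Int.cast_one]
  have hunit (i : Icc 1 h) : IsUnit ((T : R) - u * (2 - E.twoCos i)) :=
    isUnit_of_dvd_one (hprod ▸ dvd_prod_of_mem _ (mem_univ i))
  have hcoprime (i : Icc 1 h) : (i : ℕ).Coprime p := by
    have hi := mem_Icc.1 i.2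
    have hp := E.eq_two_mul_add_one
    exact (Nat.coprime_of_lt_prime (by omega) (by omega) E.prime).symm
  choose C hC using fun i => E.exists_unit_mul_two_sub_twoCos_one (hcoprime i)
  refine ⟨⟨fun i => (hunit i).unit, C, fun i => (hunit i).unit_spec, hC, Units.ext ?_⟩⟩
  rw [Units.coe_prod, Units.val_one, ← hprod]
  rfl

end CyclotomicModel

theorem map_prod_zpow_eq_one_of_forall_map_eq {G H ι : Type*} [CommGroup G] [CommGroup H]
    [Fintype ι] (φ : G →* H) {g : ι → G} {q : H} (hg : ∀ i, φ (g i) = q) {b : ι → ℤ}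
    (hb : ∑ i, b i = 0) : φ (∏ i, g i ^ b i) = 1 := by
  simp only [map_prod, map_zpow, hg]
  simpa [← ofAdd_sum, hb] using
    (map_prod (zpowersHom H q) (fun i => Multiplicative.ofAdd (b i)) Finset.univ).symm

theorem log_sq_div_four_lt_log {n u : ℝ} (hn : 0 < n) (hu : n ^ 4 ≤ u) :
    Real.log (n ^ 2 / 4) < Real.log (8 * u / n ^ 2) := by
  refine Real.log_lt_log (by positivity) ?_
  rw [lt_div_iff₀ (by positivity)]
  linarith [pow_pos hn 4, show n ^ 2 / 4 * n ^ 2 = n ^ 4 / 4 by ring]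

namespace CyclotomicModel.FactorUnits

open Finset

variable {p h : ℕ} {R : Type*} [CommRing R] {E : CyclotomicModel p h R} {T u : ℤ}
  (S : E.FactorUnits T u)

/-- The units `factor i / ratio i`, all congruent to `-u * (2 - twoCos 1)` modulo `T`. -/
def quot (i : Icc 1 h) : Rˣ := S.factor i * (S.ratio i)⁻¹

theorem coe_quot (i : Icc 1 h) :
    (S.quot i : R) = T * ((S.ratio i)⁻¹ : Rˣ) - u * (2 - E.twoCos 1) := by
  rw [quot, Units.val_mul, S.coe_factor, ← S.ratio_mul]
  linear_combination (-u * (2 - E.twoCos 1) : R) * (S.ratio i).mul_inv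

theorem intCast_dvd_prod_quot_zpow_sub_one {b : Icc 1 h → ℤ} (hb : ∑ i, b i = 0) :
    (T : R) ∣ (∏ i, S.quot i ^ b i : Rˣ) - 1 := by
  let φ : Rˣ →* (R ⧸ Ideal.span {(T : R)})ˣ :=
    Units.map (Ideal.Quotient.mk (Ideal.span {(T : R)}) : R →* _)
  have hφ (x y : Rˣ) : φ x = φ y ↔ (T : R) ∣ (x : R) - y := by
    rw [← Ideal.mem_span_singleton, ← Ideal.Quotient.eq, Units.ext_iff]
    rfl
  have hquot (i : Icc 1 h) : φ (S.quot i) = φ (S.quot ⟨1, mem_Icc.2 ⟨le_rfl, E.one_le_half⟩⟩) := by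
    rw [hφ, coe_quot, coe_quot, sub_sub_sub_cancel_right, ← mul_sub]
    exact dvd_mul_right _ _
  refine (hφ _ 1).1 ?_
  rw [map_one]
  exact map_prod_zpow_eq_one_of_forall_map_eq φ hquot hb

theorem σ_factor {a : ℕ} (ha : a ∈ Icc 1 h) (i : Icc 1 h) :
    E.σ a (S.factor i) = ((T - u * fourSinSq p (a * i) : ℝ) : ℂ) := by
  rw [S.coe_factor, map_sub, map_mul, E.σ_two_sub_twoCos ha, map_intCast, map_intCast]
  push_cast
  rfl

theorem σ_ratio {a : ℕ} (ha : a ∈ Icc 1 h) (i : Icc 1 h) :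
    E.σ a (S.ratio i) = ((fourSinSq p (a * i) / fourSinSq p (a * (1 : ℕ)) : ℝ) : ℂ) := by
  have hmul := congrArg (E.σ a) (S.ratio_mul i)
  rw [map_mul, E.σ_two_sub_twoCos ha, E.σ_two_sub_twoCos ha] at hmul
  have hpos : 0 < fourSinSq p (a * (1 : ℕ)) := by
    have hp := E.prime.pos
    refine lt_of_lt_of_le ?_ (E.sixteen_div_sq_le_fourSinSq_mul ha
      (mem_Icc.2 ⟨le_rfl, E.one_le_half⟩))
    positivity
  rw [Complex.ofReal_div, eq_div_iff (Complex.ofReal_ne_zero.2 hpos.ne'), hmul]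

theorem quot_mem_realUnits (i : Icc 1 h) : S.quot i ∈ E.realUnits :=
  mul_mem (fun _ ha => ⟨_, S.σ_factor ha i⟩) (inv_mem fun _ ha => ⟨_, S.σ_ratio ha i⟩)

theorem abs_logNorm_ratio_le {a : ℕ} (ha : a ∈ Icc 1 h) (i : Icc 1 h) :
    |E.logNorm a (S.ratio i)| ≤ Real.log ((p : ℝ) ^ 2 / 4) := by
  have hp : (0 : ℝ) < p := Nat.cast_pos.2 E.prime.pos
  have hx := E.sixteen_div_sq_le_fourSinSq_mul ha (mem_Icc.2 ⟨le_rfl, E.one_le_half⟩)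
  have hy := E.sixteen_div_sq_le_fourSinSq_mul ha i.2
  have hx' := fourSinSq_le_four p (a * (1 : ℕ))
  have hy' := fourSinSq_le_four p (a * i)
  rw [logNorm, S.σ_ratio ha, Complex.norm_real, Real.norm_eq_abs]
  generalize fourSinSq p (a * (1 : ℕ)) = x at *
  generalize fourSinSq p (a * i) = y at *
  have hratio {x y : ℝ} (hx : 16 / (p : ℝ) ^ 2 ≤ x) (hy : y ≤ 4) : y / x ≤ (p : ℝ) ^ 2 / 4 := by
    rw [div_le_iff₀ (lt_of_lt_of_le (by positivity) hx)]
    rw [div_le_iff₀ (by positivity)] at hx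
    linarith
  have hx0 : 0 < x := lt_of_lt_of_le (by positivity) hx
  have hy0 : 0 < y := lt_of_lt_of_le (by positivity) hy
  rw [abs_of_pos (div_pos hy0 hx0), abs_le, neg_le, ← Real.log_inv, inv_div]
  exact ⟨Real.log_le_log (div_pos hx0 hy0) (hratio hy hx'),
    Real.log_le_log (div_pos hy0 hx0) (hratio hx hy')⟩

theorem sum_logNorm_factor (a : ℕ) : ∑ i, E.logNorm a (S.factor i) = 0 := by
  rw [← E.logNorm_prod, S.prod_factor, logNorm, Units.val_one, map_one, norm_one, Real.log_one]

-- The conjugates of two factors differ by at least `16 u / p²`, so at most one can be small.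
theorem log_le_logNorm_factor (hu : (p : ℤ) ^ 4 ≤ u) {a : ℕ} (ha : a ∈ Icc 1 h) {i j : Icc 1 h}
    (hij : i ≠ j) (hj : ‖E.σ a (S.factor j)‖ ≤ 1) :
    Real.log (8 * u / (p : ℝ) ^ 2) ≤ E.logNorm a (S.factor i) := by
  have hp := E.three_le_prime
  have hph := E.eq_two_mul_add_one
  have hu' : (p : ℝ) ^ 4 ≤ u := by exact_mod_cast hu
  have hu0 : (0 : ℝ) < u := lt_of_lt_of_le (by positivity) hu'
  have hi' := mem_Icc.1 i.2
  have hj' := mem_Icc.1 j.2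
  have hij' : (i : ℕ) ≠ j := Subtype.coe_ne_coe.2 hij
  have hgap := sixteen_div_sq_le_abs_fourSinSq_sub E.prime.pos (m := a * i) (k := a * j)
    (by rw [← mul_add]; exact E.not_dvd_mul ha (by omega) (abs_lt.2 (by omega)))
    (by rw [← mul_sub]; exact E.not_dvd_mul ha (by omega) (abs_lt.2 (by omega)))
  refine Real.log_le_log (by positivity) ?_
  rw [S.σ_factor ha, Complex.norm_real, Real.norm_eq_abs] at hj ⊢
  generalize fourSinSq p (a * i) = x at *
  generalize fourSinSq p (a * j) = y at *
  have hdiff : u * |x - y| ≤ |T - u * x| + 1 := calc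
    u * |x - y| = |(T - u * y) - (T - u * x)| := by
      rw [sub_sub_sub_cancel_left, ← mul_sub, abs_mul, abs_of_pos hu0]
    _ ≤ |T - u * y| + |T - u * x| := abs_sub _ _
    _ ≤ |T - u * x| + 1 := by linarith
  have hone : (1 : ℝ) ≤ 8 * u / (p : ℝ) ^ 2 := by
    rw [le_div_iff₀ (by positivity)]
    nlinarith [sq_nonneg ((p : ℝ) ^ 2 - 1)]
  have hmul := mul_le_mul_of_nonneg_left hgap hu0.le
  linarith [show u * (16 / (p : ℝ) ^ 2) = 2 * (8 * u / (p : ℝ) ^ 2) by ring]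

variable [Nontrivial R]

theorem exists_norm_σ_factor_le_one (i : Icc 1 h) : ∃ a ∈ Icc 1 h, ‖E.σ a (S.factor i)‖ ≤ 1 := by
  obtain ⟨a, ha, hle⟩ := exists_abs_le_of_abs_prod_le (s := Icc 1 h)
    ⟨1, mem_Icc.2 ⟨le_rfl, E.one_le_half⟩⟩ le_rfl (f := fun a => ‖E.σ a (S.factor i)‖) (by
      rw [abs_of_nonneg (prod_nonneg fun _ _ => norm_nonneg _)]
      exact E.prod_norm_unit_le_one _)
  exact ⟨a, ha, by rwa [abs_norm] at hle⟩

theorem intCast_le_four_mul_add_one (S : E.FactorUnits T u) (hu : 0 ≤ u) : (T : ℝ) ≤ 4 * u + 1 := by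
  have hu' : (0 : ℝ) ≤ u := Int.cast_nonneg hu
  obtain ⟨a, ha, hle⟩ := S.exists_norm_σ_factor_le_one ⟨1, mem_Icc.2 ⟨le_rfl, E.one_le_half⟩⟩
  rw [S.σ_factor ha, Complex.norm_real, Real.norm_eq_abs, abs_le] at hle
  linarith [mul_le_mul_of_nonneg_left (fourSinSq_le_four p (a * (1 : ℕ))) hu', hle.2]

theorem logNorm_factor_le (hT : 0 < T) (hu : 0 < u) {a : ℕ} (ha : a ∈ Icc 1 h) (i : Icc 1 h) :
    E.logNorm a (S.factor i) ≤ Real.log (5 * u) := by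
  refine Real.log_le_log (norm_pos_iff.2 (E.σ_unit_ne_zero a _)) ?_
  rw [S.σ_factor ha, Complex.norm_real, Real.norm_eq_abs, abs_le]
  have hT' : (0 : ℝ) < T := Int.cast_pos.2 hT
  have hu' : (1 : ℝ) ≤ u := by exact_mod_cast hu
  have hle := S.intCast_le_four_mul_add_one hu.le
  constructor <;> nlinarith [fourSinSq_nonneg p (a * i), fourSinSq_le_four p (a * i)]

theorem sum_abs_logNorm_quot_le (hT : 0 < T) (hu : (p : ℤ) ^ 4 ≤ u) {a : ℕ} (ha : a ∈ Icc 1 h) :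
    ∑ i, |E.logNorm a (S.quot i)| ≤ 3 * h * Real.log (5 * u) := by
  have hp := E.three_le_prime
  have hu' : (p : ℝ) ^ 4 ≤ u := by exact_mod_cast hu
  have hu0 : 0 < u := lt_of_lt_of_le (pow_pos (Int.natCast_pos.2 E.prime.pos) 4) hu
  have hlog : Real.log ((p : ℝ) ^ 2 / 4) ≤ Real.log (5 * u) := by
    refine Real.log_le_log (by positivity) ?_
    nlinarith [sq_nonneg ((p : ℝ) ^ 2 - 1)]
  have hterm (i : Icc 1 h) : |E.logNorm a (S.quot i)| ≤
      3 * Real.log (5 * u) - E.logNorm a (S.factor i) := by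
    have hratio := abs_le.1 ((S.abs_logNorm_ratio_le ha i).trans hlog)
    have hfactor := S.logNorm_factor_le hT hu0 ha i
    rw [quot, E.logNorm_mul, E.logNorm_inv, abs_le]
    constructor <;> linarith [hratio.1, hratio.2]
  refine (sum_le_sum fun i _ => hterm i).trans_eq ?_
  rw [sum_sub_distrib, S.sum_logNorm_factor, sum_const, card_univ, Fintype.card_coe, Nat.card_Icc,
    nsmul_eq_mul, Nat.add_sub_cancel]
  ring

theorem eq_zero_of_prod_quot_zpow (hu : (p : ℤ) ^ 4 ≤ u) {b : Icc 1 h → ℤ} (hb : ∑ i, b i = 0)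
    (hprod : ∏ i, S.quot i ^ b i = 1 ∨ ∏ i, S.quot i ^ b i = -1) : b = 0 := by
  obtain ⟨j, -, hmax⟩ := exists_max_image univ (fun i => |b i|)
    ⟨⟨1, mem_Icc.2 ⟨le_rfl, E.one_le_half⟩⟩, mem_univ _⟩
  obtain ⟨a, ha, hj⟩ := S.exists_norm_σ_factor_le_one j
  have hrel : ∑ i, (b i : ℝ) * (E.logNorm a (S.factor i) - E.logNorm a (S.ratio i)) = 0 := by
    have hlog : E.logNorm a (∏ i, S.quot i ^ b i) = 0 := by
      rcases hprod with hprod | hprod <;> rw [hprod] <;> simp [logNorm]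
    rw [E.logNorm_prod] at hlog
    simpa only [E.logNorm_zpow, quot, E.logNorm_mul, E.logNorm_inv, ← sub_eq_add_neg] using hlog
  have hbj : (b j : ℝ) = 0 := eq_zero_of_sum_mul_sub_eq_zero (c := fun i => (b i : ℝ))
    (log_sq_div_four_lt_log (Nat.cast_pos.2 E.prime.pos) (by exact_mod_cast hu))
    (S.abs_logNorm_ratio_le ha) (fun i hij => S.log_le_logNorm_factor hu ha hij hj)
    (S.sum_logNorm_factor a) (by exact_mod_cast hb)
    (fun i => by exact_mod_cast hmax i (mem_univ i)) hrel
  funext i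
  have hi := hmax i (mem_univ i)
  rwa [Int.cast_eq_zero.1 hbj, abs_zero, abs_nonpos_iff] at hi

end CyclotomicModel.FactorUnits

section Pigeonhole

open Finset

variable {ι κ τ : Type*} [Fintype ι] [Fintype κ] [Fintype τ]

theorem exists_ne_abs_sub_lt_one_of_card_lt {α : Type*} [Fintype α] {f : α → τ → ℝ} {L : ℝ}
    (hf : ∀ x t, |f x t| ≤ L) {m : ℕ} (g : α → Fin m)
    (hcard : m * (⌊2 * L⌋₊ + 1) ^ Fintype.card τ < Fintype.card α) :
    ∃ x y, x ≠ y ∧ g x = g y ∧ ∀ t, |f x t - f y t| < 1 := by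
  classical
  have hfloor (x : α) (t : τ) : ⌊f x t + L⌋₊ < ⌊2 * L⌋₊ + 1 :=
    Nat.lt_succ_of_le (Nat.floor_mono (by linarith [(abs_le.1 (hf x t)).2]))
  obtain ⟨x, y, hne, heq⟩ := Fintype.exists_ne_map_eq_of_card_lt
    (fun x => (g x, fun t => (⟨_, hfloor x t⟩ : Fin (⌊2 * L⌋₊ + 1)))) (by simpa using hcard)
  rw [Prod.mk.injEq] at heq
  refine ⟨x, y, hne, heq.1, fun t => ?_⟩
  have hfl : ⌊f x t + L⌋₊ = ⌊f y t + L⌋₊ := congrArg Fin.val (congrFun heq.2 t)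
  have hx := Nat.floor_le (a := f x t + L) (by linarith [(abs_le.1 (hf x t)).1])
  have hy := Nat.floor_le (a := f y t + L) (by linarith [(abs_le.1 (hf y t)).1])
  have hx' := Nat.lt_floor_add_one (f x t + L)
  have hy' := Nat.lt_floor_add_one (f y t + L)
  rw [hfl] at hx hx'
  rw [abs_lt]
  constructor <;> linarith

theorem abs_sum_natCast_mul_le {n : ℕ} (a : ι → Fin n) (x : ι → ℝ) :
    |∑ i, (a i : ℝ) * x i| ≤ n * ∑ i, |x i| := by
  rw [mul_sum]
  refine (abs_sum_le_sum_abs _ _).trans (sum_le_sum fun i _ => ?_)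
  rw [abs_mul, Nat.abs_cast]
  exact mul_le_mul_of_nonneg_right (by exact_mod_cast (a i).2.le) (abs_nonneg _)

theorem sum_natCast_lt [Nonempty κ] {n : ℕ} (a : κ → Fin n) :
    ∑ i, (a i : ℕ) < Fintype.card κ * n := by
  simpa using sum_lt_sum_of_nonempty univ_nonempty fun i _ => (a i).2

/- The second box has side `B` so large that the first family contributes less than `B` to the range
of the forms: the powers of `B` then cancel in the count, as `κ → Fin B` is as large as the set of
values of the sum together with the `τ` forms. -/
theorem exists_ne_sum_eq_abs_sub_lt_one (w : τ → ι → ℝ) {v : τ → κ → ℝ} {A : ℕ} {Y : ℝ}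
    (hY : 0 ≤ Y) (hv : ∀ t, ∑ i, |v t i| ≤ Y) (hκ : Fintype.card κ = Fintype.card τ + 1)
    (hcount : Fintype.card κ * (2 * Y + 1) ^ Fintype.card τ < (A : ℝ) ^ Fintype.card ι) :
    ∃ (B : ℕ) (x y : (ι → Fin A) × (κ → Fin B)), x ≠ y ∧
      ∑ i, (x.2 i : ℕ) = ∑ i, (y.2 i : ℕ) ∧
      ∀ t, |(∑ l, (x.1 l : ℝ) * w t l + ∑ i, (x.2 i : ℝ) * v t i) -
        (∑ l, (y.1 l : ℝ) * w t l + ∑ i, (y.2 i : ℝ) * v t i)| < 1 := by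
  classical
  have : Nonempty κ := Fintype.card_pos_iff.1 (by omega)
  set X : ℝ := ∑ t, ∑ l, |w t l|
  have hX0 : 0 ≤ X := sum_nonneg fun _ _ => sum_nonneg fun _ _ => abs_nonneg _
  have hw (t : τ) : ∑ l, |w t l| ≤ X :=
    single_le_sum (f := fun t => ∑ l, |w t l|)
      (fun _ _ => sum_nonneg fun _ _ => abs_nonneg _) (mem_univ t)
  obtain ⟨B, hB⟩ := exists_nat_ge (2 * (A * X) + 1)
  have hB0 : (0 : ℝ) < B := by linarith [mul_nonneg A.cast_nonneg (α := ℝ) hX0]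
  have hbound (x : (ι → Fin A) × (κ → Fin B)) (t : τ) :
      |∑ l, (x.1 l : ℝ) * w t l + ∑ i, (x.2 i : ℝ) * v t i| ≤ A * X + B * Y :=
    (abs_add_le _ _).trans (add_le_add
      ((abs_sum_natCast_mul_le x.1 (w t)).trans (mul_le_mul_of_nonneg_left (hw t) A.cast_nonneg))
      ((abs_sum_natCast_mul_le x.2 (v t)).trans (mul_le_mul_of_nonneg_left (hv t) B.cast_nonneg)))
  have hM : (⌊2 * (A * X + B * Y)⌋₊ + 1 : ℝ) ≤ B * (2 * Y + 1) := by
    have := Nat.floor_le (a := 2 * (A * X + B * Y)) (by positivity)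
    linarith
  have hcard : Fintype.card κ * B * (⌊2 * (A * X + B * Y)⌋₊ + 1) ^ Fintype.card τ <
      Fintype.card ((ι → Fin A) × (κ → Fin B)) := by
    rw [Fintype.card_prod, Fintype.card_fun, Fintype.card_fun, Fintype.card_fin, Fintype.card_fin,
      ← Nat.cast_lt (α := ℝ)]
    push_cast
    calc _ ≤ (Fintype.card κ * B : ℝ) * (B * (2 * Y + 1)) ^ Fintype.card τ := by gcongr
      _ = (Fintype.card κ * (2 * Y + 1) ^ Fintype.card τ) * B ^ Fintype.card κ := by
        rw [mul_pow, hκ]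
        ring
      _ < _ := mul_lt_mul_of_pos_right hcount (by positivity)
  obtain ⟨x, y, hne, hsum, hlt⟩ := exists_ne_abs_sub_lt_one_of_card_lt hbound
    (fun x => ⟨_, sum_natCast_lt x.2⟩) hcard
  exact ⟨B, x, y, hne, congrArg Fin.val hsum, hlt⟩

theorem exists_ne_zero_abs_sum_mul_add_sum_mul_lt_one (w : τ → ι → ℝ) {v : τ → κ → ℝ} {A : ℕ}
    {Y : ℝ} (hY : 0 ≤ Y) (hv : ∀ t, ∑ i, |v t i| ≤ Y)
    (hκ : Fintype.card κ = Fintype.card τ + 1)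
    (hcount : Fintype.card κ * (2 * Y + 1) ^ Fintype.card τ < (A : ℝ) ^ Fintype.card ι) :
    ∃ (c : ι → ℤ) (b : κ → ℤ), (c = 0 → b ≠ 0) ∧ (∀ l, |c l| < A) ∧ ∑ i, b i = 0 ∧
      ∀ t, |∑ l, (c l : ℝ) * w t l + ∑ i, (b i : ℝ) * v t i| < 1 := by
  obtain ⟨B, x, y, hne, hsum, hlt⟩ := exists_ne_sum_eq_abs_sub_lt_one w hY hv hκ hcount
  refine ⟨fun l => (x.1 l : ℤ) - y.1 l, fun i => (x.2 i : ℤ) - y.2 i, fun hc hb => hne ?_,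
    fun l => abs_sub_lt_of_nonneg_of_lt (by simp) (by simp) (by simp) (by simp), ?_, fun t => ?_⟩
  · refine Prod.ext (funext fun l => Fin.ext ?_) (funext fun i => Fin.ext ?_)
    · exact_mod_cast sub_eq_zero.1 (congrFun hc l)
    · exact_mod_cast sub_eq_zero.1 (congrFun hb i)
  · rw [sum_sub_distrib, sub_eq_zero]
    exact_mod_cast hsum
  · convert hlt t using 2
    push_cast
    simp only [sub_mul, sum_sub_distrib]
    ring

end Pigeonhole

namespace CyclotomicModel

open Finset

variable {p h : ℕ} {R : Type*} [CommRing R] [IsDomain R] {E : CyclotomicModel p h R}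

theorem twoCosUnit_mem_realUnits (hp : p % 4 = 3) (l : ℕ) : E.twoCosUnit hp l ∈ E.realUnits := by
  refine fun a ha => ⟨2 - fourSinSq p (a * (2 ^ l : ℕ)), ?_⟩
  have hσ := E.σ_two_sub_twoCos ha (2 ^ l)
  rw [map_sub, map_ofNat] at hσ
  rw [coe_twoCosUnit, Complex.ofReal_sub, ← hσ]
  simp

namespace FactorUnits

variable [CharZero R] {s d : ℕ} {u : ℤ}

theorem eq_zero_of_prod_twoCosUnit_mul_prod_quot (S : E.FactorUnits (2 ^ (s + 1)) u)
    (hp : p % 4 = 3) (hd : 2 ^ (d + 1) < p) (hd' : p < 2 ^ (d + 2)) (hu : (p : ℤ) ^ 4 ≤ u)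
    {c : Fin d → ℤ} (hc : ∀ l, |c l| < 2 ^ s) {b : Icc 1 h → ℤ} (hb : ∑ i, b i = 0)
    (hprod : (∏ l : Fin d, E.twoCosUnit hp (l + 2) ^ c l) * ∏ i, S.quot i ^ b i = 1 ∨
      (∏ l : Fin d, E.twoCosUnit hp (l + 2) ^ c l) * ∏ i, S.quot i ^ b i = -1) :
    c = 0 ∧ b = 0 := by
  have hdvd := (S.intCast_dvd_prod_quot_zpow_sub_one hb).mul_left
    (∏ l : Fin d, E.twoCosUnit hp (l + 2) ^ c l : Rˣ)
  rw [mul_sub, mul_one, ← Units.val_mul, Int.cast_pow, Int.cast_ofNat, dvd_sub_comm] at hdvd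
  have hc0 : c = 0 := E.eq_zero_of_prod_twoCosUnit_zpow hp hd hd' hc (hprod.imp
    (fun h => by rwa [h, Units.val_one] at hdvd)
    (fun h => by rwa [h, Units.val_neg, Units.val_one, sub_neg_eq_add] at hdvd))
  refine ⟨hc0, S.eq_zero_of_prod_quot_zpow hu hb ?_⟩
  simpa [hc0] using hprod

theorem two_pow_pow_le (S : E.FactorUnits (2 ^ (s + 1)) u) (hp : p % 4 = 3) (hh : 2 ≤ h)
    (hd : 2 ^ (d + 1) < p) (hd' : p < 2 ^ (d + 2)) (hu : (p : ℤ) ^ 4 ≤ u) :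
    ((2 : ℝ) ^ s) ^ d ≤ h * (18 * h * Real.log (5 * u) + 1) ^ (h - 1) := by
  by_contra! hlt
  have hIcc {a : ℕ} (ha : a ∈ Ico 1 h) : a ∈ Icc 1 h := Ico_subset_Icc_self ha
  have hv (a : Ico 1 h) : ∑ i, |3 * E.logNorm a (S.quot i)| ≤ 9 * h * Real.log (5 * u) := by
    have := S.sum_abs_logNorm_quot_le (by positivity) hu (hIcc a.2)
    simp only [abs_mul, abs_of_pos (zero_lt_three (α := ℝ)), ← mul_sum]
    linarith
  obtain ⟨c, b, hne, hc, hb, hsmall⟩ := exists_ne_zero_abs_sum_mul_add_sum_mul_lt_one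
    (A := 2 ^ s) (fun (a : Ico 1 h) (l : Fin d) => 3 * E.logNorm a (E.twoCosUnit hp (l + 2)))
    ((sum_nonneg fun _ _ => abs_nonneg _).trans (hv ⟨1, mem_Ico.2 ⟨le_rfl, hh⟩⟩)) hv
    (by simp only [Fintype.card_coe, Nat.card_Icc, Nat.card_Ico]; omega) (by
      rw [show 2 * (9 * h * Real.log (5 * u)) = 18 * h * Real.log (5 * u) by ring]
      simpa using hlt)
  suffices hprod : (∏ l : Fin d, E.twoCosUnit hp (l + 2) ^ c l) * ∏ i, S.quot i ^ b i = 1 ∨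
      (∏ l : Fin d, E.twoCosUnit hp (l + 2) ^ c l) * ∏ i, S.quot i ^ b i = -1 by
    obtain ⟨hc0, hb0⟩ := S.eq_zero_of_prod_twoCosUnit_mul_prod_quot hp hd hd' hu
      (by exact_mod_cast hc) hb hprod
    exact hne hc0 hb0
  refine E.eq_one_or_neg_one_of_abs_logNorm_lt hh (mul_mem
    (prod_mem fun l _ => zpow_mem (twoCosUnit_mem_realUnits hp _) _)
    (prod_mem fun i _ => zpow_mem (S.quot_mem_realUnits i) _)) fun a ha ha' => ?_
  have := hsmall ⟨a, mem_Ico.2 ⟨ha, ha'⟩⟩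
  simp only [mul_left_comm _ (3 : ℝ), ← mul_sum, ← mul_add, abs_mul,
    abs_of_pos (zero_lt_three (α := ℝ))] at this
  simp only [E.logNorm_mul, E.logNorm_prod, E.logNorm_zpow]
  linarith

end FactorUnits

end CyclotomicModel

theorem four_mul_add_one_le_two_pow {d : ℕ} (hd : 3 ≤ d) : 4 * (d + 1) ≤ 2 ^ (d + 1) := by
  induction d, hd using Nat.le_induction with
  | base => norm_num
  | succ d _ ih => rw [pow_succ]; omega

theorem two_pow_le_thirteen_pow {m n : ℕ} (h : 2 * m ≤ 7 * n) : 2 ^ m ≤ 13 ^ n := by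
  refine (Nat.pow_le_pow_iff_left two_ne_zero).1 ?_
  calc (2 ^ m) ^ 2 = 2 ^ (2 * m) := by rw [← pow_mul, mul_comm]
    _ ≤ 2 ^ (7 * n) := Nat.pow_le_pow_right two_pos h
    _ = (2 ^ 7) ^ n := pow_mul _ _ _
    _ ≤ (13 ^ 2) ^ n := Nat.pow_le_pow_left (by norm_num) _
    _ = (13 ^ n) ^ 2 := by rw [← pow_mul, ← pow_mul, mul_comm]

theorem mul_pow_mul_pow_lt_of_three_le {p h d : ℕ} (hph : p = 2 * h + 1) (hd3 : 3 ≤ d)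
    (hd : 2 ^ (d + 1) < p) (hd' : p < 2 ^ (d + 2)) :
    h * (27 * p ^ 2) ^ (h - 1) * (p ^ 2) ^ d < (7 * 13 ^ p) ^ d := by
  have hdp : 4 * (d + 1) ≤ p := (four_mul_add_one_le_two_pow hd3).trans hd.le
  have hfirst : h * (27 * p ^ 2) ^ (h - 1) ≤ 2 ^ ((d + 5) * p) := calc
    h * (27 * p ^ 2) ^ (h - 1) ≤ 6 * p * ((6 * p) ^ 2) ^ (h - 1) := by
      gcongr
      · omega
      · rw [mul_pow]
        gcongr
        norm_num
    _ = (6 * p) ^ (2 * (h - 1) + 1) := by rw [← pow_mul]; ring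
    _ ≤ (6 * p) ^ p := Nat.pow_le_pow_right (by omega) (by omega)
    _ ≤ (2 ^ (d + 5)) ^ p := Nat.pow_le_pow_left (by rw [pow_add] at hd' ⊢; omega) _
    _ = 2 ^ ((d + 5) * p) := (pow_mul _ _ _).symm
  have hsecond : (p ^ 2) ^ d ≤ 2 ^ ((d + 2) * (2 * d)) := by
    rw [← pow_mul, pow_mul 2]
    exact Nat.pow_le_pow_left hd'.le _
  have hexp : 2 * ((d + 5) * p + (d + 2) * (2 * d)) ≤ 7 * (p * d) := by
    obtain ⟨e, rfl⟩ := Nat.exists_eq_add_of_le' hd3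
    nlinarith
  calc h * (27 * p ^ 2) ^ (h - 1) * (p ^ 2) ^ d
      ≤ 2 ^ ((d + 5) * p + (d + 2) * (2 * d)) := by
        rw [pow_add]
        exact Nat.mul_le_mul hfirst hsecond
    _ ≤ (13 ^ p) ^ d := by
        rw [← pow_mul]
        exact two_pow_le_thirteen_pow hexp
    _ < (7 * 13 ^ p) ^ d :=
        Nat.pow_lt_pow_left (lt_mul_left (by positivity) (by norm_num)) (by omega)

theorem mul_pow_mul_pow_lt_of_prime {p h d : ℕ} (hp : p.Prime) (hph : p = 2 * h + 1)
    (hp7 : p % 8 = 7) (hd : 2 ^ (d + 1) < p) (hd' : p < 2 ^ (d + 2)) :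
    h * (27 * p ^ 2) ^ (h - 1) * (p ^ 2) ^ d < (7 * 13 ^ p) ^ d := by
  rcases Nat.lt_or_ge d 3 with hd3 | hd3
  · interval_cases d
    · omega
    · obtain rfl : h = 3 := by omega
      subst hph
      norm_num
    · obtain rfl : p = 15 := by omega
      norm_num at hp
  · exact mul_pow_mul_pow_lt_of_three_le hph hd3 hd hd'

theorem log_thirteen_le : Real.log 13 ≤ 2.6 := by
  refine le_of_mul_le_mul_left (a := 5) ?_ (by norm_num)
  rw [← Nat.cast_ofNat (R := ℝ) (n := 5), ← Real.log_pow, Real.log_le_iff_le_exp (by norm_num)]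
  calc (13 : ℝ) ^ 5 ≤ 2.7 ^ 13 := by norm_num
    _ ≤ Real.exp 1 ^ 13 := by gcongr; linarith [Real.exp_one_gt_d9]
    _ = Real.exp ((5 : ℕ) * 2.6) := by rw [← Real.exp_nat_mul]; norm_num

theorem log_five_le_two : Real.log 5 ≤ 2 := by
  rw [Real.log_le_iff_le_exp (by norm_num)]
  calc (5 : ℝ) ≤ 2.7 ^ 2 := by norm_num
    _ ≤ Real.exp 1 ^ 2 := by gcongr; linarith [Real.exp_one_gt_d9]
    _ = Real.exp 2 := by rw [← Real.exp_nat_mul]; norm_num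

theorem log_five_mul_thirteen_mul_pow_le {p : ℕ} (hp : 5 ≤ p) {x : ℝ} (hx : 1 ≤ x) :
    Real.log (5 * (13 * x) ^ p) ≤ 3 * p * x := by
  have hp' : (5 : ℝ) ≤ p := by exact_mod_cast hp
  have hlogx := Real.log_le_sub_one_of_pos (zero_lt_one.trans_le hx)
  rw [Real.log_mul (by norm_num) (by positivity), Real.log_pow,
    Real.log_mul (by norm_num) (by positivity)]
  have hbound : (p : ℝ) * (Real.log 13 + Real.log x) ≤ p * (2.6 + (x - 1)) := by
    gcongr
    exact log_thirteen_le
  nlinarith [log_five_le_two]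

theorem exists_eq_mul_pow_of_pow_le {a u : ℝ} (ha : 0 < a) {p : ℕ} (hp : p ≠ 0) (hu : a ^ p ≤ u) :
    ∃ x, 1 ≤ x ∧ u = (a * x) ^ p := by
  have hone : 1 ≤ u / a ^ p := (one_le_div (by positivity)).2 hu
  refine ⟨(u / a ^ p) ^ (p : ℝ)⁻¹, Real.one_le_rpow hone (by positivity), ?_⟩
  rw [mul_pow, Real.rpow_inv_natCast_pow (zero_le_one.trans hone) hp,
    mul_div_cancel₀ _ (by positivity)]

theorem mul_log_pow_lt_two_pow_pow {p h d s : ℕ} {u : ℝ} (hp : p.Prime) (hph : p = 2 * h + 1)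
    (hp7 : p % 8 = 7) (hd : 2 ^ (d + 1) < p) (hd' : p < 2 ^ (d + 2)) (hu : 13 ^ p ≤ u)
    (hs : 7 * u ≤ (p : ℝ) ^ 2 * 2 ^ s) :
    h * (18 * h * Real.log (5 * u) + 1) ^ (h - 1) < ((2 : ℝ) ^ s) ^ d := by
  obtain ⟨x, hx, rfl⟩ := exists_eq_mul_pow_of_pow_le (by norm_num) hp.ne_zero hu
  have hp' : (7 : ℝ) ≤ p := by exact_mod_cast (by omega : 7 ≤ p)
  have hlog := log_five_mul_thirteen_mul_pow_le (by omega : 5 ≤ p) hx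
  have hlog0 : 0 ≤ Real.log (5 * (13 * x) ^ p) :=
    Real.log_nonneg (one_le_mul_of_one_le_of_one_le (by norm_num) (one_le_pow₀ (by linarith)))
  have hbase : 18 * h * Real.log (5 * (13 * x) ^ p) + 1 ≤ 27 * (p : ℝ) ^ 2 * x := by
    have hh : 18 * (h : ℝ) = 9 * (p - 1) := by rw [hph]; push_cast; ring
    rw [hh]
    nlinarith [mul_le_mul_of_nonneg_left hlog (show (0 : ℝ) ≤ 9 * (p - 1) by linarith)]
  have hpow : x ^ (h - 1) ≤ (x ^ p) ^ d := by
    have hd0 : d ≠ 0 := by rintro rfl; omega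
    rw [← pow_mul]
    exact pow_le_pow_right₀ hx ((by omega : h - 1 ≤ p).trans (Nat.le_mul_of_pos_right p (by omega)))
  have hnat : (h : ℝ) * (27 * (p : ℝ) ^ 2) ^ (h - 1) * ((p : ℝ) ^ 2) ^ d < (7 * 13 ^ p) ^ d := by
    exact_mod_cast mul_pow_mul_pow_lt_of_prime hp hph hp7 hd hd'
  refine lt_of_mul_lt_mul_right ?_ (by positivity : (0 : ℝ) ≤ ((p : ℝ) ^ 2) ^ d)
  calc h * (18 * h * Real.log (5 * (13 * x) ^ p) + 1) ^ (h - 1) * ((p : ℝ) ^ 2) ^ d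
      ≤ h * (27 * (p : ℝ) ^ 2 * x) ^ (h - 1) * ((p : ℝ) ^ 2) ^ d := by gcongr
    _ = (h * (27 * (p : ℝ) ^ 2) ^ (h - 1) * ((p : ℝ) ^ 2) ^ d) * x ^ (h - 1) := by
        rw [mul_pow]; ring
    _ < (7 * 13 ^ p) ^ d * x ^ (h - 1) := by gcongr
    _ ≤ (7 * 13 ^ p) ^ d * (x ^ p) ^ d := by gcongr
    _ = (7 * (13 * x) ^ p) ^ d := by rw [← mul_pow, mul_pow 13 x p, mul_assoc]
    _ ≤ ((p : ℝ) ^ 2 * 2 ^ s) ^ d := by gcongr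
    _ = ((2 : ℝ) ^ s) ^ d * ((p : ℝ) ^ 2) ^ d := by rw [mul_pow, mul_comm]

theorem pow_four_le_thirteen_pow {n : ℕ} (hn : 7 ≤ n) : n ^ 4 ≤ 13 ^ n := by
  induction n, hn using Nat.le_induction with
  | base => norm_num
  | succ n hn ih =>
    have hsq : (n + 1) ^ 2 ≤ 2 * n ^ 2 := by nlinarith
    calc (n + 1) ^ 4 = ((n + 1) ^ 2) ^ 2 := by ring
      _ ≤ (2 * n ^ 2) ^ 2 := by gcongr
      _ = 4 * n ^ 4 := by ring
      _ ≤ 13 * 13 ^ n := Nat.mul_le_mul (by norm_num) ih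
      _ = 13 ^ (n + 1) := (pow_succ' _ _).symm

theorem exists_two_pow_lt_and_lt_two_pow {n : ℕ} (hn : 2 ≤ n) (hodd : Odd n) :
    ∃ d, 2 ^ (d + 1) < n ∧ n < 2 ^ (d + 2) := by
  obtain ⟨d, hd⟩ : ∃ d, Nat.log 2 n = d + 1 :=
    Nat.exists_eq_add_one.2 (Nat.log_pos Nat.one_lt_two hn)
  have hle := Nat.pow_log_le_self 2 (show n ≠ 0 by omega)
  have hlt := Nat.lt_pow_succ_log_self Nat.one_lt_two n
  rw [hd] at hle hlt
  refine ⟨d, lt_of_le_of_ne hle fun heq => ?_, hlt⟩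
  rw [← heq, pow_succ] at hodd
  exact Nat.not_odd_iff_even.2 (even_two.mul_left _) hodd

/- If the quotient were `1`, the units `twoCos (2 ^ i)` and `FactorUnits.quot` would have so many
products with bounded exponents that two of them would have almost equal conjugates, which their
multiplicative independence excludes. -/
theorem lehmerQuot_two_pow_ne_one {p h s : ℕ} {u : ℤ} (hp : p.Prime) (hph : p = 2 * h + 1)
    (hp7 : p % 8 = 7) (hu : 13 ^ p ≤ u) : lehmerQuot (2 ^ (s + 1)) u h ≠ 1 := by
  intro hW
  have hT : (2 : ℤ) ^ (s + 1) ≠ 0 := by positivity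
  have hu4 : (p : ℤ) ^ 4 ≤ u :=
    le_trans (by exact_mod_cast pow_four_le_thirteen_pow (by omega : 7 ≤ p)) hu
  have hsize := sixteen_mul_le_of_abs_lehmerQuot_le (by omega : 1 ≤ h) hT
    (le_trans (by positivity) hu) le_rfl (by rw [hW, abs_one])
  have hs : 7 * (u : ℝ) ≤ (p : ℝ) ^ 2 * 2 ^ s := by
    have hu4' : (p : ℝ) ^ 4 ≤ u := by exact_mod_cast hu4
    have hsize' : 16 * (u : ℝ) ≤ (p : ℝ) ^ 2 * (2 ^ (s + 1) + 1) := by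
      rw [hph]
      exact_mod_cast hsize
    rw [pow_succ (2 : ℝ)] at hsize'
    have hp1 : (1 : ℝ) ≤ (p : ℝ) ^ 2 := one_le_pow₀ (by exact_mod_cast hp.one_le)
    nlinarith
  obtain ⟨d, hd, hd'⟩ := exists_two_pow_lt_and_lt_two_pow hp.two_le (hp.odd_of_ne_two (by omega))
  have : NeZero p := ⟨hp.ne_zero⟩
  have : IsCyclotomicExtension {p} ℚ (CyclotomicField p ℚ) :=
    CyclotomicField.isCyclotomicExtension p ℚ
  obtain ⟨E⟩ := nonempty_cyclotomicModel_ringOfIntegers hp hph (CyclotomicField p ℚ)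
  obtain ⟨S⟩ := E.nonempty_factorUnits hT hW
  exact (S.two_pow_pow_le (by omega) (by omega) hd hd' hu4).not_gt
    (mul_log_pow_lt_two_pow_pow hp hph hp7 hd hd' (by exact_mod_cast hu) hs)

/-! ### Class groups and powers -/

theorem exists_prime_pow_div_eq_one {G : Type*} [Group G] {c : G} {n : ℕ} (hn0 : n ≠ 0)
    (hn : ¬ n ∣ Nat.card G) (hc : c ^ n = 1) : ∃ p, p.Prime ∧ p ∣ n ∧ c ^ (n / p) = 1 := by
  by_contra! hne
  rw [← orderOf_eq_of_pow_and_pow_div_prime (Nat.pos_of_ne_zero hn0) hc hne] at hn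
  exact hn (orderOf_dvd_natCard c)

section Dedekind

variable {R : Type*} [CommRing R] [IsDedekindDomain R]

theorem exists_prime_pow_associated_of_span_eq_pow {n : ℕ} {α : R} {J : Ideal R} (hn0 : n ≠ 0)
    (hn : ¬ n ∣ Nat.card (ClassGroup R)) (hα : α ≠ 0) (hJ : Ideal.span {α} = J ^ n) :
    ∃ p, p.Prime ∧ p ∣ n ∧ ∃ β : R, Associated (β ^ p) α := by
  have hJ0 : J ≠ 0 := by
    rintro rfl
    rw [zero_pow hn0] at hJ
    exact hα (Ideal.span_singleton_eq_bot.1 hJ)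
  have hJmem : J ∈ nonZeroDivisors (Ideal R) := mem_nonZeroDivisors_of_ne_zero hJ0
  have pow_class_eq_one_iff (m : ℕ) :
      ClassGroup.mk0 ⟨J, hJmem⟩ ^ m = 1 ↔ (J ^ m).IsPrincipal := by
    rw [← map_pow]
    exact ClassGroup.mk0_eq_one_iff (I := J ^ m) (pow_mem hJmem m)
  obtain ⟨p, hp, hpn, hroot⟩ :=
    exists_prime_pow_div_eq_one hn0 hn ((pow_class_eq_one_iff n).2 (hJ ▸ ⟨α, rfl⟩))
  obtain ⟨β, hβ⟩ := (pow_class_eq_one_iff (n / p)).1 hroot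
  refine ⟨p, hp, hpn, β, ?_⟩
  rw [← Ideal.span_singleton_eq_span_singleton, ← Ideal.span_singleton_pow, hJ]
  calc Ideal.span {β} ^ p = (J ^ (n / p)) ^ p := by rw [hβ]
    _ = J ^ n := by rw [← pow_mul, Nat.div_mul_cancel hpn]

theorem exists_prime_pow_associated_of_mul_eq_pow {n : ℕ} {α α' Y : R} (hn0 : n ≠ 0)
    (hn : ¬ n ∣ Nat.card (ClassGroup R)) (hY : Y ≠ 0) (hprod : α * α' = Y ^ n)
    (hco : IsCoprime (α + α') Y) :
    ∃ p, p.Prime ∧ p ∣ n ∧ ∃ β : R, Associated (β ^ p) α := by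
  have hcop : IsCoprime α α' := by
    have hsum : IsCoprime (α' + α * 1) α := by
      rw [mul_one, add_comm]
      exact (hprod ▸ hco.pow_right : IsCoprime (α + α') (α * α')).of_mul_right_left
    exact hsum.of_add_mul_left_left.symm
  obtain ⟨J, hJ⟩ := exists_eq_pow_of_mul_eq_pow_of_coprime
    ((Ideal.isCoprime_span_singleton_iff α α').2 hcop)
    (by rw [Ideal.span_singleton_mul_span_singleton, hprod, ← Ideal.span_singleton_pow])
  have hα : α ≠ 0 := by
    rintro rfl
    exact pow_ne_zero n hY (hprod.symm.trans (zero_mul _))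
  exact exists_prime_pow_associated_of_span_eq_pow hn0 hn hα hJ

end Dedekind

/-! ### Integers of imaginary quadratic fields -/

section QuadIntegers

open ComplexConjugate

/-- The square root of `D` whose adjunction defines `quadField D`. -/
noncomputable def sqrtInt (D : ℤ) : ℂ := (D : ℂ) ^ ((1 : ℂ) / 2)

/-- The ring of integers of `quadField D`, realized inside `ℂ` so that the nontrivial automorphism
of an imaginary quadratic field is complex conjugation. -/
noncomputable def quadIntegers (D : ℤ) : Subring ℂ :=
  (quadField D).toSubalgebra.toSubring ⊓ (integralClosure ℤ ℂ).toSubring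

theorem sqrtInt_sq (D : ℤ) : sqrtInt D ^ 2 = D := by
  rw [sqrtInt, one_div]
  exact_mod_cast Complex.cpow_nat_inv_pow (D : ℂ) two_ne_zero

theorem sqrtInt_mem_quadField (D : ℤ) : sqrtInt D ∈ quadField D := mem_adjoin_simple_self ℚ _

theorem mem_quadIntegers {D : ℤ} {x : ℂ} :
    x ∈ quadIntegers D ↔ x ∈ quadField D ∧ IsIntegral ℤ x := Iff.rfl

theorem mem_quadIntegers_of_sq_eq {D : ℤ} {x : ℂ} {z : ℤ} (hx : x ∈ quadField D)
    (hz : x ^ 2 = z) : x ∈ quadIntegers D :=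
  ⟨hx, IsIntegral.of_pow two_pos (hz ▸ isIntegral_algebraMap (R := ℤ) (x := z))⟩

theorem sqrtInt_mem_quadIntegers (D : ℤ) : sqrtInt D ∈ quadIntegers D :=
  mem_quadIntegers_of_sq_eq (sqrtInt_mem_quadField D) (sqrtInt_sq D)

theorem conj_sqrtInt {D : ℤ} (hD : D < 0) : conj (sqrtInt D) = -sqrtInt D := by
  have hsq := sqrtInt_sq D
  rw [pow_two] at hsq
  have hre := congrArg Complex.re hsq
  have him := congrArg Complex.im hsq
  simp only [Complex.mul_re, Complex.mul_im, Complex.intCast_re, Complex.intCast_im] at hre him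
  have hD' : (D : ℝ) < 0 := by exact_mod_cast hD
  have hre0 : (sqrtInt D).re = 0 := by
    rcases mul_eq_zero.1 (by linarith : (sqrtInt D).re * (sqrtInt D).im = 0) with h0 | h0
    · exact h0
    · rw [h0] at hre; nlinarith
  apply Complex.ext <;> simp [hre0]

theorem exists_eq_add_mul_sqrtInt {D : ℤ} {x : ℂ} (hx : x ∈ quadField D) :
    ∃ a b : ℚ, x = a + b * sqrtInt D := by
  have halg : IsAlgebraic ℚ ((D : ℂ) ^ ((1 : ℂ) / 2)) :=
    ((sqrtInt_mem_quadIntegers D).2.tower_top (A := ℚ)).isAlgebraic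
  have hx' : x ∈ (quadField D).toSubalgebra := hx
  rw [quadField, adjoin_simple_toSubalgebra_of_isAlgebraic halg] at hx'
  clear hx
  induction hx' using Algebra.adjoin_induction with
  | mem x hx => exact ⟨0, 1, by simp [Set.mem_singleton_iff.1 hx, sqrtInt]⟩
  | algebraMap r => exact ⟨r, 0, by simp⟩
  | add x y _ _ ihx ihy =>
    obtain ⟨a, b, rfl⟩ := ihx
    obtain ⟨c, d, rfl⟩ := ihy
    exact ⟨a + c, b + d, by push_cast; ring⟩
  | mul x y _ _ ihx ihy =>
    obtain ⟨a, b, rfl⟩ := ihx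
    obtain ⟨c, d, rfl⟩ := ihy
    refine ⟨a * c + b * d * D, a * d + b * c, ?_⟩
    push_cast
    linear_combination b * d * sqrtInt_sq D

instance (D : ℤ) : NumberField (quadField D) where
  to_charZero := inferInstance
  to_finiteDimensional :=
    adjoin.finiteDimensional ((sqrtInt_mem_quadIntegers D).2.tower_top (A := ℚ))

theorem range_algebraMap_ringOfIntegers (D : ℤ) :
    (algebraMap (𝓞 (quadField D)) ℂ).range = quadIntegers D := by
  ext x
  constructor
  · rintro ⟨y, rfl⟩
    exact ⟨(y : quadField D).2, y.isIntegral_coe.map ((quadField D).val.restrictScalars ℤ)⟩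
  · rintro ⟨hx, hint⟩
    exact ⟨⟨⟨x, hx⟩, (isIntegral_algebraMap_iff (algebraMap (quadField D) ℂ).injective).1 hint⟩,
      rfl⟩

theorem exists_intCast_eq_of_isIntegral {q : ℚ} (hq : IsIntegral ℤ (q : ℂ)) :
    ∃ z : ℤ, (q : ℂ) = z := by
  have hq' : IsIntegral ℤ q :=
    (isIntegral_algebraMap_iff (algebraMap ℚ ℂ).injective).1 (by simpa using hq)
  obtain ⟨z, rfl⟩ := IsIntegrallyClosed.isIntegral_iff.1 hq'
  exact ⟨z, by simp⟩

theorem isIntegral_conj {x : ℂ} (hx : IsIntegral ℤ x) : IsIntegral ℤ (conj x) :=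
  hx.map (starRingEnd ℂ).toIntAlgHom

theorem exists_intCast_eq_add_conj {D : ℤ} (hD : D < 0) {x : ℂ} (hx : x ∈ quadIntegers D) :
    ∃ t : ℤ, x + conj x = t := by
  obtain ⟨a, b, hab⟩ := exists_eq_add_mul_sqrtInt hx.1
  have htr : x + conj x = ((2 * a : ℚ) : ℂ) := by
    simp only [hab, map_add, map_mul, conj_sqrtInt hD, map_ratCast]
    push_cast
    ring
  rw [htr]
  exact exists_intCast_eq_of_isIntegral (htr ▸ hx.2.add (isIntegral_conj hx.2))

theorem exists_intCast_eq_mul_conj {D : ℤ} (hD : D < 0) {x : ℂ} (hx : x ∈ quadIntegers D) :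
    ∃ z : ℤ, x * conj x = z := by
  obtain ⟨a, b, hab⟩ := exists_eq_add_mul_sqrtInt hx.1
  have hnorm : x * conj x = ((a ^ 2 - b ^ 2 * D : ℚ) : ℂ) := by
    simp only [hab, map_add, map_mul, conj_sqrtInt hD, map_ratCast]
    push_cast
    linear_combination -(b : ℂ) ^ 2 * sqrtInt_sq D
  rw [hnorm]
  exact exists_intCast_eq_of_isIntegral (hnorm ▸ hx.2.mul (isIntegral_conj hx.2))

theorem exists_natCast_eq_mul_conj {D : ℤ} (hD : D < 0) {x : ℂ} (hx : x ∈ quadIntegers D) :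
    ∃ r : ℕ, x * conj x = r := by
  obtain ⟨z, hz⟩ := exists_intCast_eq_mul_conj hD hx
  have hz0 : 0 ≤ z := by
    rw [Complex.mul_conj] at hz
    have hz' : Complex.normSq x = z := by exact_mod_cast hz
    exact_mod_cast hz' ▸ Complex.normSq_nonneg x
  lift z to ℕ using hz0
  exact ⟨z, by rw [hz, Int.cast_natCast]⟩

theorem conj_mem_quadIntegers {D : ℤ} (hD : D < 0) {x : ℂ} (hx : x ∈ quadIntegers D) :
    conj x ∈ quadIntegers D := by
  obtain ⟨t, ht⟩ := exists_intCast_eq_add_conj hD hx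
  rw [eq_sub_of_add_eq' ht]
  exact sub_mem (intCast_mem _ t) hx

theorem mul_conj_eq_one_of_mul_eq_one {D : ℤ} (hD : D < 0) {x y : ℂ} (hx : x ∈ quadIntegers D)
    (hy : y ∈ quadIntegers D) (hxy : x * y = 1) : x * conj x = 1 := by
  obtain ⟨r, hr⟩ := exists_natCast_eq_mul_conj hD hx
  obtain ⟨s, hs⟩ := exists_natCast_eq_mul_conj hD hy
  have hrs : (r : ℂ) * s = 1 := by
    calc (r : ℂ) * s = x * y * conj (x * y) := by rw [← hr, ← hs, map_mul]; ring
      _ = 1 := by rw [hxy, map_one, one_mul]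
  have hr1 : r = 1 := Nat.eq_one_of_mul_eq_one_right (by exact_mod_cast hrs)
  rw [hr, hr1, Nat.cast_one]

theorem mul_conj_eq_of_pow_eq {D : ℤ} (hD : D < 0) {x : ℂ} (hx : x ∈ quadIntegers D) {r e : ℕ}
    (he : e ≠ 0) (hr : (x * conj x) ^ e = (r : ℂ) ^ e) : x * conj x = r := by
  obtain ⟨s, hs⟩ := exists_natCast_eq_mul_conj hD hx
  rw [hs] at hr ⊢
  exact_mod_cast Nat.pow_left_injective he (by exact_mod_cast hr)

/-! ### Units of imaginary quadratic fields -/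

theorem four_pow_eq_one_or_of_mul_conj_eq_one {D : ℤ} (hD : D < 0) {ε : ℂ}
    (hε : ε ∈ quadIntegers D) (hN : ε * conj ε = 1) :
    ε ^ 4 = 1 ∨ ε ^ 2 + ε + 1 = 0 ∨ ε ^ 2 - ε + 1 = 0 := by
  obtain ⟨t, ht⟩ := exists_intCast_eq_add_conj hD hε
  have hquad : ε ^ 2 = t * ε - 1 := by linear_combination ε * ht - hN
  have ht4 : t ^ 2 ≤ 4 := by
    have hre : 2 * ε.re = t := by
      have := congrArg Complex.re ht
      simp only [Complex.add_re, Complex.conj_re, Complex.intCast_re] at this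
      linarith
    have hcirc : ε.re ^ 2 + ε.im ^ 2 = 1 := by
      have := congrArg Complex.re hN
      simp only [Complex.mul_re, Complex.conj_re, Complex.conj_im, Complex.one_re] at this
      linarith
    have : (t : ℝ) ^ 2 ≤ 4 := by rw [← hre]; nlinarith [sq_nonneg ε.im]
    exact_mod_cast this
  obtain ⟨ht1, ht2⟩ : -2 ≤ t ∧ t ≤ 2 := by constructor <;> nlinarith
  interval_cases t <;> push_cast at hquad
  · have hε1 : ε + 1 = 0 := pow_eq_zero_iff two_ne_zero |>.1 (by linear_combination hquad)
    exact .inl (by rw [eq_neg_of_add_eq_zero_left hε1]; norm_num)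
  · exact .inr (.inl (by linear_combination hquad))
  · exact .inl (by linear_combination (ε ^ 2 - 1) * hquad)
  · exact .inr (.inr (by linear_combination hquad))
  · have hε1 : ε - 1 = 0 := pow_eq_zero_iff two_ne_zero |>.1 (by linear_combination hquad)
    exact .inl (by rw [sub_eq_zero.1 hε1, one_pow])

theorem pow_twelve_eq_one_of_mul_conj_eq_one {D : ℤ} (hD : D < 0) {ε : ℂ}
    (hε : ε ∈ quadIntegers D) (hN : ε * conj ε = 1) : ε ^ 12 = 1 := by
  rcases four_pow_eq_one_or_of_mul_conj_eq_one hD hε hN with h | h | h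
  · linear_combination (ε ^ 8 + ε ^ 4 + 1) * h
  · linear_combination (ε - 1) * (ε ^ 9 + ε ^ 6 + ε ^ 3 + 1) * h
  · linear_combination (ε + 1) * (ε ^ 9 - ε ^ 6 + ε ^ 3 - 1) * h

theorem pow_sq_eq_self {M : Type*} [Monoid M] {x : M} (hx : x ^ 12 = 1) {p : ℕ} (hp : p.Prime)
    (hp2 : p ≠ 2) (hp3 : p ≠ 3) : x ^ p ^ 2 = x := by
  have h2 : ¬ 2 ∣ p := fun h => hp2 ((Nat.prime_dvd_prime_iff_eq Nat.prime_two hp).1 h).symm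
  have h3 : ¬ 3 ∣ p := fun h => hp3 ((Nat.prime_dvd_prime_iff_eq Nat.prime_three hp).1 h).symm
  have hmod : p ^ 2 % 12 = 1 := by
    have : p % 12 = 1 ∨ p % 12 = 5 ∨ p % 12 = 7 ∨ p % 12 = 11 := by omega
    rcases this with h | h | h | h <;> simp [Nat.pow_mod, h]
  rw [← Nat.div_add_mod (p ^ 2) 12, hmod, pow_add, pow_mul, hx, one_pow, one_mul, pow_one]

/- Only primitive third and sixth roots of unity at `p = 3` fail to be `p`-th powers of units. -/
theorem exists_mul_pow_eq_one_or {D : ℤ} (hD : D < 0) {ε : ℂ} (hε : ε ∈ quadIntegers D)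
    (hN : ε * conj ε = 1) {p : ℕ} (hp : p.Prime) (hp2 : p ≠ 2) :
    ∃ δ ∈ quadIntegers D, δ * conj δ = 1 ∧
      (ε * δ ^ p = 1 ∨ p = 3 ∧ (ε * δ ^ p) ^ 2 + ε * δ ^ p + 1 = 0) := by
  have absorb (hroot : ε ^ p ^ 2 = ε) : ∃ δ ∈ quadIntegers D, δ * conj δ = 1 ∧
      (ε * δ ^ p = 1 ∨ p = 3 ∧ (ε * δ ^ p) ^ 2 + ε * δ ^ p + 1 = 0) := by
    refine ⟨conj ε ^ p, pow_mem (conj_mem_quadIntegers hD hε) p, ?_, .inl ?_⟩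
    · rw [map_pow, Complex.conj_conj, ← mul_pow, mul_comm, hN, one_pow]
    · rw [← pow_mul, ← pow_two, ← map_pow, hroot, hN]
  by_cases hp3 : p = 3
  · subst hp3
    rcases four_pow_eq_one_or_of_mul_conj_eq_one hD hε hN with h | h | h
    · exact absorb (by linear_combination (ε ^ 5 + ε) * h)
    · exact ⟨1, one_mem _, by simp, .inr ⟨rfl, by linear_combination h⟩⟩
    · exact ⟨-1, neg_mem (one_mem _), by simp, .inr ⟨rfl, by linear_combination h⟩⟩
  · exact absorb (pow_sq_eq_self (pow_twelve_eq_one_of_mul_conj_eq_one hD hε hN) hp hp2 hp3)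

theorem add_conj_eq_neg_one_of_sq_add_add_one {ε : ℂ} (hε : ε ^ 2 + ε + 1 = 0) :
    ε + conj ε = -1 := by
  have hconj : conj ε ^ 2 + conj ε + 1 = 0 := by simpa using congrArg conj hε
  have hfactor : (ε - conj ε) * (ε + conj ε + 1) = 0 := by linear_combination hε - hconj
  rcases mul_eq_zero.1 hfactor with hreal | htr
  · have him : ε.im = 0 := Complex.conj_eq_iff_im.1 (sub_eq_zero.1 hreal).symm
    have hre := congrArg Complex.re hε
    simp only [pow_two, Complex.add_re, Complex.mul_re, him, Complex.one_re, Complex.zero_re] at hre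
    nlinarith [sq_nonneg (2 * ε.re + 1)]
  · exact eq_neg_of_add_eq_zero_left htr

theorem mul_conj_eq_one_of_sq_add_add_one {ε : ℂ} (hε : ε ^ 2 + ε + 1 = 0) :
    ε * conj ε = 1 := by
  linear_combination ε * add_conj_eq_neg_one_of_sq_add_add_one hε - hε

theorem exists_mul_sq_eq_neg_three {D : ℤ} (hD : D < 0) {ε : ℂ} (hε : ε ∈ quadField D)
    (hε3 : ε ^ 2 + ε + 1 = 0) : ∃ b : ℚ, D * b ^ 2 = -3 := by
  obtain ⟨a, b, rfl⟩ := exists_eq_add_mul_sqrtInt hε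
  have htr := add_conj_eq_neg_one_of_sq_add_add_one hε3
  simp only [map_add, map_mul, conj_sqrtInt hD, map_ratCast] at htr
  refine ⟨2 * b, ?_⟩
  have : (D : ℂ) * (2 * b) ^ 2 = -3 := by
    linear_combination 4 * hε3 - 4 * b ^ 2 * sqrtInt_sq D -
      (2 * a + 1 + 4 * b * sqrtInt D) * htr
  exact_mod_cast this

theorem mul_sq_ne_neg_three {D : ℤ} (hD : D % 4 = 2 ∨ D % 4 = 3) (b : ℚ) : D * b ^ 2 ≠ -3 := by
  intro h
  have hcleared : D * b.num ^ 2 = -3 * (b.den : ℤ) ^ 2 := by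
    have hden : (b.den : ℚ) ≠ 0 := by exact_mod_cast b.den_ne_zero
    rw [← Rat.num_div_den b, div_pow] at h
    field_simp at h
    have : (D : ℚ) * b.num ^ 2 = -3 * (b.den : ℚ) ^ 2 := by linarith
    exact_mod_cast this
  have hnot_even : ¬ (b.num % 2 = 0 ∧ (b.den : ℤ) % 2 = 0) := by
    rintro ⟨hnum, hden⟩
    have := (Rat.isCoprime_num_den b).isUnit_of_dvd' (Int.dvd_of_emod_eq_zero hnum)
      (Int.dvd_of_emod_eq_zero hden)
    norm_num [Int.isUnit_iff] at this
  have hmod : (D * b.num ^ 2 + 3 * (b.den : ℤ) ^ 2) % 4 = 0 := by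
    rw [hcleared, neg_mul, neg_add_cancel, Int.zero_emod]
  generalize b.num = x at *
  generalize (b.den : ℤ) = y at *
  have hx : x % 4 = 0 ∨ x % 4 = 1 ∨ x % 4 = 2 ∨ x % 4 = 3 := by omega
  have hy : y % 4 = 0 ∨ y % 4 = 1 ∨ y % 4 = 2 ∨ y % 4 = 3 := by omega
  rcases hD with hD | hD <;> rcases hx with hx | hx | hx | hx <;>
    rcases hy with hy | hy | hy | hy <;>
    first
    | omega
    | simp [Int.add_emod, Int.mul_emod, pow_two, hD, hx, hy] at hmod

/-! ### Extracting a prime root -/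

theorem exists_prime_root {D : ℤ} (hD : D < 0) {n : ℕ} (hno : Odd n)
    (hn : ¬ n ∣ quadClassNumber D) {α : ℂ} (hα : α ∈ quadIntegers D) {Y : ℕ} (hY : Y ≠ 0)
    (hN : α * conj α = (Y : ℂ) ^ n) {t : ℤ} (htr : α + conj α = t) (hco : IsCoprime t (Y : ℤ)) :
    ∃ p, p.Prime ∧ p ∣ n ∧ ∃ β ∈ quadIntegers D, β * conj β = (Y ^ (n / p) : ℕ) ∧
      (β ^ p = α ∨ p = 3 ∧ ∃ ε ∈ quadIntegers D, ε ^ 2 + ε + 1 = 0 ∧ β ^ 3 = ε * α) := by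
  set ι := algebraMap (𝓞 (quadField D)) ℂ
  have hι (x : 𝓞 (quadField D)) : ι x ∈ quadIntegers D :=
    range_algebraMap_ringOfIntegers D ▸ ⟨x, rfl⟩
  obtain ⟨a, rfl⟩ : α ∈ ι.range := range_algebraMap_ringOfIntegers D ▸ hα
  have hconj : ι (t - a) = conj (ι a) := by
    rw [map_sub, map_intCast, ← htr, add_sub_cancel_left]
  obtain ⟨p, hp, hpn, b, u, hu⟩ :
      ∃ p, p.Prime ∧ p ∣ n ∧ ∃ b : 𝓞 (quadField D), Associated a (b ^ p) := by
    simp_rw [Associated.comm (x := a)]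
    refine exists_prime_pow_associated_of_mul_eq_pow (α' := t - a) (Y := Y) hno.pos.ne' hn
      (by exact_mod_cast hY) ?_ ?_
    · apply FaithfulSMul.algebraMap_injective (𝓞 (quadField D)) ℂ
      rw [map_mul, hconj, hN, map_pow, map_natCast]
    · rw [add_sub_cancel]
      simpa using hco.map (Int.castRingHom (𝓞 (quadField D)))
  have huN : ι u * conj (ι u) = 1 :=
    mul_conj_eq_one_of_mul_eq_one hD (hι u) (hι (u⁻¹ : (𝓞 (quadField D))ˣ))
      (by rw [← map_mul, Units.mul_inv, map_one])
  obtain ⟨δ, hδ, hδN, hcases⟩ := exists_mul_pow_eq_one_or hD (hι u) huN hp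
    (by rintro rfl; exact Nat.not_even_iff_odd.2 hno (even_iff_two_dvd.2 hpn))
  have hpow : (ι b * δ) ^ p = ι u * δ ^ p * ι a := by
    rw [mul_pow, ← map_pow, ← hu, map_mul]; ring
  have hmem : ι b * δ ∈ quadIntegers D := mul_mem (hι b) hδ
  refine ⟨p, hp, hpn, ι b * δ, hmem, mul_conj_eq_of_pow_eq hD hmem hp.ne_zero ?_, ?_⟩
  · calc (ι b * δ * conj (ι b * δ)) ^ p = (ι b * δ) ^ p * conj ((ι b * δ) ^ p) := by
          rw [map_pow, mul_pow]
      _ = (ι u * conj (ι u)) * (δ * conj δ) ^ p * (ι a * conj (ι a)) := by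
          rw [hpow]; simp only [map_mul, map_pow]; ring
      _ = ((Y ^ (n / p) : ℕ) : ℂ) ^ p := by
          rw [huN, hδN, hN, one_pow, one_mul, one_mul, Nat.cast_pow, ← pow_mul,
            Nat.div_mul_cancel hpn]
  · rcases hcases with h1 | ⟨rfl, h3⟩
    · exact .inl (by rw [hpow, h1, one_mul])
    · exact .inr ⟨rfl, _, mul_mem (hι u) (pow_mem hδ 3), h3, hpow⟩

end QuadIntegers

section ClassNumberDivisibility

open ComplexConjugate

theorem exists_mul_lehmerQuot_eq {D : ℤ} (hD : D < 0) {β : ℂ} (hβ : β ∈ quadIntegers D) {u h : ℕ}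
    (hN : β * conj β = u) {t : ℤ} (ht : β ^ (2 * h + 1) + conj (β ^ (2 * h + 1)) = t) :
    ∃ b : ℤ, β + conj β = b ∧ b * lehmerQuot (b ^ 2) (u : ℤ) h = t := by
  obtain ⟨b, hb⟩ := exists_intCast_eq_add_conj hD hβ
  refine ⟨b, hb, ?_⟩
  have hsum := add_mul_lehmerQuot β (conj β) h
  rw [hb, hN, ← map_pow, ht] at hsum
  have hcast := intCast_lehmerQuot (R := ℂ) (b ^ 2) (u : ℤ) h
  push_cast at hcast
  rw [← hcast] at hsum
  exact_mod_cast hsum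

theorem odd_lehmerQuot {T u : ℤ} (hT : Even T) (hu : Odd u) (k : ℕ) : Odd (lehmerQuot T u k) := by
  induction k using Nat.twoStepInduction with
  | zero => exact odd_one
  | one => exact hT.sub_odd ((by decide : Odd (3 : ℤ)).mul hu)
  | more k ih _ =>
    rw [lehmerQuot_add_two]
    exact ((hT.sub (even_two_mul u)).mul_right _).sub_odd (hu.pow.mul ih)

theorem isUnit_of_odd_of_mul_eq_two_pow {b w : ℤ} {m : ℕ} (hw : Odd w) (h : b * w = 2 ^ m) :
    IsUnit w :=
  ((Int.isCoprime_two_right.2 hw).pow_right (n := m)).isUnit_of_dvd' dvd_rfl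
    (Dvd.intro_left b h)

theorem isUnit_lehmerQuot_of_mul_eq_two_pow {b u : ℤ} {h m : ℕ} (hu : Odd u)
    (hb : b * lehmerQuot (2 * b ^ 2) u h = 2 ^ m) :
    IsUnit (lehmerQuot (2 ^ (2 * m + 1)) u h) := by
  have hunit := isUnit_of_odd_of_mul_eq_two_pow (odd_lehmerQuot (even_two_mul _) hu h) hb
  have hb2 : b ^ 2 = 2 ^ (2 * m) := by
    rw [mul_comm 2 m, pow_mul, ← hb, mul_pow, Int.isUnit_sq hunit, mul_one]
  rwa [hb2, ← pow_succ'] at hunit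

/-! ### Elements of norm `2 * Y ^ n` -/

theorem exists_sq_eq_two_mul {D : ℤ} {α β : ℂ} {h : ℕ} (hα : α ∈ quadIntegers D) (hα0 : α ≠ 0)
    (hβ : β ∈ quadIntegers D) (hαβ : α ^ 2 = 2 * β ^ (2 * h + 1)) :
    ∃ γ ∈ quadIntegers D, γ ^ 2 = 2 * β ∧ γ ^ (2 * h + 1) = 2 ^ h * α := by
  have hβ0 : β ≠ 0 := by
    rintro rfl
    exact hα0 (by simpa using hαβ)
  have hsq : (α / β ^ h) ^ 2 = 2 * β := by
    rw [div_pow, hαβ]; field_simp; ring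
  refine ⟨α / β ^ h, mem_quadIntegers.2 ⟨div_mem hα.1 (pow_mem hβ.1 h), ?_⟩, hsq, ?_⟩
  · refine IsIntegral.of_pow two_pos ?_
    rw [hsq]
    exact (mul_mem (ofNat_mem _ 2) hβ : 2 * β ∈ quadIntegers D).2
  · rw [pow_succ, pow_mul, hsq, mul_pow]; field_simp

theorem exists_mul_lehmerQuot_eq_two_pow {D : ℤ} (hD : D < 0) {α β : ℂ} {h m u : ℕ}
    (hα : α ∈ quadIntegers D) (hα0 : α ≠ 0) (htr : α + conj α = 2 ^ (m + 1))
    (hβ : β ∈ quadIntegers D) (hβN : β * conj β = (u : ℂ) ^ 2)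
    (hαβ : α ^ 2 = 2 * β ^ (2 * h + 1)) :
    ∃ b : ℤ, b * lehmerQuot (2 * b ^ 2) (u : ℤ) h = 2 ^ m := by
  obtain ⟨γ, hγ, hγ2, hγpow⟩ := exists_sq_eq_two_mul hα hα0 hβ hαβ
  have hγ2' : conj γ ^ 2 = 2 * conj β := by rw [← map_pow, hγ2, map_mul, map_ofNat]
  have hγN : γ * conj γ = (2 * u : ℕ) := mul_conj_eq_of_pow_eq hD hγ two_ne_zero (by
    rw [mul_pow, hγ2, hγ2']
    push_cast
    linear_combination 4 * hβN)
  obtain ⟨c, hc, hcq⟩ := exists_mul_lehmerQuot_eq hD hγ (h := h) (t := 2 ^ h * 2 ^ (m + 1)) hγN (by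
    rw [hγpow, map_mul, map_pow, map_ofNat, ← mul_add, htr]
    push_cast
    ring)
  obtain ⟨b, rfl⟩ : Even c := by
    obtain ⟨s, hs⟩ := exists_intCast_eq_add_conj hD hβ
    have hc2 : c ^ 2 = 2 * (s + 2 * u) := by
      have : (c : ℂ) ^ 2 = 2 * (s + 2 * u) := by
        push_cast at hγN
        rw [← hc, ← hs]; linear_combination hγ2 + hγ2' + 2 * hγN
      exact_mod_cast this
    exact (Int.even_pow.1 (hc2 ▸ even_two_mul _)).1
  refine ⟨b, mul_left_cancel₀ (by positivity : (2 : ℤ) * 2 ^ h ≠ 0) ?_⟩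
  rw [show (b + b) ^ 2 = 2 * (2 * b ^ 2) by ring, Nat.cast_mul, Nat.cast_ofNat,
    lehmerQuot_mul_mul] at hcq
  linear_combination hcq

theorem isCoprime_two_mul_two_pow_sub_pow {Y : ℤ} (hY : Odd Y) {n : ℕ} (hn : n ≠ 0) (e : ℕ) :
    IsCoprime (2 * (2 ^ e - Y ^ n)) Y := by
  have h2Y : IsCoprime 2 Y := Int.isCoprime_two_left.2 hY
  obtain ⟨j, rfl⟩ := Nat.exists_eq_succ_of_ne_zero hn
  rw [pow_succ' Y, sub_eq_add_neg, ← mul_neg]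
  exact h2Y.mul_left (h2Y.pow_left.add_mul_left_left _)

theorem exists_isUnit_lehmerQuot {D : ℤ} (hD : D < 0) (hD4 : D % 4 = 2 ∨ D % 4 = 3) {n : ℕ}
    (hno : Odd n) (hn : ¬ n ∣ quadClassNumber D) {α : ℂ} (hα : α ∈ quadIntegers D) {m Y : ℕ}
    (hY : Odd Y) (htr : α + conj α = 2 ^ (m + 1)) (hN : α * conj α = 2 * (Y : ℂ) ^ n) :
    ∃ p h : ℕ, p.Prime ∧ p = 2 * h + 1 ∧ p ∣ n ∧
      IsUnit (lehmerQuot (2 ^ (2 * m + 1)) ((Y : ℤ) ^ (n / p)) h) := by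
  have hα0 : α ≠ 0 := by
    rintro rfl
    have hY0 : (Y : ℂ) ≠ 0 := by exact_mod_cast hY.pos.ne'
    exact mul_ne_zero two_ne_zero (pow_ne_zero n hY0) (by rw [← hN, zero_mul])
  -- `α' = α ^ 2 / 2`
  set α' : ℂ := 2 ^ m * α - (Y : ℂ) ^ n with hα'
  have hα'mem : α' ∈ quadIntegers D :=
    sub_mem (mul_mem (pow_mem (ofNat_mem _ 2) m) hα) (pow_mem (_root_.natCast_mem _ Y) n)
  have hα2 : α ^ 2 = 2 * α' := by rw [hα']; linear_combination α * htr - hN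
  have hα'conj : conj α' = 2 ^ m * conj α - (Y : ℂ) ^ n := by
    simp only [hα', map_sub, map_mul, map_pow, map_ofNat, map_natCast]
  have hα'N : α' * conj α' = ((Y ^ 2 : ℕ) : ℂ) ^ n := by
    rw [hα'conj, hα']
    push_cast
    linear_combination (2 ^ m) ^ 2 * hN - 2 ^ m * (Y : ℂ) ^ n * htr
  have hα'tr : α' + conj α' = (2 * (2 ^ (2 * m) - (Y : ℤ) ^ n) : ℤ) := by
    rw [hα'conj, hα']
    push_cast
    linear_combination 2 ^ m * htr
  have hco : IsCoprime (2 * (2 ^ (2 * m) - (Y : ℤ) ^ n)) ((Y ^ 2 : ℕ) : ℤ) := by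
    rw [Nat.cast_pow]
    exact (isCoprime_two_mul_two_pow_sub_pow (by exact_mod_cast hY) hno.pos.ne' _).pow_right
  obtain ⟨p, hp, hpn, β, hβ, hβN, hroot | ⟨-, ε, hε, hε3, -⟩⟩ :=
    exists_prime_root hD hno hn hα'mem (pow_ne_zero 2 hY.pos.ne') hα'N hα'tr hco
  · obtain ⟨h, hh⟩ := hno.of_dvd_nat hpn
    obtain ⟨b, hb⟩ := exists_mul_lehmerQuot_eq_two_pow hD hα hα0 htr hβ (u := Y ^ (n / p))
      (by rw [hβN]; push_cast; ring) (by rw [hα2, ← hroot, hh])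
    have hu : Odd ((Y ^ (n / p) : ℕ) : ℤ) := by exact_mod_cast hY.pow
    exact ⟨p, h, hp, hh, hpn, by exact_mod_cast isUnit_lehmerQuot_of_mul_eq_two_pow hu hb⟩
  · obtain ⟨b, hb⟩ := exists_mul_sq_eq_neg_three hD hε.1 hε3
    exact absurd hb (mul_sq_ne_neg_three hD4 b)

/-! ### The discriminants `1 - 4 * U ^ n` and `1 - U ^ n` -/

theorem sq_le_three_pow {q : ℕ} (hq : 3 ≤ q) : q ^ 2 ≤ 3 ^ q := by
  induction q, hq using Nat.le_induction with
  | base => norm_num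
  | succ q hq ih => rw [pow_succ 3]; nlinarith

theorem two_lt_abs_lehmerQuot {h : ℕ} (hh : 1 ≤ h) {T u : ℤ} (hT : 1 ≤ T) (hT4 : T ≤ 4)
    (hu : 3 ^ (2 * h + 1) ≤ u) : 2 < |lehmerQuot T u h| := by
  by_contra! hW
  have hsq : ((2 * h + 1 : ℕ) : ℤ) ^ 2 ≤ u :=
    le_trans (by exact_mod_cast sq_le_three_pow (by omega)) hu
  have hpos : (0 : ℤ) < ((2 * h + 1 : ℕ) : ℤ) ^ 2 := by positivity
  have hsize := sixteen_mul_le_of_abs_lehmerQuot_le hh (by omega) (by omega) one_le_two hW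
  push_cast at hsq hpos
  nlinarith

theorem pow_le_pow_div {c U n p : ℕ} (hc : c ≠ 0) (hn : n ≠ 0) (hpn : p ∣ n) (hU : c ^ n ≤ U) :
    c ^ p ≤ U ^ (n / p) :=
  have hle : p ≤ n := Nat.le_of_dvd (Nat.pos_of_ne_zero hn) hpn
  calc c ^ p ≤ c ^ n := Nat.pow_le_pow_right (Nat.pos_of_ne_zero hc) hle
    _ ≤ U := hU
    _ ≤ U ^ (n / p) := Nat.le_self_pow
      (Nat.div_pos hle (Nat.pos_of_dvd_of_pos hpn (Nat.pos_of_ne_zero hn))).ne' U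

theorem pow_ne_of_add_conj_dvd_two {D : ℤ} (hD : D < 0) {n U p : ℕ} (hno : Odd n)
    (hU : 3 ^ n ≤ U) (hp : p.Prime) (hpn : p ∣ n) {β : ℂ} (hβ : β ∈ quadIntegers D)
    (hβN : β * conj β = (U ^ (n / p) : ℕ)) {t : ℤ} (ht : t ∣ 2) :
    β ^ p + conj (β ^ p) ≠ t := by
  intro htr
  obtain ⟨h, rfl⟩ := hno.of_dvd_nat hpn
  obtain ⟨b, -, hb⟩ := exists_mul_lehmerQuot_eq hD hβ hβN htr
  have abs_le_two {x : ℤ} (hx : x ∣ t) : |x| ≤ 2 := by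
    simpa using Int.le_of_dvd two_pos ((abs_dvd x 2).2 (hx.trans ht))
  have hb2 := abs_le.1 (abs_le_two (Dvd.intro _ hb))
  have hb0 : b ≠ 0 := by
    rintro rfl
    rw [zero_mul] at hb
    exact two_ne_zero (zero_dvd_iff.1 (hb ▸ ht))
  have hbpos : 0 < b ^ 2 := by positivity
  refine (two_lt_abs_lehmerQuot (by have := hp.two_le; omega) hbpos (by nlinarith) ?_).not_ge
    (abs_le_two (Dvd.intro_left _ hb))
  exact_mod_cast pow_le_pow_div three_ne_zero hno.pos.ne' hpn hU

theorem four_mul_cube_sub_one_ne {y s : ℚ} (hy : 1 < y) : 4 * y ^ 3 - 1 ≠ 3 * s ^ 2 := by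
  intro h
  have hy3 : 1 < y ^ 3 := one_lt_pow₀ hy three_ne_zero
  -- The curve is the Fermat cubic: `(s - 1) ^ 3 + (2 * y) ^ 3 = (s + 1) ^ 3`.
  refine fermatLastTheoremFor_iff_rat.1 fermatLastTheoremThree (s - 1) (2 * y) (s + 1)
    ?_ (by positivity) ?_ (by linear_combination 2 * h)
  · intro hs
    rw [sub_eq_zero.1 hs] at h
    linarith
  · intro hs
    rw [eq_neg_of_add_eq_zero_left hs] at h
    linarith

theorem dvd_quadClassNumber_one_sub_four_mul_pow {n U : ℕ} (hno : Odd n) (hU : 3 ^ n ≤ U) :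
    n ∣ quadClassNumber (1 - 4 * (U : ℤ) ^ n) := by
  by_contra hnd
  have hU1 : 1 < U := (Nat.one_lt_pow hno.pos.ne' (by norm_num)).trans_le hU
  set D : ℤ := 1 - 4 * (U : ℤ) ^ n with hDdef
  have hD : D < 0 := by
    have : (0 : ℤ) < (U : ℤ) ^ n := by positivity
    omega
  have hsq : sqrtInt D ^ 2 = 1 - 4 * (U : ℂ) ^ n := by rw [sqrtInt_sq, hDdef]; push_cast; ring
  set α : ℂ := (1 + sqrtInt D) / 2 with hα
  have hconj : conj α = (1 - sqrtInt D) / 2 := by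
    rw [hα, map_div₀, map_add, conj_sqrtInt hD, map_one, map_ofNat, sub_eq_add_neg]
  have hαN : α * conj α = (U : ℂ) ^ n := by rw [hconj, hα]; linear_combination (-1 / 4) * hsq
  have hαtr : α + conj α = ((1 : ℤ) : ℂ) := by rw [hconj, hα]; push_cast; ring
  have hαmem : α ∈ quadIntegers D := by
    refine mem_quadIntegers.2
      ⟨div_mem (add_mem (one_mem _) (sqrtInt_mem_quadField D)) (ofNat_mem _ 2),
      Polynomial.X ^ 2 - Polynomial.X + Polynomial.C ((U : ℤ) ^ n), by monicity!, ?_⟩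
    simp only [Polynomial.eval₂_add, Polynomial.eval₂_sub, Polynomial.eval₂_X_pow,
      Polynomial.eval₂_X, Polynomial.eval₂_C]
    rw [eq_intCast, Int.cast_pow, Int.cast_natCast, hα]
    linear_combination hsq / 4
  obtain ⟨p, hp, hpn, β, hβ, hβN, hroot | ⟨rfl, ε, hε, hε3, -⟩⟩ :=
    exists_prime_root hD hno hnd hαmem (by omega) hαN hαtr isCoprime_one_left
  · exact pow_ne_of_add_conj_dvd_two hD hno hU hp hpn hβ hβN (one_dvd 2) (hroot ▸ hαtr)
  · obtain ⟨b, hb⟩ := exists_mul_sq_eq_neg_three hD hε.1 hε3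
    obtain ⟨e, rfl⟩ := hpn
    have hb0 : b ≠ 0 := by rintro rfl; norm_num at hb
    have hy : (1 : ℚ) < (U : ℚ) ^ e :=
      one_lt_pow₀ (by exact_mod_cast hU1) (by rintro rfl; simp at hno)
    refine four_mul_cube_sub_one_ne (s := 1 / b) hy ?_
    rw [hDdef] at hb
    push_cast at hb
    field_simp
    linear_combination -hb

section CubeModTwo

variable {R : Type*} [CommRing R] {β ε κ c v : R}

theorem two_dvd_of_cube_eq_of_even_trace (hβ : β ^ 2 = 2 * c * β - (2 * v + 1))
    (hβ3 : β ^ 3 = ε * (1 + 2 * κ)) (hε : ε ^ 2 + ε + 1 = 0) : 2 ∣ ε := by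
  obtain ⟨μ, hμ⟩ : ∃ μ, β ^ 2 = 1 + 2 * μ := ⟨c * β - v - 1, by rw [hβ]; ring⟩
  have hβ6 : (1 + 2 * μ) ^ 3 = ε ^ 2 * (1 + 2 * κ) ^ 2 := by
    rw [← hμ, ← mul_pow, ← hβ3]; ring
  exact ⟨-1 - (3 * μ + 6 * μ ^ 2 + 4 * μ ^ 3) + ε ^ 2 * (2 * κ + 2 * κ ^ 2),
    by linear_combination hβ6 + hε⟩

theorem two_dvd_sub_one_of_cube_eq_of_odd_trace (hβ : β ^ 2 = (2 * c + 1) * β - (2 * v + 1))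
    (hβ3 : β ^ 3 = ε * (1 + 2 * κ)) : 2 ∣ ε - 1 :=
  ⟨(2 * c ^ 2 + 2 * c - v) * β - (2 * c * v + v + c) - 1 - ε * κ,
    by linear_combination (β + (2 * c + 1)) * hβ - hβ3⟩

end CubeModTwo

theorem four_dvd_of_mul_conj_eq {D : ℤ} (hD : D < 0) {x : ℂ} (hx : x ∈ quadIntegers D) {z : ℤ}
    (hz : (2 * x) * conj (2 * x) = z) : 4 ∣ z := by
  obtain ⟨w, hw⟩ := exists_intCast_eq_mul_conj hD hx
  refine ⟨w, ?_⟩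
  have : (z : ℂ) = 4 * w := by rw [← hz, ← hw, map_mul, map_ofNat]; ring
  exact_mod_cast this

theorem cube_ne_mul_one_add_two_mul {D : ℤ} (hD : D < 0) {β ε κ : ℂ} (hβ : β ∈ quadIntegers D)
    {u : ℕ} (hu : Odd u) (hβN : β * conj β = u) (hε : ε ∈ quadIntegers D)
    (hε3 : ε ^ 2 + ε + 1 = 0) (hκ : κ ∈ quadIntegers D) : β ^ 3 ≠ ε * (1 + 2 * κ) := by
  intro hβ3
  have hεN := mul_conj_eq_one_of_sq_add_add_one hε3
  have hεtr := add_conj_eq_neg_one_of_sq_add_add_one hε3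
  obtain ⟨b, hb⟩ := exists_intCast_eq_add_conj hD hβ
  have hβ2 : β ^ 2 = b * β - u := by linear_combination -hβN + β * hb
  lift β to quadIntegers D using hβ
  lift ε to quadIntegers D using hε
  lift κ to quadIntegers D using hκ
  obtain ⟨v, rfl⟩ := hu
  replace hβ2 : β ^ 2 = b * β - (2 * v + 1) := Subtype.ext (by push_cast at hβ2 ⊢; exact hβ2)
  replace hβ3 : β ^ 3 = ε * (1 + 2 * κ) := Subtype.ext (by push_cast; exact hβ3)
  replace hε3 : ε ^ 2 + ε + 1 = 0 := Subtype.ext (by push_cast; exact hε3)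
  obtain ⟨c, rfl | rfl⟩ := Int.even_or_odd' b
  · obtain ⟨x, rfl⟩ := two_dvd_of_cube_eq_of_even_trace (β := β) (c := c) (v := v)
      (by rw [hβ2]; push_cast; ring) hβ3 hε3
    refine absurd (four_dvd_of_mul_conj_eq hD x.2 (z := 1) ?_) (by norm_num)
    rw [Int.cast_one]
    exact hεN
  · obtain ⟨x, hx⟩ := two_dvd_sub_one_of_cube_eq_of_odd_trace (β := β) (c := c) (v := v)
      (by rw [hβ2]; push_cast; ring) hβ3
    have hx' : (ε : ℂ) - 1 = 2 * x := congrArg Subtype.val hx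
    refine absurd (four_dvd_of_mul_conj_eq hD x.2 (z := 3) ?_) (by norm_num)
    rw [← hx', map_sub, map_one]
    push_cast
    linear_combination hεN - hεtr

theorem dvd_quadClassNumber_one_sub_pow {n U : ℕ} (hno : Odd n) (hU : 3 ^ n ≤ U)
    (hU4 : U % 4 = 1) : n ∣ quadClassNumber (1 - (U : ℤ) ^ n) := by
  by_contra hnd
  have hU1 : 1 < U := (Nat.one_lt_pow hno.pos.ne' (by norm_num)).trans_le hU
  have hUo : Odd U := Nat.odd_iff.2 (by omega)
  set D : ℤ := 1 - (U : ℤ) ^ n with hDdef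
  have hD : D < 0 := by
    have : (1 : ℤ) < (U : ℤ) ^ n := one_lt_pow₀ (by exact_mod_cast hU1) hno.pos.ne'
    omega
  have hconj : conj (1 + sqrtInt D) = 1 - sqrtInt D := by
    rw [map_add, conj_sqrtInt hD, map_one, sub_eq_add_neg]
  have hαN : (1 + sqrtInt D) * conj (1 + sqrtInt D) = (U : ℂ) ^ n := by
    have hsq : sqrtInt D ^ 2 = 1 - (U : ℂ) ^ n := by rw [sqrtInt_sq, hDdef]; push_cast; ring
    rw [hconj]; linear_combination -hsq
  have hαtr : (1 + sqrtInt D) + conj (1 + sqrtInt D) = ((2 : ℤ) : ℂ) := by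
    rw [hconj]; push_cast; ring
  obtain ⟨p, hp, hpn, β, hβ, hβN, hroot | ⟨rfl, ε, hε, hε3, hcube⟩⟩ :=
    exists_prime_root hD hno hnd (add_mem (one_mem _) (sqrtInt_mem_quadIntegers D)) (by omega)
      hαN hαtr (Int.isCoprime_two_left.2 (by exact_mod_cast hUo))
  · exact pow_ne_of_add_conj_dvd_two hD hno hU hp hpn hβ hβN dvd_rfl (hroot ▸ hαtr)
  · obtain ⟨e, he⟩ : 4 ∣ D := by
      have hU' : (U : ℤ) ≡ 1 [ZMOD 4] := by unfold Int.ModEq; omega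
      exact (one_pow (M := ℤ) n ▸ hU'.pow n).dvd
    have hhalf : sqrtInt D / 2 ∈ quadIntegers D :=
      mem_quadIntegers_of_sq_eq (z := e) (div_mem (sqrtInt_mem_quadField D) (ofNat_mem _ 2)) (by
        rw [div_pow, sqrtInt_sq]
        nth_rw 1 [he]
        push_cast
        ring)
    refine cube_ne_mul_one_add_two_mul hD hβ hUo.pow hβN hε hε3 hhalf ?_
    rw [hcube, mul_div_cancel₀ _ two_ne_zero]

/-! ### The discriminants `-U ^ n` and `4 ^ m - 2 * U ^ n` -/

theorem pow_modEq_self_of_odd {a : ℤ} (ha : Odd a) {n : ℕ} (hn : Odd n) :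
    a ^ n ≡ a [ZMOD 24] := by
  have hcube : a ^ 2 * a ≡ a [ZMOD 24] := by
    obtain ⟨b, rfl⟩ := ha
    have : ∀ b : ZMod 24, (2 * b + 1) ^ 2 * (2 * b + 1) = 2 * b + 1 := by decide
    exact (ZMod.intCast_eq_intCast_iff _ _ 24).1 (by exact_mod_cast this b)
  obtain ⟨j, rfl⟩ := hn
  induction j with
  | zero => simp [Int.ModEq.refl]
  | succ j ih =>
    calc a ^ (2 * (j + 1) + 1) = a ^ 2 * a ^ (2 * j + 1) := by ring
      _ ≡ a ^ 2 * a [ZMOD 24] := ih.mul_left _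
      _ ≡ a [ZMOD 24] := hcube

theorem dvd_quadClassNumber_neg_pow {k n U : ℕ} (hk : 1 < k) (hko : Odd k) (hno : Odd n)
    (hU : U + 1 = 2 * k ^ n) : n ∣ quadClassNumber (-(U : ℤ) ^ n) := by
  by_contra hnd
  obtain ⟨a, ha⟩ : Odd (k ^ n) := hko.pow
  have hU4 : (U : ℤ) % 4 = 1 := by omega
  have hUn4 : (U : ℤ) ^ n % 24 = U % 24 := pow_modEq_self_of_odd (Int.odd_iff.2 (by omega)) hno
  set D : ℤ := -(U : ℤ) ^ n with hDdef
  have hD : D < 0 := neg_lt_zero.2 (pow_pos (by omega) n)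
  have hUC : (U : ℂ) ≠ 0 := by exact_mod_cast (by omega : U ≠ 0)
  obtain ⟨θ, hθ, hconj, hθ2⟩ : ∃ θ ∈ quadField D, conj θ = -θ ∧ θ ^ 2 = ((-U : ℤ) : ℂ) := by
    obtain ⟨j, rfl⟩ := id hno
    refine ⟨sqrtInt D / (U : ℂ) ^ j,
      div_mem (sqrtInt_mem_quadField D) (pow_mem (IntermediateField.natCast_mem _ U) j), ?_, ?_⟩
    · rw [map_div₀, conj_sqrtInt hD, map_pow, Complex.conj_natCast, neg_div]
    · rw [div_pow, sqrtInt_sq, hDdef]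
      push_cast
      field_simp
      ring
  have hkU : (U : ℂ) + 1 = 2 * (k : ℂ) ^ n := by exact_mod_cast hU
  push_cast at hθ2
  obtain ⟨p, h, hp, hph, hpn, hunit⟩ := exists_isUnit_lehmerQuot (m := 0) hD (by omega) hno hnd
    (add_mem (one_mem _) (mem_quadIntegers_of_sq_eq (z := -U) hθ (by exact_mod_cast hθ2))) hko
    (by rw [map_add, hconj, map_one]; ring)
    (by rw [map_add, hconj, map_one]; linear_combination hkU - hθ2)
  have : Fact p.Prime := ⟨hp⟩
  have hnp : n / p ≠ 0 := (Nat.div_pos (Nat.le_of_dvd hno.pos hpn) hp.pos).ne'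
  exact not_isUnit_lehmerQuot_two hph ((Odd.natCast hko).pow)
    (one_lt_pow₀ (by exact_mod_cast hk) hnp).ne' (by simpa using hunit)

theorem exists_isUnit_lehmerQuot_of_four_pow_sub {n m U : ℕ} (hno : Odd n) (hUo : Odd U)
    (hD : (4 : ℤ) ^ m - 2 * (U : ℤ) ^ n < 0)
    (hnd : ¬ n ∣ quadClassNumber (4 ^ m - 2 * (U : ℤ) ^ n)) :
    ∃ p h, p.Prime ∧ p = 2 * h + 1 ∧ p ∣ n ∧
      IsUnit (lehmerQuot ((2 : ℤ) ^ (2 * m + 1)) ((U : ℤ) ^ (n / p)) h) := by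
  obtain ⟨a, ha⟩ : Odd ((U : ℤ) ^ n) := (Odd.natCast hUo).pow
  have hD4 : ((4 : ℤ) ^ m - 2 * (U : ℤ) ^ n) % 4 = 2 ∨
      ((4 : ℤ) ^ m - 2 * (U : ℤ) ^ n) % 4 = 3 := by
    cases m with
    | zero => rw [ha, pow_zero]; omega
    | succ m => rw [ha, pow_succ]; omega
  have hconj : conj (2 ^ m + sqrtInt (4 ^ m - 2 * (U : ℤ) ^ n)) =
      2 ^ m - sqrtInt (4 ^ m - 2 * (U : ℤ) ^ n) := by
    rw [map_add, conj_sqrtInt hD, map_pow, map_ofNat, ← sub_eq_add_neg]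
  have hsq := sqrtInt_sq (4 ^ m - 2 * (U : ℤ) ^ n)
  have h4 : (4 : ℂ) ^ m = (2 ^ m) ^ 2 := by rw [← pow_mul, mul_comm, pow_mul]; norm_num
  refine exists_isUnit_lehmerQuot hD hD4 hno hnd
    (add_mem (pow_mem (ofNat_mem _ 2) m) (sqrtInt_mem_quadIntegers _)) hUo
    (by rw [hconj]; ring) ?_
  push_cast at hsq
  rw [hconj]
  linear_combination -hsq - h4

theorem dvd_quadClassNumber_one_sub_two_mul_pow {n U : ℕ} (hno : Odd n) (hUo : Odd U)
    (hU : 3 ^ n ≤ U) : n ∣ quadClassNumber (1 - 2 * (U : ℤ) ^ n) := by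
  by_contra hnd
  have hUn : (0 : ℤ) < (U : ℤ) ^ n := pow_pos (by exact_mod_cast hUo.pos) n
  obtain ⟨p, h, hp, rfl, hpn, hunit⟩ := exists_isUnit_lehmerQuot_of_four_pow_sub (m := 0) hno hUo
    (by omega) (by simpa using hnd)
  have hsize : (3 : ℤ) ^ (2 * h + 1) ≤ (U : ℤ) ^ (n / (2 * h + 1)) := by
    exact_mod_cast pow_le_pow_div three_ne_zero hno.pos.ne' hpn hU
  have hlt := two_lt_abs_lehmerQuot (by have := hp.two_le; omega) one_le_two (by norm_num) hsize
  have hone : |lehmerQuot 2 ((U : ℤ) ^ (n / (2 * h + 1))) h| = 1 :=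
    Int.isUnit_iff_abs_eq.1 (by simpa using hunit)
  omega

theorem dvd_quadClassNumber_four_pow_sub_two_mul_pow {n m U : ℕ} (hno : Odd n) (hm : m ≠ 0)
    (hU4 : U % 4 = 1) (hU : U % 24 = 1 → 13 ^ n ≤ U)
    (hD : (4 : ℤ) ^ m - 2 * (U : ℤ) ^ n < 0) :
    n ∣ quadClassNumber (4 ^ m - 2 * (U : ℤ) ^ n) := by
  by_contra hnd
  have hUo : Odd U := Nat.odd_iff.2 (by omega)
  obtain ⟨p, h, hp, hph, hpn, hunit⟩ := exists_isUnit_lehmerQuot_of_four_pow_sub hno hUo hD hnd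
  have : Fact p.Prime := ⟨hp⟩
  have hpow : (U : ℤ) ^ (n / p) % 24 = U % 24 :=
    pow_modEq_self_of_odd (Odd.natCast hUo) (hno.of_dvd_nat (Nat.div_dvd_of_dvd hpn))
  obtain ⟨hone, hp7, hu8, hu3⟩ := congruences_of_isUnit_lehmerQuot hph hm (by omega) hunit
  have hsize := pow_le_pow_div (by norm_num) hno.pos.ne' hpn (hU (by omega))
  exact lehmerQuot_two_pow_ne_one hp hph hp7 (by exact_mod_cast hsize) hone

theorem thirteen_le_of_add_one_eq {k n U : ℕ} (hk : 1 < k) (hko : Odd k) (hno : Odd n)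
    (hU : U + 1 = 2 * k ^ n) (hU24 : U % 24 = 1) : 13 ≤ k := by
  have hpow : (k : ℤ) ^ n % 24 = k % 24 := pow_modEq_self_of_odd (Odd.natCast hko) hno
  have hUZ : (U : ℤ) + 1 = 2 * (k : ℤ) ^ n := by exact_mod_cast hU
  omega

end ClassNumberDivisibility

theorem stmt_15 (k n : ℕ) (hk : 3 ≤ k) (hko : Odd k) (hn : 3 ≤ n) (hno : Odd n)
    (d : ℤ) (hd : d = (1 - 2 * (k : ℤ) ^ n) ^ n) :
    ∀ D : ℤ,
      (D = d ∨ D = d + 1 ∨ D = 4 * d + 1 ∨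
        ∃ m : ℕ, 1 ≤ (4 : ℤ) ^ m ∧ (4 : ℤ) ^ m ≤ 2 * |d| ∧ D = 2 * d + 4 ^ m) →
      D < 0 ∧ n ∣ quadClassNumber D := by
  obtain ⟨a, ha⟩ : Odd (k ^ n) := hko.pow
  obtain ⟨U, hU⟩ : ∃ U : ℕ, U + 1 = 2 * k ^ n := ⟨2 * k ^ n - 1, by omega⟩
  have hUo : Odd U := Nat.odd_iff.2 (by omega)
  have hkU : k ^ n ≤ U := by omega
  have h3U : 3 ^ n ≤ U := (Nat.pow_le_pow_left hk n).trans hkU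
  have hUd : 1 - 2 * (k : ℤ) ^ n = -U := by
    rw [← show (U : ℤ) + 1 = 2 * (k : ℤ) ^ n by exact_mod_cast hU]; ring
  obtain ⟨b, hb⟩ : Odd ((U : ℤ) ^ n) := (Odd.natCast hUo).pow
  have hUn : 1 < (U : ℤ) ^ n := one_lt_pow₀
    (by exact_mod_cast (Nat.one_lt_pow (by omega) (by norm_num)).trans_le h3U) (by omega)
  rw [hUd, hno.neg_pow] at hd
  rintro D (rfl | rfl | rfl | ⟨m, -, hm, rfl⟩)
  · exact ⟨by omega, hd ▸ dvd_quadClassNumber_neg_pow (by omega) hko hno hU⟩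
  · rw [hd, neg_add_eq_sub]
    exact ⟨by omega, dvd_quadClassNumber_one_sub_pow hno h3U (by omega)⟩
  · rw [hd, mul_neg, neg_add_eq_sub]
    exact ⟨by omega, dvd_quadClassNumber_one_sub_four_mul_pow hno h3U⟩
  · rw [hd, abs_neg, abs_of_pos (by omega)] at hm
    rw [hd, mul_neg, neg_add_eq_sub]
    obtain rfl | hm0 := eq_or_ne m 0
    · exact ⟨by omega, by simpa using dvd_quadClassNumber_one_sub_two_mul_pow hno hUo h3U⟩
    · obtain ⟨c, hc⟩ : (4 : ℤ) ∣ 4 ^ m := dvd_pow_self 4 hm0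
      have hD : (4 : ℤ) ^ m - 2 * (U : ℤ) ^ n < 0 := by omega
      exact ⟨hD, dvd_quadClassNumber_four_pow_sub_two_mul_pow hno hm0 (by omega) (fun h ↦
        (Nat.pow_le_pow_left (thirteen_le_of_add_one_eq (by omega) hko hno hU h) n).trans hkU) hD⟩
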